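/- arXiv:2109.00856 — 2 statements merged into one kernel-verified Lean document; each statement's English description precedes it below -/
import Mathlib

section
/- Let (A,D) be an inclusion of C*-algebras with A unital. Then (A,D) satisfies Kumjian's conditions if and only if (A,D) is a Cartan inclusion and every pure state on D extends uniquely to a state on A. -/
/-!
Kumjian's conditions are compared with the Cartan condition and unique extension of pure states by
working at the characters `χ` of `D`, which are exactly its pure states.

Condition (I) alone forces the unit of `A` into `D` (`one_mem_of_condExp`), and a MASA contains the
unit, so in both directions `D` is a unital commutative C*-algebra. For each `χ` the composition
`χ ∘ P` is a state extending `χ`, and by the Cauchy-Schwarz inequality every state extending a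
character is multiplicative over `D`; in particular `P` is `D`-linear.

Kumjian's conditions imply the others. A free normalizer satisfies `(n n*)(n* n) = 0`, so every
extension of a character kills it (`ext_free`). As free normalizers span a dense subspace of
`ker P`, the extension is `χ ∘ P` (`unique_ext_of_kumjian`). The same argument applied to
`x ↦ χ(P(x b))`, with `b = c - P c` for `c` in the commutant of `D`, gives `P(b* b) = 0`, hence
`c = P c` by faithfulness (`masa_of_kumjian`). Regularity holds since `A = D + ker P`.

Conversely, it suffices to show that `n - P n` is in the closed span of the free normalizers for
each normalizer `n` (`sub_condExp_mem`). The normalizer induces a partial homeomorphism of the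
spectrum of `D`, defined where `n* n ≠ 0`. Let `χ` be a point of its domain.

* If `χ` is moved, then two elements of `D` with disjoint supports separate `χ` from its image
  (`exists_separating`), and `n` cut down near `χ` is free.
* If `χ` is fixed, unique extension gives `χ(P n) ≠ 0` (`condExp_ne_zero_of_fixed`). By
  `D`-linearity of `P` the partial homeomorphism is then trivial wherever `P n ≠ 0`, so `n` cut down
  by `n* n (P n)*` commutes with `D`, hence lies in `D` because `D` is maximal abelian.

So `n - P n` is locally in the closed span of the free normalizers. The elements `d` of `D` for
which `(n - P n) g d` lies there, where `g` is a function of `n* n` vanishing near zero, form an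
ideal contained in no maximal ideal, hence containing `1`; and `n g` approximates `n`.
-/

open scoped ComplexOrder
open Filter Topology

namespace CartanPaper

variable {A : Type*} [NonUnitalCStarAlgebra A]

/-- A state on a C*-algebra: a positive linear functional of norm one. -/
def IsState (ρ : A →L[ℂ] ℂ) : Prop :=
  ‖ρ‖ = 1 ∧ ∀ a : A, 0 ≤ ρ (star a * a)

/-- `n` is a normalizer for the inclusion `(A, D)`:  `n D n* ∪ n* D n ⊆ D`. -/
def IsNormalizer (D : NonUnitalStarSubalgebra ℂ A) (n : A) : Prop :=
  ∀ d ∈ D, n * d * star n ∈ D ∧ star n * d * n ∈ D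

/-- The inclusion `(A, D)` is regular: the linear span of the normalizers is norm-dense in `A`. -/
def IsRegularInclusion (D : NonUnitalStarSubalgebra ℂ A) : Prop :=
  Dense (↑(Submodule.span ℂ {n : A | IsNormalizer D n}) : Set A)

/-- `D` is a maximal abelian *-subalgebra (MASA) of `A`:  the set of elements of `A` commuting
with `D` is exactly `D`.  (This encodes simultaneously that `D` is abelian and that it is
maximal among abelian *-subalgebras.) -/
def IsMasa (D : NonUnitalStarSubalgebra ℂ A) : Prop :=
  {a : A | ∀ d ∈ D, a * d = d * a} = (D : Set A)

end CartanPaper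

open CartanPaper

namespace CartanPaper

variable {A : Type*} [NonUnitalCStarAlgebra A]

/-- `P` is a conditional expectation of `A` onto `D`:  a contractive linear projection of `A`
onto `D`. -/
def IsCondExpectation (D : NonUnitalStarSubalgebra ℂ A) (P : A →L[ℂ] A) : Prop :=
  (∀ a : A, P a ∈ D) ∧ (∀ d ∈ D, P d = d) ∧ ‖P‖ ≤ 1

/-- A map `P : A → A` is faithful if `P (a* a) = 0` implies `a = 0`. -/
def IsFaithful (P : A →L[ℂ] A) : Prop := ∀ a : A, P (star a * a) = 0 → a = 0

/-- A Cartan inclusion:  a regular MASA inclusion admitting a faithful conditional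
expectation onto `D`. -/
def IsCartanInclusion (D : NonUnitalStarSubalgebra ℂ A) : Prop :=
  IsRegularInclusion D ∧ IsMasa D ∧
    ∃ P : A →L[ℂ] A, IsCondExpectation D P ∧ IsFaithful P

/-- A free normalizer: a normalizer whose square is zero. -/
def IsFreeNormalizer (D : NonUnitalStarSubalgebra ℂ A) (n : A) : Prop :=
  IsNormalizer D n ∧ n * n = 0

/-- Kumjian's conditions for an inclusion `(A, D)`:  (I) there is a faithful conditional
expectation `P : A → D`, and (II) the linear span of the free normalizers is norm-dense in
`ker P`. -/
def KumjianConditions (D : NonUnitalStarSubalgebra ℂ A) : Prop :=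
  ∃ P : A →L[ℂ] A, IsCondExpectation D P ∧ IsFaithful P ∧
    closure (↑(Submodule.span ℂ {n : A | IsFreeNormalizer D n}) : Set A) = {a : A | P a = 0}

/-- A pure state: an extreme point of the state space. -/
def IsPureState (ρ : A →L[ℂ] ℂ) : Prop :=
  ρ ∈ Set.extremePoints ℝ {φ : A →L[ℂ] ℂ | IsState φ}

/-- Every pure state of `D` extends to a state of `A`, and any such extension is unique. -/
def UniquePureStateExtension (D : NonUnitalStarSubalgebra ℂ A) [IsClosed (D : Set A)] :
    Prop :=
  ∀ σ : D →L[ℂ] ℂ, IsPureState σ →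
    (∃ ρ : A →L[ℂ] ℂ, IsState ρ ∧ ∀ x : D, ρ x = σ x) ∧
      ∀ ρ₁ ρ₂ : A →L[ℂ] ℂ, IsState ρ₁ → IsState ρ₂ →
        (∀ x : D, ρ₁ x = σ x) → (∀ x : D, ρ₂ x = σ x) → ρ₁ = ρ₂

end CartanPaper


namespace CartanPaper

/-! ### Positive functionals and states on a unital C*-algebra -/

section Functionals

variable {A : Type*} [CStarAlgebra A]

lemma nonneg_of_posFun [PartialOrder A] [StarOrderedRing A] {ρ : A →L[ℂ] ℂ}
    (hρ : ∀ a, 0 ≤ ρ (star a * a)) {a : A} (ha : 0 ≤ a) : 0 ≤ ρ a := by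
  obtain ⟨b, rfl⟩ := CStarAlgebra.nonneg_iff_eq_star_mul_self.mp ha
  exact hρ b

lemma cauchySchwarz {ρ : A →L[ℂ] ℂ} (hρ : ∀ a, 0 ≤ ρ (star a * a)) (a b : A) :
    ‖ρ (star a * b)‖ ^ 2 ≤ (ρ (star a * a)).re * (ρ (star b * b)).re := by
  let _ := CStarAlgebra.spectralOrder A
  let _ := CStarAlgebra.spectralOrderedRing A
  let f : A →ₚ[ℂ] ℂ := PositiveLinearMap.mk₀ (ρ : A →ₗ[ℂ] ℂ) (fun a ha => nonneg_of_posFun hρ ha)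
  have h := norm_inner_le_norm (𝕜 := ℂ) (f.toPreGNS a) (f.toPreGNS b)
  have h2 : ‖ρ (star a * b)‖ ≤ √(ρ (star a * a)).re * √(ρ (star b * b)).re := h
  calc ‖ρ (star a * b)‖ ^ 2 ≤ (√(ρ (star a * a)).re * √(ρ (star b * b)).re) ^ 2 := by gcongr
    _ = _ := by
      rw [mul_pow, Real.sq_sqrt (Complex.nonneg_iff.mp (hρ a)).1,
        Real.sq_sqrt (Complex.nonneg_iff.mp (hρ b)).1]

lemma posFun_map_star {ρ : A →L[ℂ] ℂ} (hρ : ∀ a, 0 ≤ ρ (star a * a)) (a : A) :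
    ρ (star a) = star (ρ a) := by
  let _ := CStarAlgebra.spectralOrder A
  let _ := CStarAlgebra.spectralOrderedRing A
  let f : A →ₚ[ℂ] ℂ := PositiveLinearMap.mk₀ (ρ : A →ₗ[ℂ] ℂ) (fun a ha => nonneg_of_posFun hρ ha)
  exact map_star f a

lemma posFun_eq_zero_left {ρ : A →L[ℂ] ℂ} (hρ : ∀ a, 0 ≤ ρ (star a * a)) {a : A}
    (ha : ρ (star a * a) = 0) (b : A) : ρ (star a * b) = 0 := by
  have := cauchySchwarz hρ a b
  rw [ha] at this
  simpa using this

lemma posFun_eq_zero_right {ρ : A →L[ℂ] ℂ} (hρ : ∀ a, 0 ≤ ρ (star a * a)) {b : A}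
    (hb : ρ (star b * b) = 0) (a : A) : ρ (a * b) = 0 := by
  have := cauchySchwarz hρ (star a) b
  rw [hb] at this
  simpa using this

/-- The nontrivial inequality in `‖ρ‖ = ρ(1)` for a positive functional `ρ`. -/
lemma posFun_norm_le {ρ : A →L[ℂ] ℂ} (hρ : ∀ a, 0 ≤ ρ (star a * a)) :
    ‖ρ‖ ≤ (ρ 1).re := by
  let _ := CStarAlgebra.spectralOrder A
  let _ := CStarAlgebra.spectralOrderedRing A
  have h1 : 0 ≤ (ρ 1).re := by
    have := (Complex.nonneg_iff.mp (hρ 1)).1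
    simpa using this
  refine ρ.opNorm_le_bound h1 fun a => ?_
  have h := cauchySchwarz hρ 1 a
  have h2 : (ρ (star a * a)).re ≤ ‖a‖ ^ 2 * (ρ 1).re := by
    have h3 : star a * a ≤ algebraMap ℝ A ‖star a * a‖ :=
      (IsSelfAdjoint.star_mul_self a).le_algebraMap_norm_self
    have h4 := nonneg_of_posFun hρ (sub_nonneg.mpr h3)
    rw [CStarRing.norm_star_mul_self, Algebra.algebraMap_eq_smul_one, map_sub,
      ← Complex.coe_smul, map_smul] at h4
    have h5 := (Complex.nonneg_iff.mp h4).1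
    simp at h5
    nlinarith
  simp only [star_one, one_mul] at h
  refine le_of_sq_le_sq ?_ (by positivity)
  nlinarith

lemma isState_iff (ρ : A →L[ℂ] ℂ) :
    IsState ρ ↔ ρ 1 = 1 ∧ ∀ a : A, 0 ≤ ρ (star a * a) := by
  constructor
  · rintro ⟨h, hρ⟩
    refine ⟨?_, hρ⟩
    have h1 : 0 ≤ ρ 1 := by simpa using hρ 1
    have hA : Nontrivial A := by
      by_contra hA
      rw [not_nontrivial_iff_subsingleton] at hA
      have : ρ = 0 := by ext a; rw [Subsingleton.elim a 0]; simp
      simp [this] at h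
    have h2 := posFun_norm_le hρ
    have h3 := ρ.le_opNorm 1
    rw [norm_one, mul_one] at h3
    obtain ⟨h4, h5⟩ := Complex.nonneg_iff.mp h1
    have h6 := (Complex.re_le_norm (ρ 1)).trans h3
    apply Complex.ext
    · simp; linarith
    · simp [← h5]
  · rintro ⟨h, hρ⟩
    refine ⟨le_antisymm (by simpa [h] using posFun_norm_le hρ) ?_, hρ⟩
    have hA : Nontrivial A := by
      by_contra hA
      rw [not_nontrivial_iff_subsingleton] at hA
      rw [Subsingleton.elim (1 : A) 0] at h
      simp at h
    have h3 := ρ.le_opNorm 1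
    rwa [norm_one, mul_one, h, norm_one] at h3

/-- A contractive functional taking the value one at the unit is positive. -/
lemma posFun_of_contractive {φ : A →L[ℂ] ℂ} (hφ : ‖φ‖ ≤ 1) (h1 : φ 1 = 1) (a : A) :
    0 ≤ φ (star a * a) := by
  let _ := CStarAlgebra.spectralOrder A
  let _ := CStarAlgebra.spectralOrderedRing A
  have hle : ∀ x, ‖φ x‖ ≤ ‖x‖ := fun x => (φ.le_of_opNorm_le hφ x).trans (by simp)
  -- self-adjoint elements have real values: compare `φ` with the norm along `h + i s`
  have him : ∀ h : A, IsSelfAdjoint h → (φ h).im = 0 := by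
    intro h hh
    have key : ∀ s : ℝ, ((φ h).im + s) ^ 2 ≤ ‖h‖ ^ 2 + s ^ 2 := by
      intro s
      have e1 : φ (h + (Complex.I * s) • (1 : A)) = φ h + Complex.I * s := by simp [h1]
      have e2 := hle (h + (Complex.I * s) • (1 : A))
      rw [e1] at e2
      have e3 : star (h + (Complex.I * s) • (1 : A)) * (h + (Complex.I * s) • (1 : A))
          = h * h + ((s : ℂ) ^ 2) • (1 : A) := by
        simp only [star_add, hh.star_eq, star_smul, star_one, add_mul, mul_add, smul_mul_assoc,
          mul_smul_comm, one_mul, mul_one, star_mul, RCLike.star_def, Complex.conj_I,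
          Complex.conj_ofReal]
        have hI : ((s : ℂ) * -Complex.I) * (Complex.I * (s : ℂ)) = (s : ℂ) ^ 2 := by
          linear_combination (-(s : ℂ) ^ 2) * Complex.I_mul_I
        rw [← hI]
        module
      have e4 : ‖h + (Complex.I * s) • (1 : A)‖ ^ 2 ≤ ‖h‖ ^ 2 + s ^ 2 := by
        rw [sq, ← CStarRing.norm_star_mul_self, e3]
        refine (norm_add_le _ _).trans ?_
        rw [norm_smul]
        have h5 : ‖h * h‖ ≤ ‖h‖ ^ 2 := by rw [sq]; exact norm_mul_le _ _
        have h6 : ‖(1 : A)‖ ≤ 1 := by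
          rcases subsingleton_or_nontrivial A with _ | _
          · rw [Subsingleton.elim (1 : A) 0]; simp
          · simp
        have h7 : ‖(s : ℂ) ^ 2‖ = s ^ 2 := by simp
        rw [h7]
        nlinarith [sq_nonneg s]
      have e5 : |(φ h).im + s| ≤ ‖φ h + Complex.I * s‖ := by
        have := Complex.abs_im_le_norm (φ h + Complex.I * s)
        simpa using this
      have e6 : ((φ h).im + s) ^ 2 ≤ ‖φ h + Complex.I * s‖ ^ 2 := by
        rw [← sq_abs]; gcongr
      have e7 : ‖φ h + Complex.I * s‖ ^ 2 ≤ ‖h + (Complex.I * s) • (1 : A)‖ ^ 2 := by gcongr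
      linarith
    by_contra hne
    -- this `s` makes the cross term `2 s Im φ(h)` equal to `‖h‖² + 1`
    have := key ((‖h‖ ^ 2 + 1) / (2 * (φ h).im))
    have h8 : 2 * (φ h).im * ((‖h‖ ^ 2 + 1) / (2 * (φ h).im)) = ‖h‖ ^ 2 + 1 := by
      field_simp
    nlinarith [sq_nonneg (φ h).im]
  have hs := IsSelfAdjoint.star_mul_self a
  rw [Complex.nonneg_iff]
  refine ⟨?_, (him _ hs).symm⟩
  set h := star a * a with hh
  have e1 : ‖algebraMap ℝ A ‖h‖ - h‖ ≤ ‖h‖ := by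
    rw [CStarAlgebra.norm_le_iff_le_algebraMap _ (norm_nonneg _)
      (sub_nonneg.mpr hs.le_algebraMap_norm_self)]
    exact sub_le_self _ (star_mul_self_nonneg a)
  have e2 := (hle _).trans e1
  rw [Algebra.algebraMap_eq_smul_one, map_sub, ← Complex.coe_smul, map_smul, h1] at e2
  have e3 := (Complex.re_le_norm _).trans e2
  simp at e3
  linarith

end Functionals

/-! ### Pure states of a commutative C*-algebra are its characters -/

section Characters

open WeakDual

variable {B : Type*} [CommCStarAlgebra B]

lemma eq_zero_of_forall_char {b : B} (h : ∀ χ : characterSpace ℂ B, χ b = 0) : b = 0 := by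
  apply (gelfandTransform_isometry B).injective
  ext χ
  simpa using h χ

lemma char_pos (χ : characterSpace ℂ B) (b : B) : 0 ≤ χ (star b * b) := by
  rw [map_mul, map_star]
  exact star_mul_self_nonneg _

/-- A pure state `σ` is multiplicative on a positive contraction `h = c* c`: it is a convex
combination of the normalised functionals `σ(h ·)` and `σ((1 - h) ·)`, so both equal `σ`. The
element `c'` is a root of `1 - h`. -/
lemma pure_mul_of_contraction {σ : B →L[ℂ] ℂ} (hσ : IsPureState σ) {c c' : B}
    (hc : star c * c + star c' * c' = 1) (x : B) :
    σ (star c * c * x) = σ (star c * c) * σ x := by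
  obtain ⟨h1, hpos⟩ := (isState_iff σ).mp hσ.1
  have hsum : σ (star c * c) + σ (star c' * c') = 1 := by rw [← map_add, hc, h1]
  -- the functional `σ(d* d ·)`, normalised
  have hst : ∀ d : B, σ (star d * d) ≠ 0 →
      IsState ((σ (star d * d))⁻¹ • σ.comp (ContinuousLinearMap.mul ℂ B (star d * d))) := by
    intro d hd
    rw [isState_iff]
    constructor
    · simp [hd]
    · intro a
      have e : star d * d * (star a * a) = star (d * a) * (d * a) := by
        rw [star_mul]; ring
      have h2 : 0 ≤ (σ (star d * d))⁻¹ := inv_nonneg.mpr (hpos d)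
      simpa [e] using mul_nonneg h2 (hpos (d * a))
  by_cases hs : σ (star c * c) = 0
  · rw [hs, mul_assoc, posFun_eq_zero_left hpos hs, zero_mul]
  by_cases hs' : σ (star c' * c') = 0
  · have e1 : σ (star c' * c' * x) = 0 := by rw [mul_assoc, posFun_eq_zero_left hpos hs']
    have e2 : star c * c * x = x - star c' * c' * x := by
      rw [eq_sub_iff_add_eq.mpr hc]; ring
    rw [hs', add_zero] at hsum
    rw [e2, map_sub, e1, hsum]; ring
  have hre : ∀ d : B, (((σ (star d * d)).re : ℝ) : ℂ) = σ (star d * d) := by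
    intro d
    obtain ⟨_, h3⟩ := Complex.nonneg_iff.mp (hpos d)
    apply Complex.ext <;> simp [← h3]
  have hrepos : ∀ d : B, σ (star d * d) ≠ 0 → 0 < (σ (star d * d)).re := by
    intro d hd
    refine lt_of_le_of_ne (Complex.nonneg_iff.mp (hpos d)).1 fun h => hd ?_
    rw [← hre d, ← h]; simp
  have hseg : σ ∈ openSegment ℝ
      ((σ (star c * c))⁻¹ • σ.comp (ContinuousLinearMap.mul ℂ B (star c * c)))
      ((σ (star c' * c'))⁻¹ • σ.comp (ContinuousLinearMap.mul ℂ B (star c' * c'))) := by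
    refine ⟨(σ (star c * c)).re, (σ (star c' * c')).re, hrepos c hs, hrepos c' hs', ?_, ?_⟩
    · have := congrArg Complex.re hsum
      simpa using this
    · ext y
      simp only [add_apply, smul_apply,
        ContinuousLinearMap.comp_apply, ContinuousLinearMap.mul_apply', ← Complex.coe_smul, hre,
        smul_eq_mul, mul_inv_cancel_left₀ hs, mul_inv_cancel_left₀ hs']
      rw [← map_add, ← add_mul, hc, one_mul]
  have := hσ.2 (hst c hs) (hst c' hs') hseg
  have h2 := congrArg (fun f : B →L[ℂ] ℂ => f x) this
  simp only [smul_apply, ContinuousLinearMap.comp_apply,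
    ContinuousLinearMap.mul_apply', smul_eq_mul] at h2
  rw [← h2, mul_inv_cancel_left₀ hs]

/-- Pure states are multiplicative, since `B` is spanned by positive contractions. -/
lemma pure_mul {σ : B →L[ℂ] ℂ} (hσ : IsPureState σ) (y x : B) : σ (y * x) = σ y * σ x := by
  let _ := CStarAlgebra.spectralOrder B
  let _ := CStarAlgebra.spectralOrderedRing B
  have hpos : ∀ y : B, 0 ≤ y → σ (y * x) = σ y * σ x := by
    intro y hy
    by_cases h0 : y = 0
    · simp [h0]
    have hn : ‖y‖ ≠ 0 := by simpa using h0
    have h1 : 0 ≤ (‖y‖⁻¹ : ℝ) • y := smul_nonneg (by positivity) hy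
    have h2 : 0 ≤ 1 - (‖y‖⁻¹ : ℝ) • y := by
      have h3 := smul_nonneg (inv_nonneg.mpr (norm_nonneg y))
        (sub_nonneg.mpr (IsSelfAdjoint.of_nonneg hy).le_algebraMap_norm_self)
      rwa [smul_sub, Algebra.algebraMap_eq_smul_one, smul_smul, inv_mul_cancel₀ hn, one_smul] at h3
    obtain ⟨c, hc⟩ := CStarAlgebra.nonneg_iff_eq_star_mul_self.mp h1
    obtain ⟨c', hc'⟩ := CStarAlgebra.nonneg_iff_eq_star_mul_self.mp h2
    have h4 := pure_mul_of_contraction hσ (c := c) (c' := c') (by rw [← hc, ← hc']; ring) x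
    rw [← hc, ← Complex.coe_smul, smul_mul_assoc, map_smul, map_smul, smul_eq_mul, smul_eq_mul,
      mul_assoc] at h4
    exact mul_left_cancel₀ (by simpa using h0) h4
  obtain ⟨z, hz, -, hy⟩ := CStarAlgebra.exists_sum_four_nonneg y
  rw [hy, Finset.sum_mul, map_sum, map_sum, Finset.sum_mul]
  refine Finset.sum_congr rfl fun i _ => ?_
  rw [smul_mul_assoc, map_smul, map_smul, hpos _ (hz i), smul_mul_assoc]

lemma exists_char_of_isPureState {σ : B →L[ℂ] ℂ} (hσ : IsPureState σ) :
    ∃ χ : characterSpace ℂ B, ∀ b, χ b = σ b := by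
  let f : B →ₐ[ℂ] ℂ := AlgHom.ofLinearMap (σ : B →ₗ[ℂ] ℂ) ((isState_iff σ).mp hσ.1).1
    (fun x y => pure_mul hσ x y)
  exact ⟨CharacterSpace.equivAlgHom.symm f, fun b => rfl⟩

lemma isPureState_of_char {σ : B →L[ℂ] ℂ} (χ : characterSpace ℂ B) (h : ∀ b, χ b = σ b) :
    IsPureState σ := by
  have hσ : IsState σ := by
    rw [isState_iff, ← h]
    exact ⟨map_one χ, fun a => h _ ▸ char_pos χ a⟩
  refine ⟨hσ, ?_⟩
  rintro ρ₁ hρ₁ ρ₂ hρ₂ ⟨s, t, hs, ht, hst, hsum⟩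
  obtain ⟨h1, hpos₁⟩ := (isState_iff ρ₁).mp hρ₁
  obtain ⟨-, hpos₂⟩ := (isState_iff ρ₂).mp hρ₂
  ext a
  -- `σ` kills `b* b` for `b = a - χ(a)`, hence so does `ρ₁`
  set b := a - χ a • (1 : B) with hb
  have h0 : σ (star b * b) = 0 := by
    rw [← h, map_mul, hb]; simp
  have h2 : (s : ℂ) * ρ₁ (star b * b) + t * ρ₂ (star b * b) = 0 := by
    rw [← h0, ← hsum]; simp
  have hs' : (0 : ℂ) < s := by exact_mod_cast hs
  have ht' : (0 : ℂ) < t := by exact_mod_cast ht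
  have h3 : (s : ℂ) * ρ₁ (star b * b) = 0 :=
    ((add_eq_zero_iff_of_nonneg (mul_nonneg hs'.le (hpos₁ b)) (mul_nonneg ht'.le (hpos₂ b))).mp
      h2).1
  have h4 : ρ₁ (star b * b) = 0 := (mul_eq_zero.mp h3).resolve_left hs'.ne'
  have h5 := posFun_eq_zero_right hpos₁ h4 1
  rw [one_mul, hb, map_sub, map_smul, h1, smul_eq_mul, mul_one, sub_eq_zero] at h5
  rw [h5, h]

end Characters

/-! ### Extensions of characters and conditional expectations

In this part and the next two, `B` is an abstract model of `D`: the injective unital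
homomorphism `ι : B → A` has range `D`, and `Q : A → B` is the conditional expectation, so that
`Q (ι b) = b`. -/

section Core

open WeakDual

variable {A B : Type*} [CStarAlgebra A] [CommCStarAlgebra B] {ι : B →⋆ₐ[ℂ] A}

/-- A positive extension of a character is multiplicative over `D`, because it vanishes on
`(b - χ(b))* (b - χ(b))` and the Cauchy-Schwarz inequality applies. -/
lemma ext_mul_left {ρ : A →L[ℂ] ℂ} (hρ : ∀ a, 0 ≤ ρ (star a * a)) {χ : characterSpace ℂ B}
    (hχ : ∀ b, ρ (ι b) = χ b) (b : B) (a : A) : ρ (ι b * a) = χ b * ρ a := by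
  set c := b - χ b • (1 : B) with hc
  have h0 : ρ (star (ι (star c)) * ι (star c)) = 0 := by
    rw [← map_star, star_star, ← map_mul, hχ, map_mul, hc]; simp
  have h1 := posFun_eq_zero_left hρ h0 a
  rw [← map_star, star_star, hc, map_sub, map_smul, map_one, sub_mul, smul_mul_assoc, one_mul,
    map_sub, map_smul, smul_eq_mul, sub_eq_zero] at h1
  exact h1

lemma ext_mul_right {ρ : A →L[ℂ] ℂ} (hρ : ∀ a, 0 ≤ ρ (star a * a)) {χ : characterSpace ℂ B}
    (hχ : ∀ b, ρ (ι b) = χ b) (a : A) (b : B) : ρ (a * ι b) = ρ a * χ b := by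
  set c := b - χ b • (1 : B) with hc
  have h0 : ρ (star (ι c) * ι c) = 0 := by
    rw [← map_star, ← map_mul, hχ, map_mul, hc]; simp
  have h1 := posFun_eq_zero_right hρ h0 a
  rw [hc, map_sub, map_smul, map_one, mul_sub, mul_smul_comm, mul_one,
    map_sub, map_smul, smul_eq_mul, sub_eq_zero] at h1
  rw [h1, mul_comm]

variable {D : NonUnitalStarSubalgebra ℂ A}

lemma IsNormalizer.exists_star_mul {n : A} (hn : IsNormalizer D n)
    (hD : ∀ a, a ∈ D ↔ ∃ b, ι b = a) : ∃ t, ι t = star n * n := by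
  have := (hn 1 ((hD 1).mpr ⟨1, map_one ι⟩)).2
  rwa [mul_one, hD] at this

lemma IsNormalizer.exists_mul_star {n : A} (hn : IsNormalizer D n)
    (hD : ∀ a, a ∈ D ↔ ∃ b, ι b = a) : ∃ r, ι r = n * star n := by
  have := (hn 1 ((hD 1).mpr ⟨1, map_one ι⟩)).1
  rwa [mul_one, hD] at this

/-- Positive extensions of characters vanish on `n c` for `n` a free normalizer and `c` commuting
with `D`. Since `(n n*)(n* n) = 0`, the character kills `n n*` or `n* n`, and Cauchy-Schwarz
applies on the corresponding side. -/
lemma ext_free_mul {ρ : A →L[ℂ] ℂ} (hρ : ∀ a, 0 ≤ ρ (star a * a)) {χ : characterSpace ℂ B}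
    (hχ : ∀ b, ρ (ι b) = χ b) (hD : ∀ a, a ∈ D ↔ ∃ b, ι b = a) {n : A}
    (hn : IsFreeNormalizer D n) {c : A} (hc : ∀ b, c * ι b = ι b * c) : ρ (n * c) = 0 := by
  obtain ⟨t, ht⟩ := hn.1.exists_star_mul hD
  obtain ⟨r, hr⟩ := hn.1.exists_mul_star hD
  have h0 : χ r * χ t = 0 := by
    have : ι (r * t) = 0 := by
      rw [map_mul, ht, hr]
      have : star n * star n = 0 := by rw [← star_mul, hn.2, star_zero]
      rw [mul_assoc, ← mul_assoc (star n), this, zero_mul, mul_zero]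
    rw [← map_mul, ← hχ, this, map_zero]
  rcases mul_eq_zero.mp h0 with h | h
  · have := posFun_eq_zero_left hρ (a := star n) (by rw [star_star, ← hr, hχ, h]) c
    rwa [star_star] at this
  · have h1 : ρ (star (n * c) * (n * c)) = 0 := by
      have : star (n * c) * (n * c) = star c * c * ι t := by
        rw [star_mul, mul_assoc, ← mul_assoc (star n), ← ht, ← hc, mul_assoc]
      rw [this, ext_mul_right hρ hχ, h, mul_zero]
    simpa using posFun_eq_zero_right hρ h1 1

lemma ext_free {ρ : A →L[ℂ] ℂ} (hρ : ∀ a, 0 ≤ ρ (star a * a)) {χ : characterSpace ℂ B}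
    (hχ : ∀ b, ρ (ι b) = χ b) (hD : ∀ a, a ∈ D ↔ ∃ b, ι b = a) {n : A}
    (hn : IsFreeNormalizer D n) : ρ n = 0 := by
  simpa using ext_free_mul hρ hχ hD hn (c := 1) (by simp)

variable {Q : A →L[ℂ] B}

/-- The composition of a conditional expectation with a character. -/
noncomputable def expState (Q : A →L[ℂ] B) (χ : characterSpace ℂ B) : A →L[ℂ] ℂ :=
  (CharacterSpace.toCLM χ).comp Q

@[simp] lemma expState_apply (χ : characterSpace ℂ B) (a : A) : expState Q χ a = χ (Q a) := rfl

lemma expState_ext (hQ : ∀ b, Q (ι b) = b) (χ : characterSpace ℂ B) (b : B) :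
    expState Q χ (ι b) = χ b := by rw [expState_apply, hQ]

lemma expState_one (hQ : ∀ b, Q (ι b) = b) (χ : characterSpace ℂ B) : expState Q χ 1 = 1 := by
  rw [← map_one ι, expState_ext hQ, map_one]

lemma expState_pos (hQ : ∀ b, Q (ι b) = b) (hQ1 : ‖Q‖ ≤ 1) (χ : characterSpace ℂ B) (a : A) :
    0 ≤ expState Q χ (star a * a) := by
  refine posFun_of_contractive ?_ (expState_one hQ χ) a
  have : Nontrivial B := by
    by_contra h
    rw [not_nontrivial_iff_subsingleton] at h
    have := map_one χ
    rw [Subsingleton.elim (1 : B) 0, map_zero] at this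
    exact zero_ne_one this
  refine ContinuousLinearMap.opNorm_le_bound _ zero_le_one fun x => ?_
  rw [expState_apply]
  have h1 : ‖χ (Q x)‖ ≤ ‖Q x‖ := AlgHom.norm_apply_le_self χ (Q x)
  exact h1.trans (Q.le_of_opNorm_le hQ1 x)

lemma expState_isState (hQ : ∀ b, Q (ι b) = b) (hQ1 : ‖Q‖ ≤ 1) (χ : characterSpace ℂ B) :
    IsState (expState Q χ) :=
  (isState_iff _).mpr ⟨expState_one hQ χ, expState_pos hQ hQ1 χ⟩

/-- Conditional expectations are `D`-linear; this is checked at each character, where it is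
multiplicativity of `χ ∘ Q` over `D`. -/
lemma condExp_mul_left (hQ : ∀ b, Q (ι b) = b) (hQ1 : ‖Q‖ ≤ 1) (b : B) (a : A) :
    Q (ι b * a) = b * Q a := by
  refine sub_eq_zero.mp (eq_zero_of_forall_char fun χ => ?_)
  have := ext_mul_left (expState_pos hQ hQ1 χ) (expState_ext hQ χ) b a
  simp only [expState_apply] at this
  rw [map_sub, this, map_mul, sub_self]

lemma condExp_mul_right (hQ : ∀ b, Q (ι b) = b) (hQ1 : ‖Q‖ ≤ 1) (a : A) (b : B) :
    Q (a * ι b) = Q a * b := by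
  refine sub_eq_zero.mp (eq_zero_of_forall_char fun χ => ?_)
  have := ext_mul_right (expState_pos hQ hQ1 χ) (expState_ext hQ χ) a b
  simp only [expState_apply] at this
  rw [map_sub, this, map_mul, sub_self]

lemma condExp_free (hQ : ∀ b, Q (ι b) = b) (hQ1 : ‖Q‖ ≤ 1) (hD : ∀ a, a ∈ D ↔ ∃ b, ι b = a)
    {n : A} (hn : IsFreeNormalizer D n) : Q n = 0 :=
  eq_zero_of_forall_char fun χ => ext_free (expState_pos hQ hQ1 χ) (expState_ext hQ χ) hD hn

/-! ### Consequences of Kumjian's conditions -/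

section Forward

lemma vanish_on_ker
    (hker : {a : A | Q a = 0} ⊆ closure (Submodule.span ℂ {n : A | IsFreeNormalizer D n} : Set A))
    {f : A →L[ℂ] ℂ} (hf : ∀ n, IsFreeNormalizer D n → f n = 0) {a : A} (ha : Q a = 0) :
    f a = 0 := by
  have h1 : (Submodule.span ℂ {n : A | IsFreeNormalizer D n}) ≤ LinearMap.ker (f : A →ₗ[ℂ] ℂ) :=
    Submodule.span_le.mpr fun n hn => hf n hn
  have h2 : IsClosed {a : A | f a = 0} := isClosed_eq f.continuous continuous_const
  exact closure_minimal (fun x hx => h1 hx) h2 (hker ha)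

lemma unique_ext_of_kumjian (hQ : ∀ b, Q (ι b) = b) (hD : ∀ a, a ∈ D ↔ ∃ b, ι b = a)
    (hker : {a : A | Q a = 0} ⊆ closure (Submodule.span ℂ {n : A | IsFreeNormalizer D n} : Set A))
    {ρ : A →L[ℂ] ℂ} (hρ : ∀ a, 0 ≤ ρ (star a * a)) {χ : characterSpace ℂ B}
    (hχ : ∀ b, ρ (ι b) = χ b) : ρ = expState Q χ := by
  ext a
  have h1 : ρ (a - ι (Q a)) = 0 :=
    vanish_on_ker hker (fun n hn => ext_free hρ hχ hD hn) (by rw [map_sub, hQ, sub_self])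
  rw [map_sub, sub_eq_zero] at h1
  rw [h1, hχ, expState_apply]

/-- An element `c` commuting with `D` lies in `D`: for `b = c - Q c`, each functional
`x ↦ χ(Q(x b))` vanishes on `ker Q`, so that `χ(Q(b* b)) = χ(Q(Q(b*) b)) = 0`. -/
lemma masa_of_kumjian (hQ : ∀ b, Q (ι b) = b) (hQ1 : ‖Q‖ ≤ 1)
    (hfaith : ∀ a, Q (star a * a) = 0 → a = 0) (hD : ∀ a, a ∈ D ↔ ∃ b, ι b = a)
    (hker : {a : A | Q a = 0} ⊆ closure (Submodule.span ℂ {n : A | IsFreeNormalizer D n} : Set A))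
    {c : A} (hc : ∀ b, c * ι b = ι b * c) : ι (Q c) = c := by
  set b := c - ι (Q c) with hb
  have hQb : Q b = 0 := by rw [hb, map_sub, hQ, sub_self]
  have hbc : ∀ d, b * ι d = ι d * b := by
    intro d
    rw [hb, sub_mul, mul_sub, hc, ← map_mul, ← map_mul, mul_comm d]
  suffices h : b = 0 from (sub_eq_zero.mp h).symm
  refine hfaith b (eq_zero_of_forall_char fun χ => ?_)
  have hpos := expState_pos hQ hQ1 χ
  have hext := expState_ext hQ χ
  -- `x ↦ χ(Q(x b))` vanishes on free normalizers, hence on `ker Q`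
  let f : A →L[ℂ] ℂ := (expState Q χ).comp ((ContinuousLinearMap.mul ℂ A).flip b)
  have hf : ∀ x, f x = expState Q χ (x * b) := fun x => rfl
  have h1 : f (star b - ι (Q (star b))) = 0 :=
    vanish_on_ker hker (fun n hn => ext_free_mul hpos hext hD hn hbc)
      (by rw [map_sub, hQ, sub_self])
  rw [map_sub, hf, hf, ext_mul_left hpos hext, expState_apply _ b, hQb, map_zero, mul_zero,
    sub_zero] at h1
  exact h1

end Forward

/-! ### Normalizers modulo `D` are limits of sums of free normalizers -/

section Backward

lemma mul_normalizer (hD : ∀ a, a ∈ D ↔ ∃ b, ι b = a) {n : A} (hn : IsNormalizer D n) (b : B) :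
    IsNormalizer D (n * ι b) := by
  intro d hd
  have hb : ι b ∈ D := (hD _).mpr ⟨b, rfl⟩
  constructor
  · have := (hn _ (mul_mem (mul_mem hb hd) (star_mem hb))).1
    simpa [star_mul, mul_assoc] using this
  · have := mul_mem (mul_mem (star_mem hb) (hn d hd).2) hb
    simpa [star_mul, mul_assoc] using this

lemma mul_free (hD : ∀ a, a ∈ D ↔ ∃ b, ι b = a) {n : A} (hn : IsFreeNormalizer D n) (b : B) :
    IsFreeNormalizer D (n * ι b) := by
  refine ⟨mul_normalizer hD hn.1 b, ?_⟩
  obtain ⟨r, hr⟩ := hn.1.exists_mul_star hD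
  have h0 : n * ι b * n = 0 := by
    rw [← CStarRing.mul_star_self_eq_zero_iff]
    calc n * ι b * n * star (n * ι b * n) = n * (ι b * (n * star n)) * star (ι b) * star n := by
          simp [star_mul, mul_assoc]
      _ = n * n * star n * ι b * star (ι b) * star n := by
          rw [← hr, ← map_mul, mul_comm b r, map_mul, hr]; simp only [mul_assoc]
      _ = 0 := by rw [hn.2]; simp
  rw [← mul_assoc, h0, zero_mul]

/-- The closed span of the free normalizers. -/
noncomputable def freeSpan (D : NonUnitalStarSubalgebra ℂ A) : Submodule ℂ A :=
  (Submodule.span ℂ {n : A | IsFreeNormalizer D n}).topologicalClosure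

lemma subset_freeSpan {n : A} (hn : IsFreeNormalizer D n) : n ∈ freeSpan D :=
  Submodule.le_topologicalClosure _ (Submodule.subset_span hn)

lemma freeSpan_mul (hD : ∀ a, a ∈ D ↔ ∃ b, ι b = a) {x : A} (hx : x ∈ freeSpan D) (b : B) :
    x * ι b ∈ freeSpan D := by
  have hcl : IsClosed {x : A | x * ι b ∈ freeSpan D} :=
    (Submodule.isClosed_topologicalClosure _).preimage (continuous_mul_const (ι b))
  refine closure_minimal (fun y hy => ?_) hcl hx
  have : Submodule.span ℂ {n : A | IsFreeNormalizer D n} ≤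
      (freeSpan D).comap (LinearMap.mulRight ℂ (ι b)) :=
    Submodule.span_le.mpr fun n hn => subset_freeSpan (mul_free hD hn b)
  exact this hy

/-- Two elements of `B` with disjoint supports, one nonzero at `χ` and the other nonzero at the
image of `χ` under the partial homeomorphism induced by `n`, if `χ` is moved by it. -/
lemma exists_separating (hQ : ∀ b, Q (ι b) = b) (hQ1 : ‖Q‖ ≤ 1)
    (hι : Function.Injective ι) (hD : ∀ a, a ∈ D ↔ ∃ b, ι b = a) {n : A} (hn : IsNormalizer D n)
    (χ : characterSpace ℂ B) {d₀ : B}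
    (hd₀ : χ (Q (star n * ι d₀ * n)) ≠ χ (Q (star n * n)) * χ d₀) :
    ∃ u v : B, u * v = 0 ∧ χ v ≠ 0 ∧ χ (Q (star n * ι u * n)) ≠ 0 := by
  let _ := CStarAlgebra.spectralOrder B
  let _ := CStarAlgebra.spectralOrderedRing B
  have hpos := expState_pos hQ hQ1 χ
  obtain ⟨t, ht⟩ := hn.exists_star_mul hD
  have hθ : ∀ b, ι (Q (star n * ι b * n)) = star n * ι b * n := by
    intro b
    obtain ⟨c, hc⟩ := (hD _).mp (hn (ι b) ((hD _).mpr ⟨b, rfl⟩)).2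
    rw [← hc, hQ]
  have hθpos : ∀ b : B, 0 ≤ b → 0 ≤ χ (Q (star n * ι b * n)) := by
    intro b hb
    obtain ⟨p, rfl⟩ := CStarAlgebra.nonneg_iff_eq_star_mul_self.mp hb
    have : star n * ι (star p * p) * n = star (ι p * n) * (ι p * n) := by
      simp [star_mul, mul_assoc, map_star]
    rw [this]
    exact hpos (ι p * n)
  have hχpos : ∀ b : B, 0 ≤ b → 0 ≤ χ b := by
    intro b hb
    obtain ⟨p, rfl⟩ := CStarAlgebra.nonneg_iff_eq_star_mul_self.mp hb
    exact char_pos χ p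
  have ht' : Q (star n * n) = t := by rw [← ht, hQ]
  have htpos : 0 ≤ χ t := by rw [← ht']; exact hpos n
  rw [ht'] at hd₀
  set a₁ := d₀ - χ d₀ • (1 : B) with ha₁
  set a := star a₁ * a₁ with ha
  have hχa : χ a = 0 := by rw [ha, map_mul, ha₁]; simp
  have hθa₁ : χ (Q (star n * ι a₁ * n)) ≠ 0 := by
    have : star n * ι a₁ * n = star n * ι d₀ * n - χ d₀ • (star n * n) := by
      rw [ha₁]; simp [mul_sub, sub_mul]
    rw [this, map_sub, map_smul, map_sub, map_smul, ht', smul_eq_mul, mul_comm (χ d₀)]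
    exact sub_ne_zero.mpr hd₀
  obtain ⟨r, hr⟩ := hn.exists_mul_star hD
  -- `b ↦ n* b n` is multiplicative up to the factor `t = n* n`
  have hmul : star (Q (star n * ι a₁ * n)) * Q (star n * ι a₁ * n) = Q (star n * ι a * n) * t := by
    apply hι
    rw [map_mul ι, map_mul ι, map_star, hθ, hθ, ht]
    calc star (star n * ι a₁ * n) * (star n * ι a₁ * n)
        = star n * ι (star a₁) * (n * star n) * ι a₁ * n := by simp [star_mul, mul_assoc, map_star]
      _ = star n * ι (star a₁ * a₁) * (n * star n) * n := by
          rw [← hr, mul_assoc _ (ι r), ← map_mul, mul_comm r, map_mul, map_mul]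
          simp only [mul_assoc]
      _ = _ := by simp only [mul_assoc, ha]
  have hθa : χ (Q (star n * ι a * n)) ≠ 0 := by
    intro h
    have h2 := congrArg χ hmul
    rw [map_mul χ, map_mul χ, map_star, h, zero_mul] at h2
    exact hθa₁ (CStarRing.star_mul_self_eq_zero_iff _ |>.mp h2)
  have ht0 : χ t ≠ 0 := by
    intro h
    have h2 := congrArg χ hmul
    rw [map_mul χ, map_mul χ, map_star, h, mul_zero] at h2
    exact hθa₁ (CStarRing.star_mul_self_eq_zero_iff _ |>.mp h2)
  have hapos : 0 ≤ a := star_mul_self_nonneg a₁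
  have hθa' := lt_of_le_of_ne (hθpos a hapos) hθa.symm
  have htlt := lt_of_le_of_ne htpos ht0.symm
  obtain ⟨x, hx⟩ : ∃ x : ℝ, (x : ℂ) = χ (Q (star n * ι a * n)) :=
    ⟨(χ (Q (star n * ι a * n))).re, by
      apply Complex.ext; rfl; simpa using (Complex.nonneg_iff.mp hθa'.le).2⟩
  obtain ⟨y, hy⟩ : ∃ y : ℝ, (y : ℂ) = χ t :=
    ⟨(χ t).re, by apply Complex.ext; rfl; simpa using (Complex.nonneg_iff.mp htpos).2⟩
  have hx0 : 0 < x := by rw [← hx] at hθa'; exact_mod_cast hθa'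
  have hy0 : 0 < y := by rw [← hy] at htlt; exact_mod_cast htlt
  -- cut `a` at half its value at the image point
  let c : ℝ := x / (2 * y)
  have hc0 : 0 < c := by positivity
  let k : B := a - (c : ℂ) • (1 : B)
  have hk : IsSelfAdjoint k := by
    refine (IsSelfAdjoint.of_nonneg hapos).sub ?_
    simp [isSelfAdjoint_iff]
  have huv : k⁺ - k⁻ = k := CFC.posPart_sub_negPart k hk
  refine ⟨k⁺, k⁻, CFC.posPart_mul_negPart k, ?_, ?_⟩
  · intro h
    have h1 := congrArg χ huv
    have h2 := hχpos _ (CFC.posPart_nonneg k)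
    simp only [k, map_sub, map_smul, map_one, hχa, smul_eq_mul, mul_one] at h1 h2 h
    rw [h, sub_zero, zero_sub] at h1
    rw [h1] at h2
    have : (0 : ℝ) ≤ -c := by exact_mod_cast h2
    linarith
  · intro h
    have h1 : Q (star n * ι k⁺ * n) - Q (star n * ι k⁻ * n)
        = Q (star n * ι a * n) - (c : ℂ) • t := by
      rw [← map_sub, ← sub_mul, ← mul_sub, ← map_sub ι, huv, ← ht', ← map_smul, ← map_sub]
      simp only [k, map_sub ι, map_smul ι, map_one, mul_sub, sub_mul, mul_smul_comm,
        smul_mul_assoc, mul_one]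
    have h3 := congrArg χ h1
    have h2 := hθpos _ (CFC.negPart_nonneg k)
    rw [map_sub, map_sub, map_smul, h, ← hx, ← hy, zero_sub, smul_eq_mul, neg_eq_iff_eq_neg] at h3
    rw [h3] at h2
    have h4 : (0 : ℝ) ≤ -(x - c * y) := by exact_mod_cast h2
    have h5 : c * y = x / 2 := by simp only [c]; field_simp
    linarith

/-- If the partial homeomorphism of `n` fixes `χ` and `n* n` is nonzero at `χ`, unique extension
forces `χ(Q n) ≠ 0`. Otherwise, for `|z| = 1`, the normalised functional
`x ↦ χ(Q((1 + z n)* x (1 + z n)))` is a state extending `χ`; it must equal `χ ∘ Q`, and comparing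
the values at `n` for `z = 1` and `z = i` gives `χ(n* n) = 0`. -/
lemma condExp_ne_zero_of_fixed (hQ : ∀ b, Q (ι b) = b) (hQ1 : ‖Q‖ ≤ 1)
    (hD : ∀ a, a ∈ D ↔ ∃ b, ι b = a)
    (huep : ∀ χ : characterSpace ℂ B, ∀ ρ : A →L[ℂ] ℂ, IsState ρ → (∀ b, ρ (ι b) = χ b) →
      ρ = expState Q χ)
    {n : A} (hn : IsNormalizer D n) (χ : characterSpace ℂ B)
    (hfix : ∀ b, χ (Q (star n * ι b * n)) = χ (Q (star n * n)) * χ b)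
    (ht0 : χ (Q (star n * n)) ≠ 0) : χ (Q n) ≠ 0 := by
  intro hn0
  have hpos := expState_pos hQ hQ1 χ
  have hext := expState_ext hQ χ
  set ρ := expState Q χ with hρ
  obtain ⟨t, ht⟩ := hn.exists_star_mul hD
  have hρn : ρ n = 0 := hn0
  have hρn' : ρ (star n) = 0 := by rw [posFun_map_star hpos, hρn, star_zero]
  set w : ℂ := 1 + ρ (star n * n) with hw
  have hw0 : 0 < w := add_pos_of_pos_of_nonneg one_pos (hpos n)
  -- the identity obtained from the extension given by the vector `1 + z n`
  have key : ∀ z : ℂ, star z * z = 1 → z * ρ (n * n) + star z * ρ (star n * n) = 0 := by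
    intro z hz
    set m := 1 + z • n with hm
    have expand : ∀ x, ρ (star m * x * m)
        = ρ x + z * ρ (x * n) + star z * ρ (star n * x) + ρ (star n * x * n) := by
      intro x
      have : star m * x * m = x + z • (x * n) + star z • (star n * x)
          + (star z * z) • (star n * x * n) := by
        rw [hm]
        simp only [star_add, star_one, star_smul, add_mul, mul_add, one_mul, mul_one,
          smul_mul_assoc, mul_smul_comm]
        module
      rw [this, hz, one_smul, map_add, map_add, map_add, map_smul, map_smul, smul_eq_mul,
        smul_eq_mul]
    let ρ' : A →L[ℂ] ℂ := w⁻¹ • ρ.comp ((ContinuousLinearMap.mul ℂ A (star m)).comp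
      ((ContinuousLinearMap.mul ℂ A).flip m))
    have hρ' : ∀ x, ρ' x = w⁻¹ * ρ (star m * x * m) := by
      intro x
      rw [mul_assoc]; rfl
    have hρ'ext : ∀ b, ρ' (ι b) = χ b := by
      intro b
      rw [hρ', expand, ext_mul_left hpos hext, ext_mul_right hpos hext, hρn, hρn', hext]
      have : ρ (star n * ι b * n) = ρ (star n * n) * χ b := hfix b
      rw [this, inv_mul_eq_iff_eq_mul₀ hw0.ne', hw]
      ring
    have hst : IsState ρ' := by
      rw [isState_iff]
      constructor
      · rw [← map_one ι, hρ'ext, map_one]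
      · intro a
        rw [hρ']
        have : star m * (star a * a) * m = star (a * m) * (a * m) := by
          simp [star_mul, mul_assoc]
        rw [this]
        exact mul_nonneg (inv_nonneg.mpr hw0.le) (hpos _)
    have h1 := huep χ ρ' hst hρ'ext
    have h2 : ρ' n = 0 := by rw [h1]; exact hρn
    rw [hρ', expand, hρn, ← ht, ext_mul_left hpos hext, hρn, mul_zero, add_zero, zero_add] at h2
    have h3 := (mul_eq_zero.mp h2).resolve_left (inv_ne_zero hw0.ne')
    rw [← ht]; exact h3
  have k1 := key 1 (by simp)
  have k2 := key Complex.I (by simp)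
  simp only [star_one, one_mul, RCLike.star_def, Complex.conj_I] at k1 k2
  apply ht0
  have : ρ (star n * n) = 0 := by
    have h5 : Complex.I * (2 * ρ (star n * n)) = 0 := by linear_combination Complex.I * k1 - k2
    simpa using h5
  exact this

/-- Near a point `χ` where `n* n` does not vanish, `n - Q n` lies in the closed span of the free
normalizers. If `χ` is fixed by `n`, then `n` times a suitable element of `D` commutes with `D`,
hence lies in `D`; if `χ` is moved, then `n` times a suitable element of `D` is free. -/
lemma exists_local (hQ : ∀ b, Q (ι b) = b) (hQ1 : ‖Q‖ ≤ 1)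
    (hι : Function.Injective ι) (hD : ∀ a, a ∈ D ↔ ∃ b, ι b = a)
    (hmasa : ∀ c : A, (∀ b, c * ι b = ι b * c) → ι (Q c) = c)
    (huep : ∀ χ : characterSpace ℂ B, ∀ ρ : A →L[ℂ] ℂ, IsState ρ → (∀ b, ρ (ι b) = χ b) →
      ρ = expState Q χ)
    {n : A} (hn : IsNormalizer D n) (χ : characterSpace ℂ B)
    (ht0 : χ (Q (star n * n)) ≠ 0) :
    ∃ d : B, χ d ≠ 0 ∧ (n - ι (Q n)) * ι d ∈ freeSpan D := by
  have hred : ∀ d, (n - ι (Q n)) * ι d = n * ι d - ι (Q (n * ι d)) := by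
    intro d
    rw [condExp_mul_right hQ hQ1, map_mul, sub_mul]
  obtain ⟨t, ht⟩ := hn.exists_star_mul hD
  obtain ⟨r, hr⟩ := hn.exists_mul_star hD
  have hQt : Q (star n * n) = t := by rw [← ht, hQ]
  have hθ : ∀ b, ι (Q (star n * ι b * n)) = star n * ι b * n := by
    intro b
    obtain ⟨c, hc⟩ := (hD _).mp (hn (ι b) ((hD _).mpr ⟨b, rfl⟩)).2
    rw [← hc, hQ]
  have hcomm : ∀ b, n * star n * ι b = ι b * (n * star n) := by
    intro b; rw [← hr, ← map_mul, ← map_mul, mul_comm]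
  by_cases hfix : ∀ b, χ (Q (star n * ι b * n)) = χ (Q (star n * n)) * χ b
  · have hn0 := condExp_ne_zero_of_fixed hQ hQ1 hD huep hn χ hfix ht0
    set e := Q n with he
    have hnθ : ∀ b, n * ι (Q (star n * ι b * n)) = ι b * n * ι t := by
      intro b
      rw [hθ, ht, ← mul_assoc, ← mul_assoc, hcomm]
      simp only [mul_assoc]
    have h1 : ∀ b, e * Q (star n * ι b * n) = b * e * t := by
      intro b
      have := congrArg Q (hnθ b)
      rwa [condExp_mul_right hQ hQ1, condExp_mul_right hQ hQ1, condExp_mul_left hQ hQ1] at this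
    have hst : star t = t := by
      apply hι
      rw [map_star, ht]; simp
    have hθstar : ∀ b, star (Q (star n * ι (star b) * n)) = Q (star n * ι b * n) := by
      intro b
      apply hι
      rw [map_star, hθ, hθ]
      simp [star_mul, mul_assoc, map_star]
    have h2 : ∀ b, star e * Q (star n * ι b * n) = b * star e * t := by
      intro b
      have := congrArg star (h1 (star b))
      simp only [star_mul, star_star, hθstar, hst] at this
      rw [mul_comm, this]; ring
    refine ⟨t * star e, ?_, ?_⟩
    · rw [map_mul, map_star, ← hQt]
      exact mul_ne_zero ht0 (star_ne_zero.mpr hn0)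
    · have hc : ∀ b, n * ι (t * star e) * ι b = ι b * (n * ι (t * star e)) := by
        intro b
        have h3 : t * star e * b = Q (star n * ι b * n) * star e := by
          rw [mul_comm (Q (star n * ι b * n)) (star e), h2]; ring
        rw [mul_assoc, ← map_mul, h3, map_mul, ← mul_assoc, hnθ, map_mul]
        simp only [mul_assoc]
      rw [hred, hmasa _ hc, sub_self]
      exact zero_mem _
  · push Not at hfix
    obtain ⟨d₀, hd₀⟩ := hfix
    obtain ⟨u, v, huv, hv, hu⟩ := exists_separating hQ hQ1 hι hD hn χ hd₀
    set y := Q (star n * ι u * n) with hy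
    have hz : ι v * n * ι y = 0 := by
      rw [hy, hθ]
      calc ι v * n * (star n * ι u * n) = ι v * (n * star n * ι u) * n := by
            simp only [mul_assoc]
        _ = ι (u * v) * (n * star n) * n := by
            rw [hcomm, ← mul_assoc, ← map_mul, mul_comm v]
        _ = 0 := by rw [huv]; simp
    have hfree : IsFreeNormalizer D (n * ι (y * v)) := by
      refine ⟨mul_normalizer hD hn _, ?_⟩
      rw [map_mul]
      calc n * (ι y * ι v) * (n * (ι y * ι v)) = n * ι y * (ι v * n * ι y) * ι v := by
            simp only [mul_assoc]
        _ = 0 := by rw [hz]; simp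
    refine ⟨y * v, by rw [map_mul]; exact mul_ne_zero hu hv, ?_⟩
    rw [hred, condExp_free hQ hQ1 hD hfree, map_zero, sub_zero]
    exact subset_freeSpan hfree

/-- For a normalizer `n`, the difference `n - Q n` lies in the closed span of the free
normalizers. With `t = n* n`, `n` is approximated by `n g` for functions `g` of `t` vanishing near
`t = 0`, and `exists_local` is patched over the support of `g` by an ideal argument. -/
lemma sub_condExp_mem (hQ : ∀ b, Q (ι b) = b) (hQ1 : ‖Q‖ ≤ 1)
    (hι : Function.Injective ι) (hD : ∀ a, a ∈ D ↔ ∃ b, ι b = a)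
    (hmasa : ∀ c : A, (∀ b, c * ι b = ι b * c) → ι (Q c) = c)
    (huep : ∀ χ : characterSpace ℂ B, ∀ ρ : A →L[ℂ] ℂ, IsState ρ → (∀ b, ρ (ι b) = χ b) →
      ρ = expState Q χ)
    {n : A} (hn : IsNormalizer D n) : n - ι (Q n) ∈ freeSpan D := by
  obtain ⟨t, ht⟩ := hn.exists_star_mul hD
  have hQt : Q (star n * n) = t := by rw [← ht, hQ]
  have hst : IsSelfAdjoint t := by
    apply hι
    rw [map_star, ht]; simp
  have hspec : ∀ s ∈ spectrum ℝ t, 0 ≤ s := by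
    intro s hs
    have h1 : (s : ℂ) ∈ spectrum ℂ t := by
      have := spectrum.algebraMap_mem ℂ hs
      simpa using this
    obtain ⟨χ, hχ⟩ := CharacterSpace.mem_spectrum_iff_exists.mp h1
    have h2 := expState_pos hQ hQ1 χ n
    rw [expState_apply, hQt, hχ] at h2
    exact_mod_cast h2
  have main : ∀ ε : ℝ, 0 < ε → ∃ g : B, ‖n - n * ι g‖ ^ 2 ≤ ε ∧
      (n - ι (Q n)) * ι g ∈ freeSpan D := by
    intro ε hε
    have hmax : ∀ s : ℝ, max s ε ≠ 0 := fun s => (lt_max_of_lt_right hε).ne'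
    have hcont : Continuous fun s : ℝ => max (s - ε) 0 / max s ε :=
      Continuous.div (by fun_prop) (by fun_prop) hmax
    -- `g` is `1 - ε / t` where `t ≥ ε` and `0` elsewhere
    set g : B := cfc (fun s : ℝ => max (s - ε) 0 / max s ε) t with hg
    refine ⟨g, ?_, ?_⟩
    · have hgs : IsSelfAdjoint g := cfc_predicate _ t
      have e1 : star (n - n * ι g) * (n - n * ι g) = ι (t * ((1 - g) * (1 - g))) := by
        have : n - n * ι g = n * ι (1 - g) := by rw [map_sub, map_one, mul_sub, mul_one]
        have hs1 : star (1 - g) = 1 - g := by rw [star_sub, star_one, hgs.star_eq]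
        rw [this, star_mul, ← map_star, hs1]
        calc ι (1 - g) * star n * (n * ι (1 - g)) = ι (1 - g) * (star n * n) * ι (1 - g) := by
              simp only [mul_assoc]
          _ = ι (t * ((1 - g) * (1 - g))) := by
              rw [← ht, ← map_mul, ← map_mul]; congr 1; ring
      have e2 : t * ((1 - g) * (1 - g)) = cfc (fun s : ℝ => s *
          ((1 - max (s - ε) 0 / max s ε) * (1 - max (s - ε) 0 / max s ε))) t := by
        have hc1 : Continuous fun s : ℝ => 1 - max (s - ε) 0 / max s ε := continuous_const.sub hcont
        rw [cfc_mul (fun s : ℝ => s) _ t continuousOn_id (hc1.fun_mul hc1).continuousOn,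
          cfc_mul _ _ t hc1.continuousOn hc1.continuousOn,
          cfc_sub (fun _ => 1) _ t continuousOn_const hcont.continuousOn, cfc_id' ℝ t,
          cfc_const_one ℝ t]
      rw [sq, ← CStarRing.norm_star_mul_self, e1]
      refine (NonUnitalStarAlgHom.norm_apply_le ι _).trans ?_
      rw [e2]
      refine norm_cfc_le hε.le fun s hs => ?_
      have hs0 := hspec s hs
      rw [Real.norm_eq_abs, abs_of_nonneg (mul_nonneg hs0 (mul_self_nonneg _))]
      rcases le_total s ε with h | h
      · rw [max_eq_right (by linarith : s - ε ≤ 0)]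
        simpa using h
      · rw [max_eq_left (by linarith : 0 ≤ s - ε), max_eq_left h]
        have hs' : 0 < s := by linarith
        have : s * ((1 - (s - ε) / s) * (1 - (s - ε) / s)) = ε * (ε / s) := by field_simp; ring
        rw [this]
        have : ε / s ≤ 1 := (div_le_one hs').mpr h
        nlinarith
    · -- the ideal of those `d` for which `(n - Q n) g d` is in the closed span is not proper,
      -- as no character vanishes on it
      let J : Ideal B :=
        { carrier := {d | (n - ι (Q n)) * ι (g * d) ∈ freeSpan D}
          add_mem' := fun {a b} ha hb => by
            have := (freeSpan D).add_mem
              (show (n - ι (Q n)) * ι (g * a) ∈ freeSpan D from ha)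
              (show (n - ι (Q n)) * ι (g * b) ∈ freeSpan D from hb)
            rw [← mul_add, ← map_add, ← mul_add] at this
            exact this
          zero_mem' := by simp
          smul_mem' := fun c d hd => by
            have := freeSpan_mul hD hd c
            have e : (n - ι (Q n)) * ι (g * (c • d)) = (n - ι (Q n)) * ι (g * d) * ι c := by
              rw [mul_assoc, ← map_mul, smul_eq_mul]; congr 2; ring
            change (n - ι (Q n)) * ι (g * (c • d)) ∈ freeSpan D
            rw [e]; exact this }
      have hJ : J = ⊤ := by
        by_contra hJ
        obtain ⟨I, hI, hJI⟩ := J.exists_le_maximal hJ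
        have hχ : ∀ d ∈ J, I.toCharacterSpace d = 0 := fun d hd =>
          I.toCharacterSpace_apply_eq_zero_of_mem (hJI hd)
        set χ := I.toCharacterSpace with hχdef
        by_cases ht0 : χ (Q (star n * n)) = 0
        -- if `t` vanishes at `χ`, then `(ε - t)⁺` is in `J` and is nonzero at `χ`
        · set d : B := cfc (fun s : ℝ => max (ε - s) 0) t with hd
          have hdJ : d ∈ J := by
            have : g * d = 0 := by
              rw [hg, hd, ← cfc_mul _ _ t hcont.continuousOn (by fun_prop)]
              have : (fun s : ℝ => max (s - ε) 0 / max s ε * max (ε - s) 0) = fun _ => 0 := by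
                ext s
                rcases le_total s ε with h | h
                · rw [max_eq_right (by linarith : s - ε ≤ 0)]; simp
                · rw [max_eq_right (by linarith : ε - s ≤ 0)]; simp
              rw [this, cfc_const_zero]
            change (n - ι (Q n)) * ι (g * d) ∈ freeSpan D
            rw [this]; simp
          have h1 : d = algebraMap ℝ B ε - t + cfc (fun s : ℝ => max (s - ε) 0) t := by
            have : (fun s : ℝ => max (ε - s) 0) = fun s => (ε - s) + max (s - ε) 0 := by
              ext s
              rcases le_total s ε with h | h
              · rw [max_eq_right (by linarith : s - ε ≤ 0), max_eq_left (by linarith)]; ring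
              · rw [max_eq_left (by linarith : 0 ≤ s - ε), max_eq_right (by linarith)]; ring
            rw [hd, this, cfc_add t (fun s : ℝ => ε - s) _ (by fun_prop) (by fun_prop),
              cfc_sub (fun _ => ε) (fun s => s) t (by fun_prop) (by fun_prop), cfc_const ε t,
              cfc_id' ℝ t]
          have h2 : 0 ≤ χ (cfc (fun s : ℝ => max (s - ε) 0) t) := by
            let _ := CStarAlgebra.spectralOrder B
            let _ := CStarAlgebra.spectralOrderedRing B
            have : 0 ≤ cfc (fun s : ℝ => max (s - ε) 0) t :=
              cfc_nonneg fun s _ => le_max_right _ _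
            obtain ⟨p, hp⟩ := CStarAlgebra.nonneg_iff_eq_star_mul_self.mp this
            rw [hp]; exact char_pos χ p
          have h3 := hχ d hdJ
          rw [hQt] at ht0
          rw [h1, map_add, map_sub, ht0, sub_zero, Algebra.algebraMap_eq_smul_one,
            ← Complex.coe_smul, map_smul, map_one, smul_eq_mul, mul_one] at h3
          have h4 : (0 : ℂ) < ε := by exact_mod_cast hε
          exact (add_pos_of_pos_of_nonneg h4 h2).ne' h3
        · obtain ⟨d, hd, hmem⟩ := exists_local hQ hQ1 hι hD hmasa huep hn χ ht0
          refine hd (hχ d ?_)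
          have := freeSpan_mul hD hmem g
          rw [mul_assoc, ← map_mul, mul_comm d g] at this
          exact this
      have h1 : (1 : B) ∈ J := by rw [hJ]; trivial
      have h2 : (n - ι (Q n)) * ι (g * 1) ∈ freeSpan D := h1
      rwa [mul_one] at h2
  have hcl : IsClosed (freeSpan D : Set A) := Submodule.isClosed_topologicalClosure _
  rw [← SetLike.mem_coe, ← hcl.closure_eq, Metric.mem_closure_iff]
  intro δ hδ
  obtain ⟨g, hg1, hg2⟩ := main ((δ / 3) ^ 2) (by positivity)
  refine ⟨_, hg2, ?_⟩
  have h1 : ‖n - n * ι g‖ ≤ δ / 3 := le_of_sq_le_sq hg1 (by positivity)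
  have h2 : (n - ι (Q n)) - (n - ι (Q n)) * ι g = (n - n * ι g) - ι (Q (n - n * ι g)) := by
    rw [map_sub, condExp_mul_right hQ hQ1, map_sub, map_mul, sub_mul]; abel
  rw [dist_eq_norm, h2]
  have h3 : ‖ι (Q (n - n * ι g))‖ ≤ ‖n - n * ι g‖ :=
    (NonUnitalStarAlgHom.norm_apply_le ι _).trans
      ((Q.le_of_opNorm_le hQ1 _).trans (by rw [one_mul]))
  have h4 := norm_sub_le (n - n * ι g) (ι (Q (n - n * ι g)))
  linarith

end Backward

end Core

/-! ### The unit of `A` belongs to `D` -/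

section Unit

variable {A : Type*} [CStarAlgebra A] {D : NonUnitalStarSubalgebra ℂ A}

/-- A faithful conditional expectation forces `1 ∈ D`. The element `q = P 1` is compared with an
approximate unit `e` of `D`: both `q` and `2 e - q = P (2 e - 1)` are contractions, which forces
`q - e` to be small wherever `e` is close to `1`. Hence `q` is a unit for `D`, and `1 - q` is a
projection killed by `P`. -/
lemma one_mem_of_condExp [hcl : IsClosed (D : Set A)] (hDabelian : ∀ x ∈ D, ∀ y ∈ D, x * y = y * x)
    {P : A →L[ℂ] A} (hP : IsCondExpectation D P) (hf : IsFaithful P) : (1 : A) ∈ D := by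
  obtain ⟨hPD, hPid, hP1⟩ := hP
  let _ := CStarAlgebra.spectralOrder A
  let _ := CStarAlgebra.spectralOrderedRing A
  have hPle : ∀ a, ‖a‖ ≤ 1 → ‖P a‖ ≤ 1 := fun a ha => by
    simpa using P.le_of_opNorm_le_of_le hP1 ha
  have hle : ∀ x : A, ‖x‖ ≤ 1 → star x * x ≤ 1 := fun x hx => by
    rw [← CStarAlgebra.norm_le_one_iff_of_nonneg _ (star_mul_self_nonneg x),
      CStarRing.norm_star_mul_self]
    nlinarith [norm_nonneg x]
  set q := P 1 with hq
  have hone : ‖(1 : A)‖ ≤ 1 := by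
    nontriviality A
    exact CStarRing.norm_one.le
  have hq1 : ‖q‖ ≤ 1 := hPle 1 hone
  -- the estimate expressing that `q - e` is small where `e` is close to `1`
  have key : ∀ y ∈ D, ‖star y * y‖ ≤ 1 → ∀ d : A,
      ‖(q - star y * y) * d‖ ^ 2 ≤ ‖d‖ * ‖d - (star y * y) * ((star y * y) * d)‖ := by
    intro y hy hy1 d
    have hyn : ‖y‖ ≤ 1 := by
      rw [CStarRing.norm_star_mul_self] at hy1
      nlinarith [norm_nonneg y]
    have hesq : star y * (star y * y) * y ≤ star y * 1 * y :=
      star_left_conjugate_le_conjugate (hle y hyn) y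
    set e := star y * y with he
    have hes : star e = e := by rw [he]; simp
    have heD : e ∈ D := mul_mem (star_mem hy) hy
    have hee : e * e ≤ e := by
      have h1 : star y * e * y = e * e := by
        rw [hDabelian _ (star_mem hy) _ heD, mul_assoc, ← he]
      rwa [h1, mul_one, ← he] at hesq
    have h2e : ‖(2 : ℂ) • e - 1‖ ≤ 1 := by
      have h1 : star ((2 : ℂ) • e - 1) * ((2 : ℂ) • e - 1) ≤ 1 := by
        have : star ((2 : ℂ) • e - 1) * ((2 : ℂ) • e - 1) = 1 - (4 : ℝ) • (e - e * e) := by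
          have h4 : (4 : ℝ) • (e - e * e) = (4 : ℂ) • (e - e * e) := by
            rw [← Complex.coe_smul]; norm_num
          rw [h4, star_sub, star_smul, hes, star_one]
          simp only [sub_mul, mul_sub, smul_mul_assoc, mul_smul_comm, one_mul, mul_one]
          simp only [RCLike.star_def, map_ofNat]
          module
        rw [this, sub_le_self_iff]
        exact smul_nonneg (by norm_num) (sub_nonneg.mpr hee)
      rw [← CStarAlgebra.norm_le_one_iff_of_nonneg _ (star_mul_self_nonneg _),
        CStarRing.norm_star_mul_self] at h1
      nlinarith [norm_nonneg ((2 : ℂ) • e - 1)]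
    have h2 : ‖(2 : ℂ) • e - q‖ ≤ 1 := by
      have := hPle _ h2e
      rwa [map_sub, map_smul, hPid e heD, ← hq] at this
    -- parallelogram identity for `q = e + f` and `2 e - q = e - f`
    have h3 : star (q - e) * (q - e) ≤ 1 - e * e := by
      have h4 := add_le_add (hle _ hq1) (hle _ h2)
      have h5 : star q * q + star ((2 : ℂ) • e - q) * ((2 : ℂ) • e - q)
          = (2 : ℝ) • (e * e + star (q - e) * (q - e)) := by
        have h6 : ∀ x : A, (2 : ℝ) • x = (2 : ℂ) • x := fun x => by
          rw [← Complex.coe_smul]; norm_num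
        rw [h6, star_sub, star_smul, star_sub, hes]
        simp only [sub_mul, mul_sub, smul_mul_assoc, mul_smul_comm]
        simp only [RCLike.star_def, map_ofNat]
        module
      rw [h5, ← two_smul ℝ (1 : A)] at h4
      have h7 := (smul_le_smul_iff_of_pos_left (by norm_num : (0 : ℝ) < 2)).mp h4
      exact le_sub_iff_add_le'.mpr h7
    have h4 := star_left_conjugate_le_conjugate h3 d
    have h5 : star d * (star (q - e) * (q - e)) * d = star ((q - e) * d) * ((q - e) * d) := by
      rw [star_mul]; simp only [mul_assoc]
    have h6 : star d * (1 - e * e) * d = star d * (d - e * (e * d)) := by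
      simp only [mul_assoc, sub_mul, one_mul]
    rw [h5, h6] at h4
    have h7 := CStarAlgebra.norm_le_norm_of_nonneg_of_le (star_mul_self_nonneg _) h4
    rw [CStarRing.norm_star_mul_self] at h7
    rw [sq]
    refine h7.trans ((norm_mul_le _ _).trans ?_)
    rw [norm_star]
  -- `q` is a unit for `D`, by passing to the limit along an approximate unit of `D`
  have hunit : ∀ d ∈ D, q * d = d := by
    intro d hd
    let _ := CStarAlgebra.spectralOrder D
    let _ := CStarAlgebra.spectralOrderedRing D
    have hau := CStarAlgebra.increasingApproximateUnit D
    set l := CStarAlgebra.approximateUnit D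
    have := hau.neBot
    have t1 : Tendsto (fun x : D => (x : A) * d) l (𝓝 d) :=
      (continuous_subtype_val.tendsto _).comp (hau.tendsto_mul_right ⟨d, hd⟩)
    have t2 : Tendsto (fun x : D => ‖d - (x : A) * ((x : A) * d)‖) l (𝓝 0) := by
      have b : ∀ᶠ x : D in l, ‖d - (x : A) * ((x : A) * d)‖ ≤ 2 * ‖d - (x : A) * d‖ := by
        filter_upwards [hau.eventually_norm] with x hx
        have hx' : ‖(x : A)‖ ≤ 1 := hx
        have e : d - (x : A) * ((x : A) * d) = (d - x * d) + x * (d - x * d) := by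
          rw [mul_sub]; abel
        have h1 := norm_add_le (d - x * d) ((x : A) * (d - x * d))
        have h2 := norm_mul_le (x : A) (d - x * d)
        rw [e]
        nlinarith [norm_nonneg (d - (x : A) * d)]
      refine squeeze_zero' (Eventually.of_forall fun _ => norm_nonneg _) b ?_
      have := ((tendsto_const_nhds (x := d)).sub t1).norm.const_mul 2
      simpa using this
    have t3 : Tendsto (fun x : D => ‖(q - (x : A)) * d‖ ^ 2) l (𝓝 0) := by
      refine squeeze_zero' (Eventually.of_forall fun _ => by positivity) (g :=
        fun x : D => ‖d‖ * ‖d - (x : A) * ((x : A) * d)‖) ?_ (by simpa using t2.const_mul ‖d‖)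
      filter_upwards [hau.eventually_norm, hau.eventually_nonneg] with x hx hx0
      obtain ⟨y, hy⟩ := CStarAlgebra.nonneg_iff_eq_star_mul_self.mp hx0
      have hxy : (x : A) = star (y : A) * (y : A) := congrArg Subtype.val hy
      have hx' : ‖(x : A)‖ ≤ 1 := hx
      rw [hxy] at hx' ⊢
      exact key y y.2 hx' d
    have t4 : Tendsto (fun x : D => ‖(q - (x : A)) * d‖ ^ 2) l (𝓝 (‖q * d - d‖ ^ 2)) := by
      simp only [sub_mul]
      exact ((tendsto_const_nhds.sub t1).norm).pow 2
    have := tendsto_nhds_unique t4 t3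
    rw [sq_eq_zero_iff, norm_eq_zero, sub_eq_zero] at this
    exact this
  have hqD : q ∈ D := hPD 1
  have h1 : star q = q := by
    have := hunit (star q) (star_mem hqD)
    have h2 := congrArg star this
    rw [star_mul, star_star] at h2
    exact this.symm.trans h2
  have h2 : q * q = q := hunit q hqD
  have h3 : 1 - q = 0 := by
    apply hf
    have : star (1 - q) * (1 - q) = 1 - q := by
      rw [star_sub, star_one, h1, sub_mul, mul_sub, mul_sub, h2]; simp
    rw [this, map_sub, hPid q hqD, ← hq, sub_self]
  rw [sub_eq_zero.mp h3]
  exact hqD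

end Unit

/-! ### `D` as a unital commutative C*-algebra, and the two implications -/

section Unital

variable {A : Type*} [CStarAlgebra A]

/-- The C*-algebra structure of `D`, with the unit of `A` and commutativity added; the norm, the
star and the module structure are unchanged. -/
@[reducible] noncomputable def commCStar (D : NonUnitalStarSubalgebra ℂ A)
    [hcl : IsClosed (D : Set A)] (h1 : (1 : A) ∈ D)
    (hDabelian : ∀ x ∈ D, ∀ y ∈ D, x * y = y * x) : CommCStarAlgebra D :=
  let R : NormedCommRing D :=
    { (inferInstance : NonUnitalNormedRing D) with
      one := ⟨1, h1⟩
      one_mul := fun a => Subtype.ext (one_mul (a : A))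
      mul_one := fun a => Subtype.ext (mul_one (a : A))
      mul_comm := fun a b => Subtype.ext (hDabelian a a.2 b b.2) }
  let S : StarRing D := inferInstance
  let Al : Algebra ℂ D := Algebra.ofModule (fun r x y => Subtype.ext (smul_mul_assoc r (x : A) y))
    (fun r x y => Subtype.ext (mul_smul_comm r (x : A) y))
  { R, S, Al with
    complete := hcl.completeSpace_coe.complete
    norm_mul_self_le := fun x => CStarRing.norm_star_mul_self (x := (x : A)) |>.symm.le
    norm_smul_le := fun r x => norm_smul_le r (x : A)
    star_smul := fun r x => Subtype.ext (star_smul r (x : A)) }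

lemma isNormalizer_of_mem {D : NonUnitalStarSubalgebra ℂ A} {x : A} (hx : x ∈ D) :
    IsNormalizer D x := fun _ hd =>
  ⟨mul_mem (mul_mem hx hd) (star_mem hx), mul_mem (mul_mem (star_mem hx) hd) hx⟩

variable {D : NonUnitalStarSubalgebra ℂ A} [IsClosed (D : Set A)]

/-- The unital inclusion of `D` into `A`. -/
noncomputable def incl (h1 : (1 : A) ∈ D) (hDabelian : ∀ x ∈ D, ∀ y ∈ D, x * y = y * x) :
    letI := commCStar D h1 hDabelian
    D →⋆ₐ[ℂ] A :=
  letI := commCStar D h1 hDabelian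
  { toFun := Subtype.val
    map_one' := rfl
    map_mul' := fun _ _ => rfl
    map_zero' := rfl
    map_add' := fun _ _ => rfl
    commutes' := fun r => by
      rw [Algebra.algebraMap_eq_smul_one, Algebra.algebraMap_eq_smul_one]; rfl
    map_star' := fun _ => rfl }

/-- A conditional expectation, viewed as a map with values in `D`. -/
noncomputable def restrictExp {P : A →L[ℂ] A} (hP : IsCondExpectation D P) : A →L[ℂ] D :=
  LinearMap.mkContinuous
    { toFun := fun a => ⟨P a, hP.1 a⟩
      map_add' := fun a b => Subtype.ext (map_add P a b)
      map_smul' := fun r a => Subtype.ext (map_smul P r a) } 1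
    fun a => P.le_of_opNorm_le hP.2.2 a

lemma restrictExp_norm_le {P : A →L[ℂ] A} (hP : IsCondExpectation D P) : ‖restrictExp hP‖ ≤ 1 :=
  LinearMap.mkContinuous_norm_le _ zero_le_one _

lemma coe_restrictExp {P : A →L[ℂ] A} (hP : IsCondExpectation D P) (a : A) :
    (restrictExp hP a : A) = P a := rfl

theorem cartan_of_kumjian (hDabelian : ∀ x ∈ D, ∀ y ∈ D, x * y = y * x)
    (hK : KumjianConditions D) : IsCartanInclusion D ∧ UniquePureStateExtension D := by
  obtain ⟨P, hP, hfaith, hker⟩ := hK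
  have h1 := one_mem_of_condExp hDabelian hP hfaith
  let _ := commCStar D h1 hDabelian
  let ι : D →⋆ₐ[ℂ] A := incl h1 hDabelian
  let Q : A →L[ℂ] D := restrictExp hP
  have hQ : ∀ b, Q (ι b) = b := fun b => Subtype.ext (hP.2.1 b b.2)
  have hQ1 : ‖Q‖ ≤ 1 := restrictExp_norm_le hP
  have hD : ∀ a, a ∈ D ↔ ∃ b, ι b = a := fun a =>
    ⟨fun h => ⟨⟨a, h⟩, rfl⟩, by rintro ⟨b, rfl⟩; exact b.2⟩
  have hQf : ∀ a, Q (star a * a) = 0 → a = 0 := fun a ha => hfaith a (congrArg Subtype.val ha)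
  have hQker : {a | Q a = 0} ⊆
      closure (↑(Submodule.span ℂ {n : A | IsFreeNormalizer D n}) : Set A) := by
    intro a ha
    rw [hker]
    exact congrArg Subtype.val ha
  refine ⟨⟨?_, ?_, P, hP, hfaith⟩, ?_⟩
  · intro a
    have hN : P a ∈ (Submodule.span ℂ {n : A | IsNormalizer D n}).topologicalClosure :=
      Submodule.le_topologicalClosure _
        (Submodule.subset_span (isNormalizer_of_mem (hP.1 a)))
    have hF : a - P a ∈ (Submodule.span ℂ {n : A | IsNormalizer D n}).topologicalClosure := by
      have h2 : a - P a ∈ closure (↑(Submodule.span ℂ {n : A | IsFreeNormalizer D n}) : Set A) := by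
        rw [hker]
        change P (a - P a) = 0
        rw [map_sub, hP.2.1 _ (hP.1 a), sub_self]
      exact closure_mono (Submodule.span_mono fun n hn => hn.1) h2
    have := add_mem hN hF
    rwa [add_sub_cancel] at this
  · ext a
    constructor
    · intro ha
      have := masa_of_kumjian hQ hQ1 hQf hD hQker (c := a) fun b => ha b b.2
      exact (hD a).mpr ⟨_, this⟩
    · exact fun ha d hd => hDabelian a ha d hd
  · intro σ hσ
    obtain ⟨χ, hχ⟩ := exists_char_of_isPureState hσ
    refine ⟨⟨expState Q χ, expState_isState hQ hQ1 χ, fun x => ?_⟩, fun ρ₁ ρ₂ h₁ h₂ e₁ e₂ => ?_⟩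
    · exact (expState_ext hQ χ x).trans (hχ x)
    · rw [unique_ext_of_kumjian hQ hD hQker h₁.2 (χ := χ) fun b => (e₁ b).trans (hχ b).symm,
        unique_ext_of_kumjian hQ hD hQker h₂.2 (χ := χ) fun b => (e₂ b).trans (hχ b).symm]

theorem kumjian_of_cartan (hDabelian : ∀ x ∈ D, ∀ y ∈ D, x * y = y * x)
    (hC : IsCartanInclusion D) (hU : UniquePureStateExtension D) : KumjianConditions D := by
  obtain ⟨hreg, hmasa, P, hP, hfaith⟩ := hC
  have h1 : (1 : A) ∈ D := by
    have : (1 : A) ∈ {a : A | ∀ d ∈ D, a * d = d * a} := fun d _ => by rw [one_mul, mul_one]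
    rw [hmasa] at this
    exact this
  let _ := commCStar D h1 hDabelian
  let ι : D →⋆ₐ[ℂ] A := incl h1 hDabelian
  let Q : A →L[ℂ] D := restrictExp hP
  have hQ : ∀ b, Q (ι b) = b := fun b => Subtype.ext (hP.2.1 b b.2)
  have hQ1 : ‖Q‖ ≤ 1 := restrictExp_norm_le hP
  have hι : Function.Injective ι := Subtype.val_injective
  have hD : ∀ a, a ∈ D ↔ ∃ b, ι b = a := fun a =>
    ⟨fun h => ⟨⟨a, h⟩, rfl⟩, by rintro ⟨b, rfl⟩; exact b.2⟩
  have hmasa' : ∀ c : A, (∀ b, c * ι b = ι b * c) → ι (Q c) = c := by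
    intro c hc
    have : c ∈ {a : A | ∀ d ∈ D, a * d = d * a} := fun d hd => hc ⟨d, hd⟩
    rw [hmasa] at this
    exact hP.2.1 c this
  have huep : ∀ χ : WeakDual.characterSpace ℂ D, ∀ ρ : A →L[ℂ] ℂ, IsState ρ →
      (∀ b, ρ (ι b) = χ b) → ρ = expState Q χ := by
    intro χ ρ hρ hρχ
    let σ : D →L[ℂ] ℂ := ρ.comp D.toNonUnitalSubalgebra.toSubmodule.subtypeL
    have hσ : ∀ b, χ b = σ b := fun b => (hρχ b).symm
    exact (hU σ (isPureState_of_char χ hσ)).2 ρ (expState Q χ) hρ (expState_isState hQ hQ1 χ)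
      (fun _ => rfl) fun x => (expState_ext hQ χ x).trans (hσ x)
  refine ⟨P, hP, hfaith, subset_antisymm ?_ ?_⟩
  · refine closure_minimal ?_ (isClosed_eq P.continuous continuous_const)
    have : Submodule.span ℂ {n : A | IsFreeNormalizer D n} ≤ LinearMap.ker P.toLinearMap :=
      Submodule.span_le.mpr fun n hn => congrArg Subtype.val (condExp_free hQ hQ1 hD hn)
    exact fun n hn => this hn
  · intro a ha
    have hclosed : IsClosed {x : A | x - P x ∈ freeSpan D} :=
      (Submodule.isClosed_topologicalClosure _).preimage (continuous_id.sub P.continuous)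
    have hsub : (↑(Submodule.span ℂ {n : A | IsNormalizer D n}) : Set A) ⊆
        {x : A | x - P x ∈ freeSpan D} := by
      have : Submodule.span ℂ {n : A | IsNormalizer D n} ≤
          (freeSpan D).comap (LinearMap.id - P.toLinearMap) :=
        Submodule.span_le.mpr fun n hn => sub_condExp_mem hQ hQ1 hι hD hmasa' huep hn
      exact fun n hn => this hn
    have h2 : a - P a ∈ freeSpan D := closure_minimal hsub hclosed (hreg a)
    have h3 : P a = 0 := ha
    rw [h3, sub_zero] at h2
    exact h2

end Unital

end CartanPaper

/-- Let `(A, D)` be an inclusion of C*-algebras with `A` unital.  Then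
`(A, D)` satisfies Kumjian's conditions if and only if `(A, D)` is a Cartan inclusion and
every pure state on `D` extends uniquely to a state on `A`. -/
theorem stmt_12 {A : Type*} [CStarAlgebra A]
    (D : NonUnitalStarSubalgebra ℂ A) [IsClosed (D : Set A)]
    (hDabelian : ∀ x ∈ D, ∀ y ∈ D, x * y = y * x) :
    KumjianConditions D ↔ IsCartanInclusion D ∧ UniquePureStateExtension D := by
  exact ⟨cartan_of_kumjian hDabelian, fun h => kumjian_of_cartan hDabelian h.1 h.2⟩
end

section
/- Let (A,D) be an inclusion of C*-algebras with A non-unital. The following are equivalent: (1) (A,D) satisfies Kumjian's conditions; (2) (A,D) is a Cartan inclusion such that every pure state of D has a unique extension to a state on A; (3) (A,D) is a Cartan inclusion such that every pure state of D has a unique extension to a state on A and no pure state of A annihilates D; (4) (Ã, D̃) is a Cartan inclusion such that every pure state of D̃ extends uniquely to a state on Ã; (5) (Ã, D̃) satisfies Kumjian's conditions. -/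
/-!
The implications run (1) ⇒ (2) ⇒ (3) ⇒ (2) ⇒ (4) ⇒ (5) ⇒ (1).

Throughout, `D` is studied through its characters, which are exactly its pure states, and `A`
through the functionals `χ ∘ P` with `χ` a character of `D`. Such a functional is positive and
`D`-modular, so `P` itself is a `D`-bimodule map.

(1) ⇒ (2): if `n` is a free normalizer, `(n⋆ n) (n n⋆) = 0`, so a state restricting to a character
of `D` kills `n` by Cauchy–Schwarz (`apply_free_eq_zero`). By density it kills `ker P`, so it is
determined by its restriction to `D`. Maximality of `D` is `KumjianConditions.isMasa`. It yields
`n⋆ n ∈ D` for every normalizer (`star_mul_self_mem`), since `n n⋆` always commutes with `D`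
(`mul_star_self_commute`).

(2) ⇒ (3): by Cauchy–Schwarz and regularity, a state vanishing on `D` is zero
(`eq_zero_of_vanishing`). (2) ⇒ (4): `P` extends to `λ + a ↦ λ + P a`, and uniqueness of extensions
transfers, the character of `D̃` vanishing on `D` being treated by the preceding remark.

(4) ⇒ (5) is proved for a unital algebra `B` with `1 ∈ D` (`kumjianConditions_of_unital`). A
normalizer `n` induces a partial homeomorphism of the spectrum of `D`. If it fixes a character `χ`,
uniqueness of extensions, applied to the positive functionals `ρ ((1 + c n)⋆ · (1 + c n))` with
`ρ = χ ∘ P`, gives `ρ (n⋆ n) = |ρ n|²` (`CharExt.of_fixed`). Hence `n⋆ n = |P n|²` on the support of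
`P n`, and `n - P n` is again a normalizer, now in `ker P` (`sub_condExp_isNormalizer`). For a
normalizer in `ker P` the partial homeomorphism has no fixed points, so near each point of its
domain `n` can be multiplied by an element of `D` to become free (`exists_free_cutdown`). A
compactness argument, phrased with an ideal of `D` that lies in the kernel of no character, then puts
`n` in the closed span of the free normalizers (`mem_free_closure`). Regularity finishes the proof.

(5) ⇒ (1): a free normalizer of `D̃` has square zero, so it lies in `A`
(`kumjianConditions_of_Dtilde`).
-/

open scoped ComplexOrder
open Filter Topology

open CartanPaper

namespace CartanPaper

variable {A : Type*} [NonUnitalCStarAlgebra A]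

/-- The unitization `D̃ = D + ℂ 1` of `D` inside the unitization `Ã = A ⊕ ℂ 1` of `A`. -/
def Dtilde (D : NonUnitalStarSubalgebra ℂ A) :
    NonUnitalStarSubalgebra ℂ (Unitization ℂ A) where
  carrier := {x | x.snd ∈ D}
  add_mem' {a b} ha hb := by
    simp only [Set.mem_setOf_eq, Unitization.snd_add] at *
    exact add_mem ha hb
  zero_mem' := by
    simp only [Set.mem_setOf_eq, Unitization.snd_zero]
    exact zero_mem D
  mul_mem' {a b} ha hb := by
    simp only [Set.mem_setOf_eq, Unitization.snd_mul] at *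
    exact add_mem (add_mem (SMulMemClass.smul_mem _ hb) (SMulMemClass.smul_mem _ ha))
      (mul_mem ha hb)
  smul_mem' c a ha := by
    simp only [Set.mem_setOf_eq, Unitization.snd_smul] at *
    exact SMulMemClass.smul_mem c ha
  star_mem' {a} ha := by
    simp only [Set.mem_setOf_eq, Unitization.snd_star] at *
    exact star_mem ha

/-- `D̃` is closed in `Ã` whenever `D` is closed in `A`. -/
instance DtildeClosed (D : NonUnitalStarSubalgebra ℂ A) [hD : IsClosed (D : Set A)] :
    IsClosed ((Dtilde D : Set (Unitization ℂ A))) := by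
  have hcont : Continuous (fun x : Unitization ℂ A => x.snd) :=
    continuous_snd.comp (Unitization.uniformEquivProd (𝕜 := ℂ) (A := A)).continuous
  exact hD.preimage hcont

end CartanPaper

namespace CartanProof

/-! ### Positive functionals -/

/-- A positive linear functional on a `C⋆`-algebra. Continuity is not part of the definition. -/
def IsPos {A : Type*} [NonUnitalCStarAlgebra A] (f : A →ₗ[ℂ] ℂ) : Prop :=
  ∀ a : A, 0 ≤ f (star a * a)

section Functionals

variable {A : Type*} [NonUnitalCStarAlgebra A]

lemma IsPos.conj_symm {f : A →ₗ[ℂ] ℂ} (hf : IsPos f) (x y : A) :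
    (starRingEnd ℂ) (f (star y * x)) = f (star x * y) := by
  have h1 := (Complex.nonneg_iff.mp (hf (x + y))).2
  have h2 := (Complex.nonneg_iff.mp (hf (x + Complex.I • y))).2
  have hx := (Complex.nonneg_iff.mp (hf x)).2
  have hy := (Complex.nonneg_iff.mp (hf y)).2
  simp only [star_add, star_smul, add_mul, mul_add, map_add, smul_mul_assoc, mul_smul_comm,
    map_smul, smul_eq_mul, Complex.add_im, Complex.mul_im, Complex.star_def, Complex.conj_I,
    Complex.neg_re, Complex.neg_im, Complex.I_re, Complex.I_im, Complex.mul_re] at h1 h2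
  apply Complex.ext
  · simp only [Complex.conj_re]; linarith
  · simp only [Complex.conj_im]; linarith

/-- The Cauchy–Schwarz inequality for positive functionals. -/
lemma IsPos.cauchy_schwarz {f : A →ₗ[ℂ] ℂ} (hf : IsPos f) (x y : A) :
    ‖f (star x * y)‖ ^ 2 ≤ (f (star x * x)).re * (f (star y * y)).re := by
  let core : PreInnerProductSpace.Core ℂ A :=
    { inner := fun x y => f (star x * y)
      conj_inner_symm := fun x y => hf.conj_symm x y
      re_inner_nonneg := fun x => (Complex.nonneg_iff.mp (hf x)).1
      add_left := fun x y z => by simp [add_mul]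
      smul_left := fun x y r => by
        rw [star_smul, smul_mul_assoc, map_smul]; rfl }
  have h := InnerProductSpace.Core.inner_mul_inner_self_le (𝕜 := ℂ) (F := A) x y
  have h2 : ‖f (star y * x)‖ = ‖f (star x * y)‖ := by
    rw [← hf.conj_symm x y, RCLike.norm_conj]
  have h3 : ‖f (star x * y)‖ * ‖f (star y * x)‖
      ≤ (f (star x * x)).re * (f (star y * y)).re := h
  rw [h2] at h3
  rw [sq]; exact h3

lemma IsPos.eq_zero_right {f : A →ₗ[ℂ] ℂ} (hf : IsPos f) {y : A} (hy : f (star y * y) = 0)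
    (a : A) : f (a * y) = 0 := by
  have h := hf.cauchy_schwarz (star a) y
  rw [star_star, hy, Complex.zero_re, mul_zero] at h
  have : ‖f (a * y)‖ = 0 := by nlinarith [norm_nonneg (f (a * y))]
  simpa using this

lemma IsPos.eq_zero_left {f : A →ₗ[ℂ] ℂ} (hf : IsPos f) {y : A} (hy : f (star y * y) = 0)
    (a : A) : f (star y * a) = 0 := by
  rw [← hf.conj_symm, hf.eq_zero_right hy, map_zero]

lemma IsPos.apply_nonneg {f : A →ₗ[ℂ] ℂ} (hf : IsPos f) [PartialOrder A] [StarOrderedRing A]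
    {a : A} (ha : 0 ≤ a) : 0 ≤ f a := by
  obtain ⟨x, rfl⟩ := CStarAlgebra.nonneg_iff_eq_star_mul_self.mp ha
  exact hf x

lemma IsPos.smul {f : A →ₗ[ℂ] ℂ} (hf : IsPos f) {c : ℂ} (hc : 0 ≤ c) : IsPos (c • f) :=
  fun a => mul_nonneg hc (hf a)

/-- Kadison's inequality for contractive positive functionals: Cauchy–Schwarz against an approximate
unit. -/
lemma IsPos.norm_sq_le {ρ : A →L[ℂ] ℂ} (hρ : IsPos (ρ : A →ₗ[ℂ] ℂ)) (h1 : ‖ρ‖ ≤ 1) (a : A) :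
    ‖ρ a‖ ^ 2 ≤ (ρ (star a * a)).re := by
  let := CStarAlgebra.spectralOrder A
  have := CStarAlgebra.spectralOrderedRing A
  have hl := CStarAlgebra.increasingApproximateUnit A
  have := hl.neBot
  have ht : Tendsto (fun e : A => ‖ρ (e * a)‖ ^ 2) (CStarAlgebra.approximateUnit A)
      (𝓝 (‖ρ a‖ ^ 2)) :=
    ((ρ.continuous.tendsto a).comp (hl.tendsto_mul_right a)).norm.pow 2
  refine le_of_tendsto ht ?_
  filter_upwards [hl.eventually_norm] with e he
  have h := hρ.cauchy_schwarz (star e) a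
  rw [star_star] at h
  have h2 : (ρ (e * star e)).re ≤ 1 := by
    refine (Complex.re_le_norm _).trans ((ρ.le_opNorm _).trans ?_)
    have : ‖e * star e‖ ≤ 1 := (norm_mul_le _ _).trans (by rw [norm_star]; nlinarith [norm_nonneg e])
    nlinarith [norm_nonneg ρ, norm_nonneg (e * star e)]
  have h3 : 0 ≤ (ρ (star a * a)).re := (Complex.nonneg_iff.mp (hρ a)).1
  refine h.trans ?_
  change (ρ (e * star e)).re * (ρ (star a * a)).re ≤ _
  nlinarith

/-- The extension `λ + a ↦ λ + ρ a` of a functional to the unitization. -/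
noncomputable def ext (ρ : A →ₗ[ℂ] ℂ) : Unitization ℂ A →ₗ[ℂ] ℂ where
  toFun x := x.fst + ρ x.snd
  map_add' x y := by simp; ring
  map_smul' c x := by simp; ring

@[simp] lemma ext_inr (ρ : A →ₗ[ℂ] ℂ) (a : A) : ext ρ (a : Unitization ℂ A) = ρ a := by
  simp [ext]

@[simp] lemma ext_one (ρ : A →ₗ[ℂ] ℂ) : ext ρ 1 = 1 := by
  simp [ext]

/-- The unital extension of a positive contractive functional is positive. -/
lemma IsPos.ext {ρ : A →L[ℂ] ℂ} (hρ : IsPos (ρ : A →ₗ[ℂ] ℂ)) (h1 : ‖ρ‖ ≤ 1) :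
    IsPos (ext (ρ : A →ₗ[ℂ] ℂ)) := by
  intro x
  have hs : ρ (star x.snd) = (starRingEnd ℂ) (ρ x.snd) := by
    -- hermitian symmetry passes to the limit along an approximate unit
    let := CStarAlgebra.spectralOrder A
    have := CStarAlgebra.spectralOrderedRing A
    have hl := CStarAlgebra.increasingApproximateUnit A
    have := hl.neBot
    have t1 : Tendsto (fun e : A => ρ (star x.snd * e)) (CStarAlgebra.approximateUnit A)
        (𝓝 (ρ (star x.snd))) :=
      (ρ.continuous.tendsto _).comp (hl.tendsto_mul_left _)
    have t2 : Tendsto (fun e : A => (starRingEnd ℂ) (ρ (e * x.snd)))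
        (CStarAlgebra.approximateUnit A) (𝓝 ((starRingEnd ℂ) (ρ x.snd))) :=
      (Complex.continuous_conj.tendsto _).comp
        ((ρ.continuous.tendsto _).comp (hl.tendsto_mul_right _))
    refine tendsto_nhds_unique t1 (t2.congr' ?_)
    filter_upwards [hl.eventually_star_eq] with e he
    have := hρ.conj_symm x.snd e
    rw [he] at this
    exact this
  have h2 := hρ.norm_sq_le h1 x.snd
  have h3 := Complex.nonneg_iff.mp (hρ x.snd)
  have he : CartanProof.ext (ρ : A →ₗ[ℂ] ℂ) (star x * x) = (starRingEnd ℂ) x.fst * x.fst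
      + ((starRingEnd ℂ) x.fst * ρ x.snd + x.fst * (starRingEnd ℂ) (ρ x.snd))
      + ρ (star x.snd * x.snd) := by
    simp [CartanProof.ext, hs]; ring
  rw [he, Complex.nonneg_iff]
  rw [← Complex.normSq_eq_norm_sq, Complex.normSq_apply] at h2
  simp only [ContinuousLinearMap.coe_coe] at h3
  constructor
  · simp only [Complex.add_re, Complex.mul_re, Complex.conj_re, Complex.conj_im]
    nlinarith [sq_nonneg (x.fst.re + (ρ x.snd).re), sq_nonneg (x.fst.im + (ρ x.snd).im)]
  · simp only [Complex.add_im, Complex.mul_im, Complex.conj_re, Complex.conj_im]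
    rw [← h3.2]; ring

lemma IsPos.map_star {ρ : A →L[ℂ] ℂ} (hρ : IsPos (ρ : A →ₗ[ℂ] ℂ)) (h1 : ‖ρ‖ ≤ 1) (a : A) :
    ρ (star a) = (starRingEnd ℂ) (ρ a) := by
  have := (hρ.ext h1).conj_symm (a : Unitization ℂ A) 1
  rw [star_one, one_mul, mul_one, ← Unitization.inr_star, ext_inr, ext_inr] at this
  exact this.symm

end Functionals

section Unital

variable {B : Type*} [CStarAlgebra B]

lemma IsPos.norm_apply_le {f : B →ₗ[ℂ] ℂ} (hf : IsPos f) (x : B) :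
    ‖f x‖ ≤ (f 1).re * ‖x‖ := by
  let := CStarAlgebra.spectralOrder B
  have := CStarAlgebra.spectralOrderedRing B
  have h := hf.cauchy_schwarz 1 x
  have h0 : 0 ≤ (f 1).re := by
    have := (Complex.nonneg_iff.mp (hf 1)).1
    simpa using this
  have h1 : (f (star x * x)).re ≤ ‖x‖ ^ 2 * (f 1).re := by
    have h2 : 0 ≤ algebraMap ℝ B (‖x‖ ^ 2) - star x * x :=
      sub_nonneg.mpr CStarAlgebra.star_mul_le_algebraMap_norm_sq
    have h3 := (Complex.nonneg_iff.mp (hf.apply_nonneg h2)).1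
    rw [Algebra.algebraMap_eq_smul_one, map_sub, ← Complex.coe_smul, map_smul, smul_eq_mul,
      Complex.sub_re, Complex.re_ofReal_mul] at h3
    linarith
  simp only [star_one, one_mul] at h
  refine abs_le_of_sq_le_sq' ?_ (by positivity) |>.2
  nlinarith

/-- A unital contractive functional is positive. -/
lemma isPos_of_norm_le {f : B →L[ℂ] ℂ} (hf : ‖f‖ ≤ 1) (h1 : f 1 = 1) :
    IsPos (f : B →ₗ[ℂ] ℂ) := by
  let := CStarAlgebra.spectralOrder B
  have := CStarAlgebra.spectralOrderedRing B
  have bd : ∀ x, ‖f x‖ ≤ ‖x‖ := fun x =>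
    (f.le_opNorm x).trans (by nlinarith [norm_nonneg x])
  intro a
  set h := star a * a with hh
  have hsa : IsSelfAdjoint h := IsSelfAdjoint.star_mul_self a
  change 0 ≤ f h
  have him : ∀ t : ℝ, (f h).re ^ 2 + ((f h).im + t) ^ 2 ≤ ‖h‖ ^ 2 + t ^ 2 := by
    intro t
    have e1 : ‖f (h + (t * Complex.I) • 1)‖ ^ 2 ≤ ‖h + ((t * Complex.I : ℂ)) • (1 : B)‖ ^ 2 := by
      gcongr; exact bd _
    have e2 : ‖f (h + (t * Complex.I) • 1)‖ ^ 2 = (f h).re ^ 2 + ((f h).im + t) ^ 2 := by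
      rw [map_add, map_smul, h1, ← Complex.normSq_eq_norm_sq, Complex.normSq_apply]
      simp; ring
    have e3 : ‖h + ((t * Complex.I : ℂ)) • (1 : B)‖ ^ 2 ≤ ‖h‖ ^ 2 + t ^ 2 := by
      rw [sq, ← CStarRing.norm_star_mul_self]
      have : star (h + ((t * Complex.I : ℂ)) • (1 : B)) * (h + ((t * Complex.I : ℂ)) • (1 : B))
          = h * h + ((t ^ 2 : ℝ) : ℂ) • (1 : B) := by
        simp only [star_add, star_smul, hsa.star_eq, star_one, add_mul, mul_add, smul_mul_assoc,
          mul_smul_comm, one_mul, mul_one]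
        have c1 : (star ((t : ℂ) * Complex.I)) = -((t : ℂ) * Complex.I) := by simp
        have c2 : -((t : ℂ) * Complex.I) * ((t : ℂ) * Complex.I) = ((t ^ 2 : ℝ) : ℂ) := by
          push_cast; linear_combination (-(t : ℂ) ^ 2) * Complex.I_sq
        rw [c1, ← c2]; module
      rw [this]
      refine (norm_add_le _ _).trans (add_le_add ((norm_mul_le _ _).trans (by rw [sq])) ?_)
      rw [norm_smul]
      have : ‖(1 : B)‖ ≤ 1 := by
        rcases subsingleton_or_nontrivial B with hB | hB
        · rw [Subsingleton.elim (1 : B) 0]; simp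
        · simp
      simp only [Complex.norm_real, norm_pow, Real.norm_eq_abs, sq_abs]
      nlinarith [sq_nonneg t]
    linarith
  have him0 : (f h).im = 0 := by
    by_contra hne
    have := him ((‖h‖ ^ 2 + 1) / (2 * (f h).im))
    have e : 2 * (f h).im * ((‖h‖ ^ 2 + 1) / (2 * (f h).im)) = ‖h‖ ^ 2 + 1 := by
      field_simp
    nlinarith [sq_nonneg (f h).re, sq_nonneg (f h).im]
  rw [Complex.nonneg_iff]
  refine ⟨?_, him0.symm⟩
  have hn : 0 ≤ h := star_mul_self_nonneg a
  have hle : ‖algebraMap ℝ B ‖h‖ - h‖ ≤ ‖h‖ := by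
    rw [CStarAlgebra.norm_le_iff_le_algebraMap _ (norm_nonneg h)
      (sub_nonneg.mpr (IsSelfAdjoint.le_algebraMap_norm_self hsa))]
    simpa using hn
  have := (bd _).trans hle
  rw [Algebra.algebraMap_eq_smul_one, map_sub, ← Complex.coe_smul, map_smul, h1] at this
  have := (Complex.abs_re_le_norm _).trans this
  simp at this
  linarith [(abs_le.mp this).2]

end Unital

section Functionals

variable {A : Type*} [NonUnitalCStarAlgebra A]

/-- A contractive functional attaining the value `1` at a positive contraction is positive: a
norm-preserving extension to the unitization is unital. -/
lemma isPos_of_apply_eq_one {φ : A →L[ℂ] ℂ} (hφ : ‖φ‖ ≤ 1) (c : A) (hc : ‖star c * c‖ ≤ 1)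
    (h1 : φ (star c * c) = 1) : IsPos (φ : A →ₗ[ℂ] ℂ) := by
  let B := Unitization ℂ A
  let := CStarAlgebra.spectralOrder B
  have := CStarAlgebra.spectralOrderedRing B
  let i : A →ₗᵢ[ℂ] B := ⟨Unitization.inrHom ℂ ℂ A, fun a => Unitization.norm_inr a⟩
  let e := i.equivRange
  let φ' : StrongDual ℂ (LinearMap.range i.toLinearMap) :=
    φ.comp (e.symm.toLinearIsometry.toContinuousLinearMap)
  obtain ⟨ψ, hψ, hψn⟩ := exists_extension_norm_eq (LinearMap.range i.toLinearMap) φ'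
  have hψ1 : ‖ψ‖ ≤ 1 := by
    rw [hψn]
    refine (ContinuousLinearMap.opNorm_le_bound _ zero_le_one fun x => ?_)
    refine (φ.le_opNorm _).trans ?_
    have : ‖e.symm x‖ = ‖x‖ := e.symm.norm_map x
    change ‖φ‖ * ‖e.symm x‖ ≤ _
    rw [this]; gcongr
  have hψa : ∀ a : A, ψ (a : B) = φ a := fun a => by
    have := hψ (e a)
    have e2 : φ' (e a) = φ a := by
      change φ (e.symm (e a)) = φ a
      rw [e.symm_apply_apply]
    rw [e2] at this
    exact this
  have hone : ψ 1 = 1 := by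
    set d : B := ((star c * c : A) : B) with hd
    have hd0 : 0 ≤ d := by
      rw [hd, Unitization.inr_mul, Unitization.inr_star]; exact star_mul_self_nonneg _
    have hd1 : d ≤ 1 := by
      rw [← CStarAlgebra.norm_le_one_iff_of_nonneg d hd0, hd, Unitization.norm_inr]; exact hc
    have hn : ‖(1 : B) - d - d‖ ≤ 1 := by
      have hsa : IsSelfAdjoint ((1 : B) - d - d) :=
        ((IsSelfAdjoint.one B).sub (IsSelfAdjoint.of_nonneg hd0)).sub (IsSelfAdjoint.of_nonneg hd0)
      have hle1 : (1 : B) - d - d ≤ 1 := by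
        rw [sub_sub]; exact sub_le_self _ (add_nonneg hd0 hd0)
      have hle2 : -((1 : B) - d - d) ≤ 1 := by
        have := add_le_add hd1 hd1
        rw [neg_sub, sub_sub_eq_add_sub, sub_le_iff_le_add]; exact this
      rcases subsingleton_or_nontrivial B with hB | hB
      · rw [Subsingleton.elim ((1 : B) - d - d) 0]; simp
      · -- a selfadjoint element has norm or minus norm in its spectrum
        have key : ∀ x : B, IsSelfAdjoint x → x ≤ 1 → -x ≤ 1 → ‖x‖ ≤ 1 := by
          intro x hx h1 h2
          have h1' : x ≤ algebraMap ℝ B 1 := by simpa using h1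
          have h2' : algebraMap ℝ B (-1) ≤ x := by simpa using neg_le.mp h2
          rw [le_algebraMap_iff_spectrum_le hx] at h1'
          rw [algebraMap_le_iff_le_spectrum hx] at h2'
          rcases CStarAlgebra.norm_or_neg_norm_mem_spectrum hx with h | h
          · exact h1' _ h
          · linarith [h2' _ h]
        exact key _ hsa hle1 hle2
    have b1 : ‖ψ 1‖ ≤ 1 := (ψ.le_opNorm _).trans (by
      have : ‖(1 : B)‖ ≤ 1 := by simp
      nlinarith [norm_nonneg (1 : B), norm_nonneg ψ])
    have b2 : ‖ψ (1 - d - d)‖ ≤ 1 := (ψ.le_opNorm _).trans (by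
      nlinarith [norm_nonneg ((1 : B) - d - d), norm_nonneg ψ])
    have hψd : ψ d = 1 := by rw [hd, hψa, h1]
    rw [map_sub, map_sub, hψd] at b2
    have n1 : (ψ 1).re ^ 2 + (ψ 1).im ^ 2 ≤ 1 := by
      have := pow_le_one₀ (n := 2) (norm_nonneg _) b1
      rw [← Complex.normSq_eq_norm_sq, Complex.normSq_apply] at this
      linarith
    have n2 : ((ψ 1).re - 2) ^ 2 + (ψ 1).im ^ 2 ≤ 1 := by
      have := pow_le_one₀ (n := 2) (norm_nonneg _) b2
      rw [← Complex.normSq_eq_norm_sq, Complex.normSq_apply] at this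
      simp at this
      linarith
    apply Complex.ext
    · rw [Complex.one_re]; nlinarith [sq_nonneg ((ψ 1).re - 1), sq_nonneg (ψ 1).im]
    · rw [Complex.one_im]; nlinarith [sq_nonneg ((ψ 1).re - 1), sq_nonneg (ψ 1).im]
  have hp := isPos_of_norm_le hψ1 hone
  intro a
  have := hp (a : B)
  rw [← Unitization.inr_star, ← Unitization.inr_mul] at this
  change 0 ≤ ψ _ at this
  rw [hψa] at this
  exact this

end Functionals

/-! ### Characters -/

/-- A multiplicative `⋆`-preserving contractive functional; the zero functional is allowed. -/
structure IsChar {E : Type*} [NonUnitalCStarAlgebra E] (χ : E →L[ℂ] ℂ) : Prop where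
  mul : ∀ x y, χ (x * y) = χ x * χ y
  map_star : ∀ x, χ (star x) = (starRingEnd ℂ) (χ x)
  norm_le : ‖χ‖ ≤ 1

section Characters

variable {E : Type*} [NonUnitalCStarAlgebra E]

lemma IsChar.isPos {χ : E →L[ℂ] ℂ} (h : IsChar χ) : IsPos (χ : E →ₗ[ℂ] ℂ) := fun a => by
  change 0 ≤ χ _
  rw [h.mul, h.map_star, mul_comm, Complex.mul_conj]
  exact_mod_cast Complex.normSq_nonneg _

/-- A character as a non-unital `⋆`-homomorphism. -/
noncomputable def IsChar.toHom {χ : E →L[ℂ] ℂ} (h : IsChar χ) : E →⋆ₙₐ[ℂ] ℂ where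
  toFun := χ
  map_smul' c x := by simp
  map_zero' := map_zero χ
  map_add' := map_add χ
  map_mul' := h.mul
  map_star' := h.map_star

lemma IsChar.map_cfcₙ {χ : E →L[ℂ] ℂ} (h : IsChar χ) {f : ℝ → ℝ} (hf : Continuous f)
    (hf0 : f 0 = 0) {a : E} (ha : IsSelfAdjoint a) :
    χ (cfcₙ f a) = f (χ a).re := by
  have hr : χ a = algebraMap ℝ ℂ (χ a).re := by
    have := h.map_star a
    rw [ha.star_eq] at this
    exact (Complex.conj_eq_iff_re.mp this.symm).symm
  have hsa : IsSelfAdjoint (h.toHom a) := ha.map h.toHom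
  have h1 : χ (cfcₙ f a) = cfcₙ f (χ a) :=
    NonUnitalStarAlgHom.map_cfcₙ h.toHom f a hf.continuousOn hf0 χ.continuous ha hsa
  rw [h1, cfcₙ_eq_cfc hf.continuousOn hf0]
  conv_lhs => rw [hr]
  rw [cfc_algebraMap]
  rfl

/-- The pullback of a character along a `⋆`-homomorphism. -/
lemma exists_isChar_of_characterSpace {C : Type*} [CStarAlgebra C]
    (φ : WeakDual.characterSpace ℂ C) (i : E →⋆ₙₐ[ℂ] C) :
    ∃ χ : E →L[ℂ] ℂ, IsChar χ ∧ ∀ x, χ x = φ (i x) := by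
  have hb : ∀ x : E, ‖φ (i x)‖ ≤ 1 * ‖x‖ := fun x => by
    rcases subsingleton_or_nontrivial C with hC | hC
    · rw [Subsingleton.elim (i x) 0]; simp
    · rw [one_mul]
      exact (AlgHom.norm_apply_le_self φ (i x)).trans (NonUnitalStarAlgHom.norm_apply_le i x)
  let χ : E →L[ℂ] ℂ := LinearMap.mkContinuous
    { toFun := fun x => φ (i x)
      map_add' := fun x y => by simp
      map_smul' := fun c x => by simp } 1 hb
  have hχ : ∀ x, χ x = φ (i x) := fun x => rfl
  refine ⟨χ, ⟨fun x y => by simp [hχ], fun x => ?_, LinearMap.mkContinuous_norm_le _ zero_le_one _⟩,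
    hχ⟩
  rw [hχ, hχ, map_star, map_star]; rfl

/-- Gelfand theory: characters of a commutative `C⋆`-algebra are norming. -/
lemma norm_le_of_forall_isChar (hcomm : ∀ x y : E, x * y = y * x) {y : E} {C : ℝ} (hC : 0 ≤ C)
    (h : ∀ χ : E →L[ℂ] ℂ, IsChar χ → ‖χ y‖ ≤ C) : ‖y‖ ≤ C := by
  let : NonUnitalCommCStarAlgebra E :=
    { (inferInstance : NonUnitalCStarAlgebra E) with mul_comm := hcomm }
  have h1 := (gelfandTransform_isometry (Unitization ℂ E)).norm_map_of_map_zero (map_zero _)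
    (y : Unitization ℂ E)
  rw [Unitization.norm_inr] at h1
  rw [← h1, ContinuousMap.norm_le _ hC]
  intro φ
  obtain ⟨χ, hχ, hχφ⟩ := exists_isChar_of_characterSpace φ
    (Unitization.inrNonUnitalStarAlgHom ℂ E)
  have := h χ hχ
  rw [hχφ] at this
  exact this

lemma eq_of_forall_isChar (hcomm : ∀ x y : E, x * y = y * x) {x y : E}
    (h : ∀ χ : E →L[ℂ] ℂ, IsChar χ → χ x = χ y) : x = y := by
  have := norm_le_of_forall_isChar hcomm (y := x - y) le_rfl fun χ hχ => by
    rw [map_sub, h χ hχ, sub_self, norm_zero]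
  exact sub_eq_zero.mp (norm_le_zero_iff.mp this)

lemma IsChar.exists_apply_eq_one {χ : E →L[ℂ] ℂ} (h : IsChar χ) (h0 : χ ≠ 0) :
    ∃ c : E, IsSelfAdjoint c ∧ ‖c‖ ≤ 1 ∧ χ c = 1 := by
  obtain ⟨d, hd⟩ : ∃ d, χ d ≠ 0 := by
    by_contra! hc
    exact h0 (ContinuousLinearMap.ext hc)
  have hr : 0 < (χ (star d * d)).re := by
    rw [h.mul, h.map_star, mul_comm, Complex.mul_conj]
    exact_mod_cast Complex.normSq_pos.mpr hd
  set r := (χ (star d * d)).re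
  have hf : Continuous fun t : ℝ => min (|t| / r) 1 := by fun_prop
  refine ⟨cfcₙ (fun t : ℝ => min (|t| / r) 1) (star d * d), cfcₙ_predicate _ _, ?_, ?_⟩
  · refine norm_cfcₙ_le fun t _ => ?_
    rw [Real.norm_eq_abs, abs_of_nonneg (by positivity)]
    exact min_le_right _ _
  · rw [h.map_cfcₙ hf (by simp) (IsSelfAdjoint.star_mul_self d)]
    change ((min (|r| / r) 1 : ℝ) : ℂ) = 1
    rw [abs_of_pos hr, div_self hr.ne', min_self, Complex.ofReal_one]

lemma IsChar.norm_eq_one {χ : E →L[ℂ] ℂ} (h : IsChar χ) (h0 : χ ≠ 0) : ‖χ‖ = 1 := by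
  obtain ⟨c, -, hc, h1⟩ := h.exists_apply_eq_one h0
  refine le_antisymm h.norm_le ?_
  have := χ.le_opNorm c
  rw [h1, norm_one] at this
  nlinarith [norm_nonneg χ]

lemma IsChar.isState {χ : E →L[ℂ] ℂ} (h : IsChar χ) (h0 : χ ≠ 0) : IsState χ :=
  ⟨h.norm_eq_one h0, h.isPos⟩

/-- The unital extension of `σ` evaluated at `(d - z)⋆ (d - z)`. -/
lemma ext_sub_sq {σ : E →L[ℂ] ℂ} (d : E) (z : ℂ) :
    ext (σ : E →ₗ[ℂ] ℂ) (star ((d : Unitization ℂ E) - z • 1) * ((d : Unitization ℂ E) - z • 1))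
      = σ (star d * d) - z * σ (star d) - (starRingEnd ℂ) z * σ d + (starRingEnd ℂ) z * z := by
  have : star ((d : Unitization ℂ E) - z • 1) * ((d : Unitization ℂ E) - z • 1)
      = ((star d * d - z • star d - (starRingEnd ℂ) z • d : E) : Unitization ℂ E)
        + ((starRingEnd ℂ) z * z) • (1 : Unitization ℂ E) := by
    rw [Unitization.inr_sub, Unitization.inr_sub, Unitization.inr_mul, Unitization.inr_star,
      Unitization.inr_smul, Unitization.inr_smul, Unitization.inr_star, star_sub, star_smul,
      star_one, sub_mul, mul_sub, mul_sub, smul_mul_assoc, smul_mul_assoc, mul_smul_comm,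
      mul_smul_comm, one_mul, mul_one, one_mul, smul_smul]
    change _ - _ - (star z • _ - (star z * z) • _) = _ - _ - star z • _ + (star z * z) • _
    abel
  rw [this, map_add, map_smul, ext_one, ext_inr]
  simp

/-- If `χ` is a convex combination of two states, both have vanishing variance at every element,
hence agree with `χ`. -/
lemma IsChar.isPureState {χ : E →L[ℂ] ℂ} (h : IsChar χ) (h0 : χ ≠ 0) : IsPureState χ := by
  refine ⟨h.isState h0, ?_⟩
  rintro σ₁ hσ₁ σ₂ hσ₂ ⟨s, t, hs, ht, hst, rfl⟩
  set χ := s • σ₁ + t • σ₂ with hχ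
  have p₁ := IsPos.ext (ρ := σ₁) hσ₁.2 hσ₁.1.le
  have p₂ := IsPos.ext (ρ := σ₂) hσ₂.2 hσ₂.1.le
  have happ : ∀ x, χ x = s * σ₁ x + t * σ₂ x := fun x => by simp [hχ]
  ext d
  set u : Unitization ℂ E := (d : Unitization ℂ E) - (χ d) • 1 with hu
  have q₁ := p₁ u
  have q₂ := p₂ u
  have hsum : (s : ℂ) * CartanProof.ext (σ₁ : E →ₗ[ℂ] ℂ) (star u * u)
      + t * CartanProof.ext (σ₂ : E →ₗ[ℂ] ℂ) (star u * u) = 0 := by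
    rw [hu, ext_sub_sq, ext_sub_sq]
    have e1 := happ (star d * d)
    have e2 := happ (star d)
    have e3 := happ d
    rw [h.mul, h.map_star] at e1
    rw [h.map_star] at e2
    have hst' : (s : ℂ) + t = 1 := by exact_mod_cast hst
    linear_combination -e1 + (χ d) * e2 + (starRingEnd ℂ) (χ d) * e3
      + (starRingEnd ℂ) (χ d) * χ d * hst'
  have hz : CartanProof.ext (σ₁ : E →ₗ[ℂ] ℂ) (star u * u) = 0 := by
    have r := congrArg Complex.re hsum
    rw [Complex.add_re, Complex.re_ofReal_mul, Complex.re_ofReal_mul, Complex.zero_re] at r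
    rw [Complex.nonneg_iff] at q₁ q₂
    apply Complex.ext
    · rw [Complex.zero_re]
      nlinarith [mul_nonneg hs.le q₁.1, mul_nonneg ht.le q₂.1]
    · exact q₁.2.symm
  have := p₁.eq_zero_right hz 1
  rw [one_mul, hu, map_sub, map_smul, ext_one, ext_inr] at this
  simpa using sub_eq_zero.mp (by simpa using this)

end Characters

/-! ### Pure states of commutative algebras; functionals `χ ∘ P` -/

section Pure

variable {E : Type*} [NonUnitalCStarAlgebra E]

/-- The functional `y ↦ f (b⋆ y b)`. -/
noncomputable def conjBy (f : E →ₗ[ℂ] ℂ) (b : E) : E →ₗ[ℂ] ℂ where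
  toFun y := f (star b * y * b)
  map_add' x y := by simp [mul_add, add_mul]
  map_smul' c x := by simp [mul_smul_comm, smul_mul_assoc]

lemma conjBy_apply (f : E →ₗ[ℂ] ℂ) (b y : E) : conjBy f b y = f (star b * y * b) := rfl

lemma IsPos.conjBy {f : E →ₗ[ℂ] ℂ} (hf : IsPos f) (b : E) : IsPos (conjBy f b) := fun a => by
  have := hf (a * b)
  rwa [star_mul, mul_assoc, ← mul_assoc (star a), ← mul_assoc] at this

/-- The functional `x ↦ σ (b⋆ b x)` has norm at most `σ (b⋆ b)`, where `σ` is extended unitally. -/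
lemma pure_aux (hcomm : ∀ x y : E, x * y = y * x) {σ : E →L[ℂ] ℂ} (hσ : IsState σ)
    (b : Unitization ℂ E) :
    ∀ x : E, ‖CartanProof.ext (σ : E →ₗ[ℂ] ℂ) (star b * b * x)‖
      ≤ (CartanProof.ext (σ : E →ₗ[ℂ] ℂ) (star b * b)).re * ‖x‖ := by
  intro x
  have hp := ((IsPos.ext (ρ := σ) hσ.2 hσ.1.le).conjBy b).norm_apply_le (x : Unitization ℂ E)
  rw [conjBy_apply, conjBy_apply, mul_one, Unitization.norm_inr] at hp
  have hc : (x : Unitization ℂ E) * b = b * x := by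
    ext
    · simp
    · simp [hcomm x]
  rwa [mul_assoc, hc, ← mul_assoc] at hp

/-- Pure states of a commutative `C⋆`-algebra are characters: for `0 ≤ h ≤ 1` the functional
`σ (h ·)` is dominated by `σ`, so purity makes it a multiple of `σ`. -/
lemma IsPureState.isChar (hcomm : ∀ x y : E, x * y = y * x) {σ : E →L[ℂ] ℂ}
    (hσ : IsPureState σ) : IsChar σ := by
  let := CStarAlgebra.spectralOrder E
  have := CStarAlgebra.spectralOrderedRing E
  let := CStarAlgebra.spectralOrder (Unitization ℂ E)
  have := CStarAlgebra.spectralOrderedRing (Unitization ℂ E)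
  obtain ⟨hs, hext⟩ := hσ
  have hpos : IsPos (σ : E →ₗ[ℂ] ℂ) := hs.2
  refine ⟨fun x y => ?_, fun x => hpos.map_star hs.1.le x, hs.1.le⟩
  have key : ∀ h : E, 0 ≤ h → ‖h‖ ≤ 1 → ∀ y, σ (h * y) = σ h * σ y := by
    intro h h0 h1
    obtain ⟨s, hsq⟩ := CStarAlgebra.nonneg_iff_eq_star_mul_self.mp h0
    have hh0 : (0 : Unitization ℂ E) ≤ (h : Unitization ℂ E) := by
      rw [hsq, Unitization.inr_mul, Unitization.inr_star]; exact star_mul_self_nonneg _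
    have hh1 : (h : Unitization ℂ E) ≤ 1 := by
      rw [← CStarAlgebra.norm_le_one_iff_of_nonneg _ hh0, Unitization.norm_inr]; exact h1
    obtain ⟨r, hr⟩ := CStarAlgebra.nonneg_iff_eq_star_mul_self.mp (sub_nonneg.mpr hh1)
    have b1 := pure_aux hcomm hs (s : Unitization ℂ E)
    have b2 := pure_aux hcomm hs r
    rw [← Unitization.inr_star, ← Unitization.inr_mul, ← hsq] at b1
    rw [← hr] at b2
    simp only [sub_mul, one_mul, map_sub, ext_inr, ext_one, ← Unitization.inr_mul,
      ContinuousLinearMap.coe_coe, Complex.sub_re, Complex.one_re] at b1 b2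
    have hσh := Complex.nonneg_iff.mp (hpos.apply_nonneg h0)
    simp only [ContinuousLinearMap.coe_coe] at hσh
    set t := (σ h).re with ht
    have htc : σ h = t := Complex.ext rfl (by simp [← hσh.2])
    have ht1 : t ≤ 1 := by
      have := (Complex.re_le_norm (σ h)).trans (σ.le_opNorm h)
      rw [hs.1, one_mul] at this
      exact this.trans h1
    rcases eq_or_lt_of_le hσh.1 with h00 | h0'
    · intro y
      have := b1 y
      rw [← h00, zero_mul] at this
      rw [norm_le_zero_iff.mp this, htc, ← h00]; simp
    rcases eq_or_lt_of_le ht1 with h11 | h1'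
    · intro y
      have := b2 y
      rw [h11, one_mul, sub_self, norm_le_zero_iff, sub_eq_zero] at this
      rw [← this, htc, h11]; simp
    -- `0 < t < 1`: the state `σ` is a proper convex combination
    let φ : E →L[ℂ] ℂ := σ.comp (ContinuousLinearMap.mul ℂ E h)
    have hφ : ∀ x, φ x = σ (h * x) := fun x => rfl
    let σ₁ : E →L[ℂ] ℂ := ((t⁻¹ : ℝ) : ℂ) • φ
    let σ₂ : E →L[ℂ] ℂ := (((1 - t)⁻¹ : ℝ) : ℂ) • (σ - φ)
    have e1 : ∀ x, σ₁ x = ((t⁻¹ : ℝ) : ℂ) * σ (h * x) := fun x => rfl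
    have e2 : ∀ x, σ₂ x = (((1 - t)⁻¹ : ℝ) : ℂ) * (σ x - σ (h * x)) := fun x => rfl
    have ht' : 0 < 1 - t := by linarith
    have hn1 : ‖σ₁‖ ≤ 1 := ContinuousLinearMap.opNorm_le_bound _ zero_le_one fun x => by
      rw [e1, norm_mul, Complex.norm_real, Real.norm_of_nonneg (by positivity),
        inv_mul_le_iff₀ h0', one_mul]
      exact b1 x
    have hn2 : ‖σ₂‖ ≤ 1 := ContinuousLinearMap.opNorm_le_bound _ zero_le_one fun x => by
      rw [e2, norm_mul, Complex.norm_real, Real.norm_of_nonneg (by positivity),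
        inv_mul_le_iff₀ ht', one_mul]
      exact (b2 x).trans_eq (by ring)
    have hcomb : σ = t • σ₁ + (1 - t) • σ₂ := by
      ext x
      have c1 : (t : ℂ) ≠ 0 := by exact_mod_cast h0'.ne'
      have c2 : (1 - t : ℂ) ≠ 0 := by exact_mod_cast ht'.ne'
      simp only [add_apply, smul_apply, e1, e2,
        Complex.real_smul]
      push_cast
      field_simp
      ring
    have hnn : 1 ≤ t * ‖σ₁‖ + (1 - t) * ‖σ₂‖ := by
      have h3 := norm_add_le (t • σ₁) ((1 - t) • σ₂)
      rwa [← hcomb, hs.1, norm_smul t σ₁, norm_smul (1 - t) σ₂, Real.norm_of_nonneg h0'.le,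
        Real.norm_of_nonneg ht'.le] at h3
    have p1 : ∀ a : E, 0 ≤ σ₁ (star a * a) := fun a => by
      rw [e1]
      refine mul_nonneg (by exact_mod_cast inv_nonneg.mpr h0'.le) ?_
      have := hpos (s * a)
      rw [star_mul, mul_assoc, ← mul_assoc (star s), ← hsq, ← mul_assoc, hcomm (star a) h,
        mul_assoc] at this
      exact this
    have p2 : ∀ a : E, 0 ≤ σ₂ (star a * a) := fun a => by
      rw [e2]
      refine mul_nonneg (by exact_mod_cast inv_nonneg.mpr ht'.le) ?_
      have := (IsPos.ext (ρ := σ) hs.2 hs.1.le) (r * a)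
      rw [star_mul, mul_assoc, ← mul_assoc (star r), ← hr, sub_mul, one_mul, mul_sub, map_sub,
        ← Unitization.inr_star, ← Unitization.inr_mul, ← Unitization.inr_mul,
        ← Unitization.inr_mul, ext_inr, ext_inr, ← mul_assoc, hcomm (star a) h, mul_assoc] at this
      exact this
    have hs1 : IsState σ₁ := ⟨le_antisymm hn1 (by nlinarith), p1⟩
    have hs2 : IsState σ₂ := ⟨le_antisymm hn2 (by nlinarith), p2⟩
    have heq : σ₁ = σ := hext hs1 hs2 ⟨t, 1 - t, h0', ht', by ring, hcomb.symm⟩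
    intro y
    have := e1 y
    rw [heq] at this
    rw [this, htc, ← mul_assoc, ← Complex.ofReal_mul, mul_inv_cancel₀ h0'.ne', Complex.ofReal_one,
      one_mul]
  have hx : x ∈ Submodule.span ℂ ({x : E | 0 ≤ x} ∩ Metric.closedBall 0 1) := by
    rw [CStarAlgebra.span_nonneg_inter_unitClosedBall]; trivial
  induction hx using Submodule.span_induction with
  | mem x hx => exact key x hx.1 (by simpa using hx.2) y
  | zero => simp
  | add x z _ _ hx hz => rw [add_mul, map_add, map_add, hx, hz, add_mul]
  | smul c x _ hx => rw [smul_mul_assoc, map_smul, map_smul, hx, smul_eq_mul, smul_eq_mul, mul_assoc]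

end Pure

section CondExp

variable {A : Type*} [NonUnitalCStarAlgebra A]

/-- Multiplicative domain: a contractive positive functional with vanishing variance at `d` is
multiplicative on products `a d`. -/
lemma IsPos.map_mul_right {ρ : A →L[ℂ] ℂ} (hρ : IsPos (ρ : A →ₗ[ℂ] ℂ)) (h1 : ‖ρ‖ ≤ 1) {d : A}
    (hd : ρ (star d * d) = (starRingEnd ℂ) (ρ d) * ρ d) (a : A) : ρ (a * d) = ρ a * ρ d := by
  have h0 := ext_sub_sq (σ := ρ) d (ρ d)
  rw [hd, hρ.map_star h1] at h0
  have h0' := h0.trans (b := _) (c := 0) (by ring)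
  have := (hρ.ext h1).eq_zero_right h0' (a : Unitization ℂ A)
  rw [mul_sub, mul_smul_comm, mul_one, map_sub, map_smul, ← Unitization.inr_mul, ext_inr, ext_inr,
    sub_eq_zero] at this
  rw [mul_comm (ρ a)]
  exact this

lemma IsPos.map_mul_left {ρ : A →L[ℂ] ℂ} (hρ : IsPos (ρ : A →ₗ[ℂ] ℂ)) (h1 : ‖ρ‖ ≤ 1) {d : A}
    (hd : ρ (d * star d) = ρ d * (starRingEnd ℂ) (ρ d)) (a : A) : ρ (d * a) = ρ d * ρ a := by
  have := hρ.map_mul_right h1 (d := star d)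
    (by rw [star_star, hρ.map_star h1, hd, Complex.conj_conj]) (star a)
  rw [← star_mul, hρ.map_star h1, hρ.map_star h1, hρ.map_star h1, ← map_mul] at this
  rw [(starRingEnd ℂ).injective this, mul_comm]

variable {D : NonUnitalStarSubalgebra ℂ A} [IsClosed (D : Set A)]

lemma IsPos.mul_right_of_isChar {ρ : A →L[ℂ] ℂ} (hρ : IsPos (ρ : A →ₗ[ℂ] ℂ)) (h1 : ‖ρ‖ ≤ 1)
    {χ : D →L[ℂ] ℂ} (hχ : IsChar χ) (hext : ∀ x : D, ρ x = χ x) (a : A) (d : D) :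
    ρ (a * d) = ρ a * χ d := by
  rw [← hext]
  refine hρ.map_mul_right h1 ?_ a
  have := hext (star d * d)
  rw [hχ.mul, hχ.map_star, ← hext] at this
  exact this

lemma IsPos.mul_left_of_isChar {ρ : A →L[ℂ] ℂ} (hρ : IsPos (ρ : A →ₗ[ℂ] ℂ)) (h1 : ‖ρ‖ ≤ 1)
    {χ : D →L[ℂ] ℂ} (hχ : IsChar χ) (hext : ∀ x : D, ρ x = χ x) (a : A) (d : D) :
    ρ (d * a) = χ d * ρ a := by
  rw [← hext]
  refine hρ.map_mul_left h1 ?_ a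
  have := hext (d * star d)
  rw [hχ.mul, hχ.map_star, ← hext] at this
  exact this

/-- Composing a character of `D` with a conditional expectation gives a positive functional. -/
lemma exists_comp {P : A →L[ℂ] A} (hP : IsCondExpectation D P) {χ : D →L[ℂ] ℂ} (hχ : IsChar χ) :
    ∃ ρ : A →L[ℂ] ℂ, IsPos (ρ : A →ₗ[ℂ] ℂ) ∧ ‖ρ‖ ≤ 1 ∧ (∀ a, ρ a = χ ⟨P a, hP.1 a⟩) ∧
      ∀ x : D, ρ x = χ x := by
  let f : A →ₗ[ℂ] ℂ :=
    { toFun := fun a => χ ⟨P a, hP.1 a⟩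
      map_add' := fun x y => by
        rw [← map_add]; congr 1; exact Subtype.ext (map_add P x y)
      map_smul' := fun c x => by
        rw [RingHom.id_apply, ← map_smul]; congr 1; exact Subtype.ext (map_smul P c x) }
  let ρ : A →L[ℂ] ℂ := f.mkContinuous 1 fun a => by
    refine (χ.le_opNorm _).trans (mul_le_mul hχ.norm_le ?_ (norm_nonneg _) zero_le_one)
    exact (P.le_opNorm a).trans (mul_le_of_le_one_left (norm_nonneg a) hP.2.2)
  have hρ : ∀ a, ρ a = χ ⟨P a, hP.1 a⟩ := fun a => rfl
  have hn : ‖ρ‖ ≤ 1 := LinearMap.mkContinuous_norm_le _ zero_le_one _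
  have hD : ∀ x : D, ρ x = χ x := fun x => by
    rw [hρ]; congr 1; exact Subtype.ext (hP.2.1 x x.2)
  refine ⟨ρ, ?_, hn, hρ, hD⟩
  by_cases h0 : χ = 0
  · intro a
    change 0 ≤ ρ _
    rw [hρ, h0]; simp
  · obtain ⟨c, hc, hc1, hχc⟩ := hχ.exists_apply_eq_one h0
    refine isPos_of_apply_eq_one hn (c : A) ?_ ?_
    · rw [CStarRing.norm_star_mul_self]
      have : ‖(c : A)‖ ≤ 1 := hc1
      nlinarith [norm_nonneg (c : A)]
    · have := hD (star c * c)
      rw [hχ.mul, hχ.map_star, hχc, map_one, one_mul] at this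
      exact this

variable (hab : ∀ x ∈ D, ∀ y ∈ D, x * y = y * x)
include hab

lemma eq_of_isChar {x y : A} (hx : x ∈ D) (hy : y ∈ D)
    (h : ∀ χ : D →L[ℂ] ℂ, IsChar χ → χ ⟨x, hx⟩ = χ ⟨y, hy⟩) : x = y :=
  congrArg Subtype.val (eq_of_forall_isChar
    (fun x y : D => Subtype.ext (hab x x.2 y y.2)) h)

/-- Every `χ ∘ P` has the character `χ` as its restriction to `D`, hence is `D`-modular; since
characters separate the points of `D`, so is `P`. -/
lemma condExp_mul_right {P : A →L[ℂ] A} (hP : IsCondExpectation D P) (a : A) {d : A} (hd : d ∈ D) :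
    P (a * d) = P a * d := by
  refine eq_of_isChar hab (hP.1 _) (mul_mem (hP.1 a) hd) fun χ hχ => ?_
  obtain ⟨ρ, hρ, h1, hρP, hρD⟩ := exists_comp hP hχ
  rw [← hρP, hρ.mul_right_of_isChar h1 hχ hρD a ⟨d, hd⟩, hρP, ← hχ.mul]
  rfl

lemma condExp_mul_left {P : A →L[ℂ] A} (hP : IsCondExpectation D P) (a : A) {d : A} (hd : d ∈ D) :
    P (d * a) = d * P a := by
  refine eq_of_isChar hab (hP.1 _) (mul_mem hd (hP.1 a)) fun χ hχ => ?_
  obtain ⟨ρ, hρ, h1, hρP, hρD⟩ := exists_comp hP hχ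
  rw [← hρP, hρ.mul_left_of_isChar h1 hχ hρD a ⟨d, hd⟩, hρP, ← hχ.mul]
  rfl

lemma condExp_star {P : A →L[ℂ] A} (hP : IsCondExpectation D P) (a : A) :
    P (star a) = star (P a) := by
  refine eq_of_isChar hab (hP.1 _) (star_mem (hP.1 a)) fun χ hχ => ?_
  obtain ⟨ρ, hρ, h1, hρP, hρD⟩ := exists_comp hP hχ
  rw [← hρP, hρ.map_star h1, hρP, ← hχ.map_star]
  rfl

end CondExp

/-! ### Normalizers -/

section Normalizers

variable {A : Type*} [NonUnitalCStarAlgebra A] {D : NonUnitalStarSubalgebra ℂ A}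

lemma IsNormalizer.star {n : A} (hn : IsNormalizer D n) : IsNormalizer D (star n) :=
  fun d hd => by rw [star_star]; exact ⟨(hn d hd).2, (hn d hd).1⟩

lemma eq_zero_of_star_mul_self {x : A} (h : star x * x = 0) : x = 0 :=
  (CStarRing.star_mul_self_eq_zero_iff x).mp h

variable [IsClosed (D : Set A)]

/-- A positive element whose square lies in `D` lies in `D`, being the square root of its square. -/
lemma mem_of_sq_mem {y : A} (h : (y * star y) * (y * star y) ∈ D) : y * star y ∈ D := by
  let := CStarAlgebra.spectralOrder A
  have := CStarAlgebra.spectralOrderedRing A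
  rw [← CFC.sqrt_mul_self (y * star y) (mul_star_self_nonneg y),
    CFC.sqrt_eq_real_sqrt _ (IsSelfAdjoint.mul_self_nonneg (IsSelfAdjoint.mul_star_self y))]
  exact cfcₙ_mem (𝕜' := ℂ) _ h

variable (hab : ∀ x ∈ D, ∀ y ∈ D, x * y = y * x)
include hab

/-- The selfadjoint case of `mul_star_self_commute`. With `h = n n⋆`, the elements `h d h` and
`e h e` lie in `D`; these relations force the commutator `x = [f, h]` to satisfy `x³ = 0`, and
`x` is skew-adjoint, so `x = 0`. -/
lemma mul_star_self_commute_aux {n : A} (hn : IsNormalizer D n) {f : A} (hf : f ∈ D)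
    (hfs : star f = f) : n * star n * f = f * (n * star n) := by
  set h := n * star n with hh
  have hhs : star h = h := by rw [hh, star_mul, star_star]
  have ha : ∀ d ∈ D, h * d * h ∈ D := fun d hd => by
    have := (hn _ (hn d hd).2).1
    have e : h * d * h = n * (star n * d * n) * star n := by rw [hh]; noncomm_ring
    rwa [e]
  have hb : ∀ e ∈ D, star e = e → e * h * e ∈ D := fun e he hes => by
    have e1 : e * h * e = (e * n) * star (e * n) := by
      rw [star_mul, hes, hh]; noncomm_ring
    rw [e1]
    apply mem_of_sq_mem
    rw [← e1]
    have e2 : e * h * e * (e * h * e) = e * (h * (e * e) * h) * e := by noncomm_ring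
    rw [e2]
    exact mul_mem (mul_mem he (ha _ (mul_mem he he))) he
  -- polarization of `hb`
  have hc : ∀ d ∈ D, star d = d → ∀ e ∈ D, star e = e → d * h * e + e * h * d ∈ D := by
    intro d hd hds e he hes
    have e1 : d * h * e + e * h * d = (d + e) * h * (d + e) - d * h * d - e * h * e := by
      noncomm_ring
    rw [e1]
    exact sub_mem (sub_mem (hb _ (add_mem hd he) (by rw [star_add, hds, hes])) (hb d hd hds))
      (hb e he hes)
  clear_value h
  set x := f * h - h * f with hx
  have hxs : star x = -x := by rw [hx, star_sub, star_mul, star_mul, hfs, hhs, neg_sub]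
  have hfxf : f * x * f = 0 := by
    have e1 : f * x * f = f * (f * h * f) - (f * h * f) * f := by rw [hx]; noncomm_ring
    rw [e1, hab f hf _ (hb f hf hfs), sub_self]
  have hw : ∀ d ∈ D, star d = d → f * x * d = 0 := by
    intro d hd hds
    have hwD : f * x * d ∈ D := by
      have e1 : f * x * d = f * (d * h * f + f * h * d) - (f * d * h * f + f * h * (f * d)) := by
        rw [hx]; noncomm_ring
      rw [e1]
      refine sub_mem (mul_mem hf (hc d hd hds f hf hfs)) (hc _ (mul_mem hf hd) ?_ f hf hfs)
      rw [star_mul, hds, hfs, hab d hd f hf]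
    have h0 : f * (f * x * d) = 0 := by
      rw [hab f hf _ hwD, mul_assoc _ d f, hab d hd f hf, ← mul_assoc, hfxf, zero_mul]
    apply eq_zero_of_star_mul_self
    have e2 : star (f * x * d) * (f * x * d) = -(d * x * (f * (f * x * d))) := by
      rw [star_mul, star_mul, hxs, hfs, hds]; noncomm_ring
    rw [e2, h0, mul_zero, neg_zero]
  have hz : h * f * x = 0 := by
    have e1 : h * f * x = h * (f * f) * h - h * f * h * f := by rw [hx]; noncomm_ring
    have hzD : h * f * x ∈ D := by
      rw [e1]
      exact sub_mem (ha _ (mul_mem hf hf)) (mul_mem (ha f hf) hf)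
    have hzs : star (h * f * x) = h * f * x := by
      rw [e1, star_sub, star_mul, star_mul, star_mul, star_mul, star_mul, star_mul, hfs, hhs,
        ← mul_assoc h f h, hab f hf _ (ha f hf), ← mul_assoc]
    apply eq_zero_of_star_mul_self
    have e2 : star (h * f * x) * (h * f * x) = h * (f * x * (h * f * x)) := by
      rw [hzs]; noncomm_ring
    rw [e2, hw _ hzD hzs, mul_zero]
  have hz' : x * f * h = 0 := by
    have := congrArg star hz
    rwa [star_mul, star_mul, hxs, hfs, hhs, star_zero, neg_mul, neg_eq_zero, ← mul_assoc] at this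
  have hx4 : x * x * x = 0 := by
    have e1 : x * x * x = (x * f * h) * x - x * (h * f * x) := by
      conv_lhs => rw [mul_assoc]
      nth_rw 2 [hx]
      noncomm_ring
    rw [e1, hz, hz', zero_mul, mul_zero, sub_zero]
  have hx2 : x * x = 0 := by
    apply eq_zero_of_star_mul_self
    have e1 : star (x * x) * (x * x) = x * (x * x * x) := by
      rw [star_mul, hxs]; noncomm_ring
    rw [e1, hx4, mul_zero]
  have hx0 : x = 0 := by
    apply eq_zero_of_star_mul_self
    rw [hxs, neg_mul, hx2, neg_zero]
  exact (sub_eq_zero.mp hx0).symm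

/-- No approximate unit of `A` inside `D` is assumed, so `n n⋆ ∈ D` is not immediate from the
definition of a normalizer; it follows from this commutation when `D` is maximal abelian. -/
lemma mul_star_self_commute {n : A} (hn : IsNormalizer D n) {d : A} (hd : d ∈ D) :
    n * star n * d = d * (n * star n) := by
  have h1 := mul_star_self_commute_aux hab hn (f := d + star d) (add_mem hd (star_mem hd))
    (by rw [star_add, star_star, add_comm])
  have h2 := mul_star_self_commute_aux hab hn (f := Complex.I • (d - star d))
    (SMulMemClass.smul_mem _ (sub_mem hd (star_mem hd)))
    (by rw [star_smul, star_sub, star_star, Complex.star_def, Complex.conj_I, neg_smul, ← smul_neg,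
          neg_sub])
  have hd' : d = (1 / 2 : ℂ) • (d + star d) + (-Complex.I / 2) • (Complex.I • (d - star d)) := by
    rw [smul_smul]
    have : -Complex.I / 2 * Complex.I = 1 / 2 := by
      linear_combination (-1 / 2 : ℂ) * Complex.I_mul_I
    rw [this]; module
  rw [hd', mul_add, add_mul, mul_smul_comm, mul_smul_comm _ _ (Complex.I • _), h1, h2]
  simp only [smul_mul_assoc]

lemma mul_star_self_mem (hm : IsMasa D) {n : A} (hn : IsNormalizer D n) : n * star n ∈ D := by
  have : n * star n ∈ (D : Set A) := by
    rw [← hm]; exact fun d hd => mul_star_self_commute hab hn hd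
  exact this

lemma star_mul_self_mem (hm : IsMasa D) {n : A} (hn : IsNormalizer D n) : star n * n ∈ D := by
  have := mul_star_self_mem hab hm (IsNormalizer.star hn)
  rwa [star_star] at this

/-- With `g = P (b n)`, freeness of `n` gives `g n D = 0`, whence `g³ = P (g b n g) = 0`. -/
lemma condExp_mul_free_eq_zero {P : A →L[ℂ] A} (hP : IsCondExpectation D P) {b : A}
    (hb : ∀ d ∈ D, b * d = d * b) {n : A} (hn : IsFreeNormalizer D n) : P (b * n) = 0 := by
  set g := P (b * n) with hg
  have hgD : g ∈ D := hP.1 _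
  have h1 : ∀ d ∈ D, g * (n * d * star n) = 0 := fun d hd => by
    rw [hg, ← condExp_mul_right hab hP _ (hn.1 d hd).1]
    have : b * n * (n * d * star n) = b * (n * n) * d * star n := by noncomm_ring
    rw [this, hn.2]; simp
  have h2 : ∀ e ∈ D, g * n * e = 0 := fun e he => by
    have h3 := h1 _ (mul_mem he (star_mem he))
    apply star_eq_zero.mp
    apply eq_zero_of_star_mul_self
    have : star (star (g * n * e)) * star (g * n * e) = g * (n * (e * star e) * star n) * star g := by
      rw [star_star, star_mul, star_mul]; noncomm_ring
    rw [this, h3, zero_mul]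
  have h3 : g * g * g = 0 := by
    have : P (g * (b * n) * g) = g * g * g := by
      rw [condExp_mul_right hab hP _ hgD, condExp_mul_left hab hP _ hgD]
    rw [← this, ← mul_assoc, ← hb g hgD, mul_assoc, mul_assoc, ← mul_assoc g, h2 g hgD, mul_zero,
      map_zero]
  refine eq_of_isChar hab hgD (zero_mem D) fun χ hχ => ?_
  have h4 : χ (⟨g, hgD⟩ * ⟨g, hgD⟩ * ⟨g, hgD⟩) = χ 0 := congrArg χ (Subtype.ext h3)
  rw [hχ.mul, hχ.mul, map_zero] at h4
  have h5 : χ ⟨g, hgD⟩ = 0 := by simpa using h4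
  rw [h5]; exact (map_zero χ).symm

/-- For `a` commuting with `D`, put `b = a - P a`. Then `P (b⋆ n) = 0` for free normalizers `n`, so
`P (b⋆ b) = 0` by density in `ker P`, and `b = 0` by faithfulness. -/
lemma KumjianConditions.isMasa (hK : KumjianConditions D) : IsMasa D := by
  obtain ⟨P, hP, hf, hcl⟩ := hK
  ext a
  refine ⟨fun ha => ?_, fun ha d hd => hab a ha d hd⟩
  set b := a - P a with hbd
  have hb : ∀ d ∈ D, b * d = d * b := fun d hd => by
    rw [hbd, sub_mul, mul_sub, ha d hd, hab _ (hP.1 a) d hd]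
  have hbs : ∀ d ∈ D, star b * d = d * star b := fun d hd => by
    have := congrArg star (hb (star d) (star_mem hd))
    rw [star_mul, star_mul, star_star] at this
    exact this.symm
  have hPb : P b = 0 := by rw [hbd, map_sub, hP.2.1 _ (hP.1 a), sub_self]
  have key : {c : A | P c = 0} ⊆ {c : A | P (star b * c) = 0} := by
    rw [← hcl]
    refine closure_minimal (fun c hc => ?_) ?_
    · change P (star b * c) = 0
      induction hc using Submodule.span_induction with
      | mem c hc => exact condExp_mul_free_eq_zero hab hP hbs hc
      | zero => simp
      | add x y _ _ hx hy => rw [mul_add, map_add, hx, hy, add_zero]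
      | smul r x _ hx => rw [mul_smul_comm, map_smul, hx, smul_zero]
    · exact isClosed_eq (P.continuous.comp (continuous_const.mul continuous_id)) continuous_const
  have hb0 : b = 0 := hf b (key hPb)
  rw [sub_eq_zero.mp hb0]
  exact hP.1 a

/-- As `(n⋆ n) (n n⋆) = 0`, the character `ρ|_D` kills `n⋆ n` or `n n⋆`, and then `ρ n = 0` by
Cauchy–Schwarz. -/
lemma apply_free_eq_zero (hm : IsMasa D) {ρ : A →L[ℂ] ℂ} (hρ : IsPos (ρ : A →ₗ[ℂ] ℂ))
    (h1 : ‖ρ‖ ≤ 1) {χ : D →L[ℂ] ℂ} (hχ : IsChar χ) (hext : ∀ x : D, ρ x = χ x) {n : A}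
    (hn : IsFreeNormalizer D n) : ρ n = 0 := by
  have m1 := star_mul_self_mem hab hm hn.1
  have m2 := mul_star_self_mem hab hm hn.1
  have h0 : χ (⟨_, m1⟩ * ⟨_, m2⟩) = χ 0 := by
    congr 1
    apply Subtype.ext
    change star n * n * (n * star n) = 0
    have : star n * n * (n * star n) = star n * (n * n) * star n := by noncomm_ring
    rw [this, hn.2]; simp
  rw [hχ.mul, map_zero, mul_eq_zero, ← hext, ← hext] at h0
  rcases h0 with h0 | h0
  · have h2 := hρ.norm_sq_le h1 n
    change ρ (star n * n) = 0 at h0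
    rw [h0, Complex.zero_re] at h2
    have : ‖ρ n‖ = 0 := by nlinarith [norm_nonneg (ρ n)]
    simpa using this
  · have h2 := hρ.norm_sq_le h1 (star n)
    change ρ (n * star n) = 0 at h0
    rw [star_star, h0, Complex.zero_re, hρ.map_star h1, RCLike.norm_conj] at h2
    have : ‖ρ n‖ = 0 := by nlinarith [norm_nonneg (ρ n)]
    simpa using this

end Normalizers

/-! ### Consequences of Kumjian's conditions; functionals vanishing on `D` -/

section Equivalences

variable {A : Type*} [NonUnitalCStarAlgebra A] {D : NonUnitalStarSubalgebra ℂ A}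

lemma isNormalizer_of_mem {d : A} (hd : d ∈ D) : IsNormalizer D d := fun _ he =>
  ⟨mul_mem (mul_mem hd he) (star_mem hd), mul_mem (mul_mem (star_mem hd) he) hd⟩

variable [IsClosed (D : Set A)]

lemma norm_le_of_extends {ρ : A →L[ℂ] ℂ} {χ : D →L[ℂ] ℂ} (h : ∀ x : D, ρ x = χ x) :
    ‖χ‖ ≤ ‖ρ‖ :=
  ContinuousLinearMap.opNorm_le_bound _ (norm_nonneg _) fun x => by
    rw [← h]; exact ρ.le_opNorm x

/-- Existence of state extensions comes for free from a conditional expectation. -/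
lemma exists_state_extension {P : A →L[ℂ] A} (hP : IsCondExpectation D P) {σ : D →L[ℂ] ℂ}
    (hσ : IsState σ) (hχ : IsChar σ) :
    ∃ ρ : A →L[ℂ] ℂ, IsState ρ ∧ ∀ x : D, ρ x = σ x := by
  obtain ⟨ρ, hρ, h1, -, hρD⟩ := exists_comp hP hχ
  exact ⟨ρ, ⟨le_antisymm h1 (hσ.1 ▸ norm_le_of_extends hρD), hρ⟩, hρD⟩

variable (hab : ∀ x ∈ D, ∀ y ∈ D, x * y = y * x)
include hab

lemma KumjianConditions.isCartanInclusion (hK : KumjianConditions D) : IsCartanInclusion D := by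
  have hm := KumjianConditions.isMasa hab hK
  obtain ⟨P, hP, hf, hcl⟩ := hK
  refine ⟨fun a => ?_, hm, P, hP, hf⟩
  have h1 : P a ∈ (Submodule.span ℂ {n : A | IsNormalizer D n}).topologicalClosure :=
    subset_closure (Submodule.subset_span (isNormalizer_of_mem (hP.1 a)))
  have h2 : a - P a ∈ (Submodule.span ℂ {n : A | IsNormalizer D n}).topologicalClosure := by
    have h3 : a - P a ∈ {a : A | P a = 0} := by
      change P _ = 0
      rw [map_sub, hP.2.1 _ (hP.1 a), sub_self]
    rw [← hcl] at h3
    exact closure_mono (Submodule.span_mono fun n hn => hn.1) h3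
  have := add_mem h1 h2
  rwa [add_sub_cancel] at this

/-- Every state extending a character of `D` kills the free normalizers, hence `ker P`, and is
therefore determined by its restriction to `D`. -/
lemma KumjianConditions.uniquePureStateExtension (hK : KumjianConditions D) :
    UniquePureStateExtension D := by
  have hm := KumjianConditions.isMasa hab hK
  obtain ⟨P, hP, hf, hcl⟩ := hK
  intro σ hσ
  have hχ : IsChar σ := IsPureState.isChar (fun x y : D => Subtype.ext (hab x x.2 y y.2)) hσ
  refine ⟨exists_state_extension hP hσ.1 hχ, ?_⟩
  have key : ∀ ρ : A →L[ℂ] ℂ, IsState ρ → (∀ x : D, ρ x = σ x) → ∀ a, ρ a = ρ (P a) := by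
    intro ρ hρ hρσ a
    have hker : {a : A | P a = 0} ⊆ {a : A | ρ a = 0} := by
      rw [← hcl]
      refine closure_minimal (fun c hc => ?_) (isClosed_eq ρ.continuous continuous_const)
      change c ∈ LinearMap.ker (ρ : A →ₗ[ℂ] ℂ)
      refine Submodule.span_le.mpr (fun n hn => ?_) hc
      exact apply_free_eq_zero hab hm hρ.2 hρ.1.le hχ hρσ hn
    have h3 : a - P a ∈ {a : A | P a = 0} := by
      change P _ = 0
      rw [map_sub, hP.2.1 _ (hP.1 a), sub_self]
    have h4 : ρ (a - P a) = 0 := hker h3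
    rwa [map_sub, sub_eq_zero] at h4
  intro ρ₁ ρ₂ h₁ h₂ e₁ e₂
  ext a
  rw [key ρ₁ h₁ e₁, key ρ₂ h₂ e₂]
  exact (e₁ ⟨P a, hP.1 a⟩).trans (e₂ ⟨P a, hP.1 a⟩).symm

/-- A positive contractive functional vanishing on `D` vanishes on all normalizers by
Cauchy–Schwarz. -/
lemma eq_zero_of_vanishing (hm : IsMasa D) (hr : IsRegularInclusion D) {ρ : A →L[ℂ] ℂ}
    (hρ : IsPos (ρ : A →ₗ[ℂ] ℂ)) (h1 : ‖ρ‖ ≤ 1) (h0 : ∀ d ∈ D, ρ d = 0) : ρ = 0 := by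
  ext a
  have hsub : closure (↑(Submodule.span ℂ {n : A | IsNormalizer D n}) : Set A)
      ⊆ {a : A | ρ a = 0} := by
    refine closure_minimal (fun c hc => ?_) (isClosed_eq ρ.continuous continuous_const)
    change c ∈ LinearMap.ker (ρ : A →ₗ[ℂ] ℂ)
    refine Submodule.span_le.mpr (fun n hn => ?_) hc
    have h2 := hρ.norm_sq_le h1 n
    rw [h0 _ (star_mul_self_mem hab hm hn), Complex.zero_re] at h2
    have : ‖ρ n‖ = 0 := by nlinarith [norm_nonneg (ρ n)]
    change ρ n = 0
    simpa using this
  exact hsub (hr a)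

lemma not_exists_vanishing (hC : IsCartanInclusion D) :
    ¬∃ ρ : A →L[ℂ] ℂ, IsPureState ρ ∧ ∀ d ∈ D, ρ d = 0 := by
  rintro ⟨ρ, hρ, h0⟩
  have := eq_zero_of_vanishing hab hC.2.1 hC.1 (ρ := ρ) hρ.1.2 hρ.1.1.le h0
  have h1 := hρ.1.1
  rw [this, norm_zero] at h1
  exact zero_ne_one h1

end Equivalences

/-! ### Passage to the unitization -/

section Unitize

variable {A : Type*} [NonUnitalCStarAlgebra A] {D : NonUnitalStarSubalgebra ℂ A}

lemma mem_Dtilde {x : Unitization ℂ A} : x ∈ Dtilde D ↔ x.snd ∈ D := Iff.rfl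

lemma one_mem_Dtilde : (1 : Unitization ℂ A) ∈ Dtilde D := by
  rw [mem_Dtilde, Unitization.snd_one]; exact zero_mem D

lemma inr_mem_Dtilde {d : A} : (d : Unitization ℂ A) ∈ Dtilde D ↔ d ∈ D := by
  rw [mem_Dtilde, Unitization.snd_inr]

lemma eq_smul_one_add_inr (x : Unitization ℂ A) :
    x = x.fst • (1 : Unitization ℂ A) + (x.snd : Unitization ℂ A) := by
  ext <;> simp

lemma Dtilde_comm (hab : ∀ x ∈ D, ∀ y ∈ D, x * y = y * x) :
    ∀ x ∈ Dtilde D, ∀ y ∈ Dtilde D, x * y = y * x := by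
  intro x hx y hy
  ext
  · simp [mul_comm]
  · rw [Unitization.snd_mul, Unitization.snd_mul, hab _ hx _ hy, add_comm (x.fst • y.snd)]

lemma IsMasa_of_Dtilde (h : IsMasa (Dtilde D)) : IsMasa D := by
  ext a
  have h1 : (a : Unitization ℂ A) ∈ {x : Unitization ℂ A | ∀ d ∈ Dtilde D, x * d = d * x}
      ↔ (a : Unitization ℂ A) ∈ (Dtilde D : Set (Unitization ℂ A)) := by rw [h]
  rw [SetLike.mem_coe, inr_mem_Dtilde] at h1
  refine Iff.trans ?_ h1
  constructor
  · intro ha d hd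
    ext
    · simp
    · have := ha _ hd
      simp [this]
  · intro ha d hd
    have := congrArg (fun z : Unitization ℂ A => z.snd) (ha d (inr_mem_Dtilde.mpr hd))
    simpa using this

lemma Dtilde_isMasa (h : IsMasa D) : IsMasa (Dtilde D) := by
  ext x
  have h1 : x.snd ∈ {x : A | ∀ d ∈ D, x * d = d * x} ↔ x.snd ∈ (D : Set A) := by rw [h]
  refine Iff.trans ?_ h1
  constructor
  · intro hx d hd
    have := congrArg (fun z : Unitization ℂ A => z.snd) (hx d (inr_mem_Dtilde.mpr hd))
    simpa using this
  · intro hx d hd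
    ext
    · simp [mul_comm]
    · rw [Unitization.snd_mul, Unitization.snd_mul, hx _ hd, add_comm (x.fst • d.snd)]

lemma isNormalizer_of_inr {n : A} (h : IsNormalizer (Dtilde D) (n : Unitization ℂ A)) :
    IsNormalizer D n := fun d hd => by
  have := h d (inr_mem_Dtilde.mpr hd)
  rwa [← Unitization.inr_star, ← Unitization.inr_mul, ← Unitization.inr_mul,
    ← Unitization.inr_mul, ← Unitization.inr_mul, inr_mem_Dtilde, inr_mem_Dtilde] at this

/-- The inclusion of `D` into `D̃` as a continuous linear map. -/
noncomputable def inrD (D : NonUnitalStarSubalgebra ℂ A) : D →L[ℂ] Dtilde D :=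
  LinearMap.mkContinuous
    { toFun := fun d => ⟨(d : A), inr_mem_Dtilde.mpr d.2⟩
      map_add' := fun x y => Subtype.ext (by simp)
      map_smul' := fun c x => Subtype.ext (by simp) } 1 fun x => by
        rw [one_mul]; exact (Unitization.norm_inr (𝕜 := ℂ) (x : A)).le

lemma coe_inrD (d : D) : ((inrD D d : Dtilde D) : Unitization ℂ A) = (d : A) := rfl

lemma Dtilde_apply {χ : Dtilde D →L[ℂ] ℂ} (y : Dtilde D) :
    χ y = (y : Unitization ℂ A).fst * χ ⟨1, one_mem_Dtilde⟩
      + χ.comp (inrD D) ⟨(y : Unitization ℂ A).snd, y.2⟩ := by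
  change χ y = _ + χ (inrD D _)
  rw [← smul_eq_mul, ← map_smul, ← map_add]
  congr 1
  apply Subtype.ext
  change (y : Unitization ℂ A) = _ • 1 + ((inrD D _ : Dtilde D) : Unitization ℂ A)
  rw [coe_inrD]
  exact eq_smul_one_add_inr _

variable [IsClosed (D : Set A)]

lemma isChar_restrict {χ : Dtilde D →L[ℂ] ℂ} (hχ : IsChar χ) : IsChar (χ.comp (inrD D)) where
  mul x y := by
    change χ (inrD D (x * y)) = χ (inrD D x) * χ (inrD D y)
    rw [← hχ.mul]; congr 1; apply Subtype.ext
    rw [coe_inrD]; simp [coe_inrD]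
  map_star x := by
    change χ (inrD D (star x)) = (starRingEnd ℂ) (χ (inrD D x))
    rw [← hχ.map_star]; congr 1; apply Subtype.ext
    rw [coe_inrD]; simp [coe_inrD]
  norm_le := (χ.opNorm_comp_le _).trans (mul_le_one₀ hχ.norm_le (norm_nonneg _)
    (LinearMap.mkContinuous_norm_le _ zero_le_one _))

lemma isChar_one {χ : Dtilde D →L[ℂ] ℂ} (hχ : IsChar χ) (h0 : χ ≠ 0) :
    χ ⟨1, one_mem_Dtilde⟩ = 1 := by
  obtain ⟨d, hd⟩ : ∃ d, χ d ≠ 0 := by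
    by_contra! hc
    exact h0 (ContinuousLinearMap.ext hc)
  have : χ (⟨1, one_mem_Dtilde⟩ * d) = χ d := by
    congr 1; apply Subtype.ext; exact one_mul _
  rw [hχ.mul] at this
  exact mul_right_cancel₀ hd (this.trans (one_mul _).symm)

/-- The restriction to `A` of a functional on the unitization. -/
noncomputable def restr (ρ : Unitization ℂ A →L[ℂ] ℂ) : A →L[ℂ] ℂ :=
  LinearMap.mkContinuous
    { toFun := fun a => ρ a
      map_add' := fun x y => by simp
      map_smul' := fun c x => by simp } ‖ρ‖ fun x => by
        rw [← Unitization.norm_inr (𝕜 := ℂ) x]; exact ρ.le_opNorm _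

lemma restr_apply (ρ : Unitization ℂ A →L[ℂ] ℂ) (a : A) : restr ρ a = ρ a := rfl

lemma restr_norm_le (ρ : Unitization ℂ A →L[ℂ] ℂ) : ‖restr ρ‖ ≤ ‖ρ‖ :=
  LinearMap.mkContinuous_norm_le _ (norm_nonneg _) _

lemma restr_isPos {ρ : Unitization ℂ A →L[ℂ] ℂ} (hρ : IsPos (ρ : Unitization ℂ A →ₗ[ℂ] ℂ)) :
    IsPos (restr ρ : A →ₗ[ℂ] ℂ) := fun a => by
  have := hρ a
  rwa [← Unitization.inr_star, ← Unitization.inr_mul] at this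

variable (hab : ∀ x ∈ D, ∀ y ∈ D, x * y = y * x)
include hab

lemma inr_isNormalizer (hm : IsMasa D) {n : A} (h : IsNormalizer D n) :
    IsNormalizer (Dtilde D) (n : Unitization ℂ A) := fun d hd => by
  rw [mem_Dtilde, mem_Dtilde]
  have h1 := h d.snd hd
  have h2 := mul_star_self_mem hab hm h
  have h3 := star_mul_self_mem hab hm h
  constructor
  · have : ((n : Unitization ℂ A) * d * star (n : Unitization ℂ A)).snd
        = d.fst • (n * star n) + n * d.snd * star n := by
      simp [add_mul, smul_mul_assoc]
    rw [this]
    exact add_mem (SMulMemClass.smul_mem _ h2) h1.1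
  · have : (star (n : Unitization ℂ A) * d * (n : Unitization ℂ A)).snd
        = d.fst • (star n * n) + star n * d.snd * n := by
      simp [add_mul, smul_mul_assoc]
    rw [this]
    exact add_mem (SMulMemClass.smul_mem _ h3) h1.2

lemma Dtilde_isRegular (hm : IsMasa D) (hr : IsRegularInclusion D) :
    IsRegularInclusion (Dtilde D) := by
  intro x
  have h1 : (1 : Unitization ℂ A) ∈
      (Submodule.span ℂ {n | IsNormalizer (Dtilde D) n}).topologicalClosure :=
    subset_closure (Submodule.subset_span (isNormalizer_of_mem one_mem_Dtilde))
  have h2 : (x.snd : Unitization ℂ A) ∈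
      (Submodule.span ℂ {n | IsNormalizer (Dtilde D) n}).topologicalClosure := by
    refine map_mem_closure (Unitization.continuous_inr) (hr x.snd) fun a ha => ?_
    have : Submodule.span ℂ {n : A | IsNormalizer D n} ≤
        (Submodule.span ℂ {n | IsNormalizer (Dtilde D) n}).comap (Unitization.inrHom ℂ ℂ A) :=
      Submodule.span_le.mpr fun n hn => Submodule.subset_span (inr_isNormalizer hab hm hn)
    exact this ha
  rw [eq_smul_one_add_inr x]
  exact add_mem (Submodule.smul_mem _ _ h1) h2

/-- A conditional expectation `P` extends to `λ + a ↦ λ + P a`. Contractivity is checked on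
characters of `D̃`, where it reduces to the norm estimate for unital positive functionals. -/
lemma exists_condExp_Dtilde {P : A →L[ℂ] A} (hP : IsCondExpectation D P) (hf : IsFaithful P) :
    ∃ Q : Unitization ℂ A →L[ℂ] Unitization ℂ A,
      IsCondExpectation (Dtilde D) Q ∧ IsFaithful Q := by
  let f : Unitization ℂ A →ₗ[ℂ] Unitization ℂ A :=
    { toFun := fun x => x.fst • (1 : Unitization ℂ A) + (P x.snd : A)
      map_add' := fun x y => by
        simp only [Unitization.fst_add, Unitization.snd_add, map_add, Unitization.inr_add]
        module
      map_smul' := fun c x => by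
        simp only [Unitization.fst_smul, Unitization.snd_smul, map_smul, Unitization.inr_smul,
          RingHom.id_apply, smul_add, smul_smul, smul_eq_mul] }
  have hfst : ∀ x, (f x).fst = x.fst := fun x => by simp [f]
  have hsnd : ∀ x, (f x).snd = P x.snd := fun x => by simp [f]
  have hmem : ∀ x, f x ∈ Dtilde D := fun x => by rw [mem_Dtilde, hsnd]; exact hP.1 _
  have hb : ∀ x, ‖f x‖ ≤ 1 * ‖x‖ := fun x => by
    rw [one_mul]
    refine norm_le_of_forall_isChar (E := Dtilde D) (y := ⟨f x, hmem x⟩)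
      (fun x y => Subtype.ext (Dtilde_comm hab x x.2 y y.2)) (norm_nonneg x) fun χ hχ => ?_
    by_cases h0 : χ = 0
    · rw [h0]; simp
    obtain ⟨ρ, hρ, h1, hρP, -⟩ := exists_comp hP (isChar_restrict hχ)
    have h2 := (hρ.ext h1).norm_apply_le x
    have h3 : χ ⟨f x, hmem x⟩ = CartanProof.ext (ρ : A →ₗ[ℂ] ℂ) x := by
      rw [Dtilde_apply, isChar_one hχ h0, mul_one]
      change _ = x.fst + ρ x.snd
      rw [hρP]
      change (f x).fst + _ = _
      rw [hfst]
      congr 2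
      exact Subtype.ext (hsnd x)
    rw [h3]
    simpa using h2
  refine ⟨f.mkContinuous 1 hb, ⟨hmem, fun d hd => ?_, LinearMap.mkContinuous_norm_le _ zero_le_one _⟩,
    fun x hx => ?_⟩
  · change f d = d
    apply Unitization.ext
    · exact hfst d
    · rw [hsnd]; exact hP.2.1 _ hd
  · change f (star x * x) = 0 at hx
    have h1 := congrArg (fun z : Unitization ℂ A => z.fst) hx
    rw [hfst] at h1
    have h1' : x.fst = 0 := by simpa using h1
    have h2 := congrArg (fun z : Unitization ℂ A => z.snd) hx
    rw [hsnd] at h2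
    have h2' : x.snd = 0 := hf _ (by simpa [h1'] using h2)
    apply Unitization.ext
    · simpa using h1'
    · simpa using h2'

lemma Dtilde_isCartan (hC : IsCartanInclusion D) : IsCartanInclusion (Dtilde D) := by
  obtain ⟨hr, hm, P, hP, hf⟩ := hC
  exact ⟨Dtilde_isRegular hab hm hr, Dtilde_isMasa hm, exists_condExp_Dtilde hab hP hf⟩

/-- Uniqueness passes to the unitization. The character of `D̃` that vanishes on `D` is covered by
`eq_zero_of_vanishing`, every other one by uniqueness for `(A, D)`. -/
lemma Dtilde_upse (hC : IsCartanInclusion D) (hU : UniquePureStateExtension D) :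
    UniquePureStateExtension (Dtilde D) := by
  intro σ hσ
  have hχ : IsChar σ :=
    IsPureState.isChar (fun x y : Dtilde D => Subtype.ext (Dtilde_comm hab x x.2 y y.2)) hσ
  have hσ0 : σ ≠ 0 := fun h => by
    have := hσ.1.1
    rw [h, norm_zero] at this
    exact zero_ne_one this
  obtain ⟨hr, hm, P, hP, hf⟩ := hC
  obtain ⟨Q, hQ, -⟩ := exists_condExp_Dtilde hab hP hf
  refine ⟨exists_state_extension hQ hσ.1 hχ, fun ρ₁ ρ₂ h₁ h₂ e₁ e₂ => ?_⟩
  have hD : ∀ ρ : Unitization ℂ A →L[ℂ] ℂ, (∀ x : Dtilde D, ρ x = σ x) →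
      ∀ x : D, restr ρ x = σ.comp (inrD D) x := fun ρ hρ x => hρ (inrD D x)
  have hrestr : restr ρ₁ = restr ρ₂ := by
    have n₁ := (restr_norm_le ρ₁).trans h₁.1.le
    have n₂ := (restr_norm_le ρ₂).trans h₂.1.le
    have p₁ := restr_isPos (ρ := ρ₁) h₁.2
    have p₂ := restr_isPos (ρ := ρ₂) h₂.2
    by_cases h0 : σ.comp (inrD D) = 0
    · rw [eq_zero_of_vanishing hab hm hr p₁ n₁ fun d hd => by
          rw [hD ρ₁ e₁ ⟨d, hd⟩, h0]; rfl,
        eq_zero_of_vanishing hab hm hr p₂ n₂ fun d hd => by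
          rw [hD ρ₂ e₂ ⟨d, hd⟩, h0]; rfl]
    · have hc := isChar_restrict hχ
      have hs := hc.norm_eq_one h0
      exact (hU _ (hc.isPureState h0)).2 _ _
        ⟨le_antisymm n₁ (hs ▸ norm_le_of_extends (hD ρ₁ e₁)), p₁⟩
        ⟨le_antisymm n₂ (hs ▸ norm_le_of_extends (hD ρ₂ e₂)), p₂⟩ (hD ρ₁ e₁) (hD ρ₂ e₂)
  have hone : ρ₁ 1 = ρ₂ 1 :=
    (e₁ ⟨1, one_mem_Dtilde⟩).trans (e₂ ⟨1, one_mem_Dtilde⟩).symm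
  ext x
  rw [eq_smul_one_add_inr x, map_add, map_add, map_smul, map_smul, hone]
  congr 1
  exact congrArg (fun f => f x.snd) hrestr

end Unitize

/-! ### Characters fixed by a normalizer -/

section Ideal

variable {E : Type*} [NonUnitalCStarAlgebra E]

/-- In a commutative `C⋆`-algebra with unit `e`, an ideal not contained in the kernel of any
nonzero character contains `e`. -/
lemma unit_mem_of_forall_isChar (hcomm : ∀ x y : E, x * y = y * x) {e : E} (he : ∀ x, e * x = x)
    (J : Submodule ℂ E) (hJ : ∀ x ∈ J, ∀ y, x * y ∈ J)
    (h : ∀ χ : E →L[ℂ] ℂ, IsChar χ → χ ≠ 0 → ∃ x ∈ J, χ x ≠ 0) : e ∈ J := by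
  let : NonUnitalCommCStarAlgebra E :=
    { (inferInstance : NonUnitalCStarAlgebra E) with mul_comm := hcomm }
  let I : Ideal (Unitization ℂ E) :=
    { carrier := {x | x.fst • e + x.snd ∈ J}
      add_mem' := fun {x y} hx hy => by
        have := add_mem (S := Submodule ℂ E) hx hy
        change (x + y).fst • e + (x + y).snd ∈ J
        rw [Unitization.fst_add, Unitization.snd_add, add_smul]
        convert this using 1
        abel
      zero_mem' := by
        change (0 : Unitization ℂ E).fst • e + (0 : Unitization ℂ E).snd ∈ J
        simp
      smul_mem' := fun c x hx => by
        have h1 := hJ _ hx c.snd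
        have h2 := J.smul_mem c.fst hx
        have := add_mem h1 h2
        change (c • x).fst • e + (c • x).snd ∈ J
        convert this using 1
        rw [smul_eq_mul, Unitization.fst_mul, Unitization.snd_mul, add_mul, smul_mul_assoc, he,
          hcomm c.snd x.snd, smul_add, smul_smul]
        abel }
  have hI : ∀ x, x ∈ I ↔ x.fst • e + x.snd ∈ J := fun x => Iff.rfl
  by_contra hne
  have hItop : I ≠ ⊤ := fun ht => hne (by
    have := (hI 1).mp (by rw [ht]; trivial)
    simpa using this)
  obtain ⟨M, hM, hIM⟩ := I.exists_le_maximal hItop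
  obtain ⟨χ, hχ, hχM⟩ := exists_isChar_of_characterSpace M.toCharacterSpace
    (Unitization.inrNonUnitalStarAlgHom ℂ E)
  have hz : ∀ x ∈ J, χ x = 0 := fun x hx => by
    rw [hχM]
    refine M.toCharacterSpace_apply_eq_zero_of_mem (hIM ?_)
    rw [hI]; simpa using hx
  have h1 : χ e = 1 := by
    have h2 : M.toCharacterSpace (1 - (e : Unitization ℂ E)) = 0 := by
      refine M.toCharacterSpace_apply_eq_zero_of_mem (hIM ?_)
      have e0 : (1 - (e : Unitization ℂ E)).fst • e + (1 - (e : Unitization ℂ E)).snd = 0 := by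
        rw [sub_eq_add_neg, Unitization.fst_add, Unitization.snd_add, Unitization.fst_neg,
          Unitization.snd_neg, Unitization.fst_one, Unitization.snd_one,
          Unitization.fst_inr, Unitization.snd_inr, neg_zero, add_zero, zero_add, one_smul, add_neg_cancel]
      rw [hI, e0]
      exact zero_mem J
    rw [map_sub, map_one, sub_eq_zero] at h2
    rw [hχM]; exact h2.symm
  obtain ⟨x, hx, hx0⟩ := h χ hχ (fun h0 => by rw [h0] at h1; simp at h1)
  exact hx0 (hz x hx)

/-- Splitting of a selfadjoint element into positive and negative part, with square roots. -/
lemma exists_sq_sub_sq (hcomm : ∀ x y : E, x * y = y * x) {x : E} (hx : IsSelfAdjoint x) :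
    ∃ w v : E, IsSelfAdjoint w ∧ IsSelfAdjoint v ∧ w * w - v * v = x ∧ w * v = 0 := by
  have c1 : Continuous fun t : ℝ => √(max t 0) := by fun_prop
  have c2 : Continuous fun t : ℝ => √(max (-t) 0) := by fun_prop
  refine ⟨cfcₙ (fun t : ℝ => √(max t 0)) x, cfcₙ (fun t : ℝ => √(max (-t) 0)) x,
    cfcₙ_predicate _ _, cfcₙ_predicate _ _, ?_, ?_⟩
  · refine eq_of_forall_isChar hcomm fun χ hχ => ?_
    rw [map_sub, hχ.mul, hχ.mul, hχ.map_cfcₙ c1 (by simp) hx, hχ.map_cfcₙ c2 (by simp) hx,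
      ← Complex.ofReal_mul, ← Complex.ofReal_mul, ← Complex.ofReal_sub,
      Real.mul_self_sqrt (le_max_right _ _), Real.mul_self_sqrt (le_max_right _ _)]
    have hr : χ x = ((χ x).re : ℂ) := by
      have := hχ.map_star x
      rw [hx.star_eq] at this
      exact (Complex.conj_eq_iff_re.mp this.symm).symm
    conv_rhs => rw [hr]
    congr 1
    rcases le_total (χ x).re 0 with h | h
    · rw [max_eq_right h, max_eq_left (by linarith)]; ring
    · rw [max_eq_left h, max_eq_right (by linarith)]; ring
  · refine eq_of_forall_isChar hcomm fun χ hχ => ?_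
    rw [hχ.mul, hχ.map_cfcₙ c1 (by simp) hx, hχ.map_cfcₙ c2 (by simp) hx, map_zero,
      ← Complex.ofReal_mul, ← Real.sqrt_mul (le_max_right _ _)]
    rcases le_total (χ x).re 0 with h | h
    · rw [max_eq_right h]; simp
    · rw [max_eq_right (a := -(χ x).re) (by linarith)]; simp

end Ideal

section UnitalCase

variable {B : Type*} [CStarAlgebra B]

/-- `ρ = χ ∘ P` for a unital character `χ` of `D`, recorded by the properties used below. -/
structure CharExt (D : NonUnitalStarSubalgebra ℂ B) [IsClosed (D : Set B)] (P : B →L[ℂ] B)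
    (ρ : B →L[ℂ] ℂ) : Prop where
  pos : IsPos (ρ : B →ₗ[ℂ] ℂ)
  norm_le : ‖ρ‖ ≤ 1
  one : ρ 1 = 1
  comp : ∀ a, ρ (P a) = ρ a
  mul_right : ∀ a, ∀ d ∈ D, ρ (a * d) = ρ a * ρ d
  mul_left : ∀ a, ∀ d ∈ D, ρ (d * a) = ρ d * ρ a
  isChar : ∃ χ : D →L[ℂ] ℂ, IsChar χ ∧ ∀ x : D, ρ x = χ x

variable {D : NonUnitalStarSubalgebra ℂ B} [IsClosed (D : Set B)] {P : B →L[ℂ] B} {ρ : B →L[ℂ] ℂ}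

lemma CharExt.map_star (h : CharExt D P ρ) (a : B) : ρ (star a) = (starRingEnd ℂ) (ρ a) :=
  h.pos.map_star h.norm_le a

lemma exists_charExt (hP : IsCondExpectation D P) (h1 : (1 : B) ∈ D) {χ : D →L[ℂ] ℂ}
    (hχ : IsChar χ) (h0 : χ ≠ 0) : ∃ ρ : B →L[ℂ] ℂ, CharExt D P ρ ∧ ∀ x : D, ρ x = χ x := by
  obtain ⟨ρ, hρ, hn, hρP, hρD⟩ := exists_comp hP hχ
  obtain ⟨d, hd⟩ : ∃ d, χ d ≠ 0 := by
    by_contra! hc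
    exact h0 (ContinuousLinearMap.ext hc)
  refine ⟨ρ, ⟨hρ, hn, ?_, fun a => ?_, fun a d hd => ?_, fun a d hd => ?_, χ, hχ, hρD⟩, hρD⟩
  · have : χ (⟨1, h1⟩ * d) = χ d := by
      congr 1; apply Subtype.ext; exact one_mul _
    rw [hχ.mul] at this
    rw [hρD ⟨1, h1⟩]
    exact mul_right_cancel₀ hd (this.trans (one_mul _).symm)
  · rw [hρP a]; exact hρD ⟨P a, hP.1 a⟩
  · rw [hρ.mul_right_of_isChar hn hχ hρD a ⟨d, hd⟩, ← hρD]
  · rw [hρ.mul_left_of_isChar hn hχ hρD a ⟨d, hd⟩, ← hρD]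

/-- A positive functional that is a multiple of `ρ` on `D` is a multiple of `ρ`. -/
lemma CharExt.eq_smul (hU : UniquePureStateExtension D) (h : CharExt D P ρ) (h1 : (1 : B) ∈ D)
    {ω : B →ₗ[ℂ] ℂ} (hω : IsPos ω) (hD : ∀ d ∈ D, ω d = ω 1 * ρ d) (a : B) :
    ω a = ω 1 * ρ a := by
  have hnn : 0 ≤ ω 1 := by
    have := hω 1
    rwa [star_one, one_mul] at this
  have hre : ω 1 = ((ω 1).re : ℂ) :=
    Complex.ext rfl (by simp [← (Complex.nonneg_iff.mp hnn).2])
  have hr0 : 0 ≤ (ω 1).re := (Complex.nonneg_iff.mp hnn).1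
  rcases eq_or_lt_of_le hr0 with h0 | h0
  · have := hω.norm_apply_le a
    rw [← h0, zero_mul, norm_le_zero_iff] at this
    rw [this, hre, ← h0]; simp
  have hne : ω 1 ≠ 0 := fun hz => by rw [hz] at h0; simp at h0
  let ω' : B →L[ℂ] ℂ := ((ω 1)⁻¹ • ω).mkContinuous 1 fun x => by
    change ‖(ω 1)⁻¹ * ω x‖ ≤ _
    have h2 := hω.norm_apply_le x
    rw [norm_mul, norm_inv, inv_mul_le_iff₀ (norm_pos_iff.mpr hne), one_mul]
    exact h2.trans (mul_le_mul_of_nonneg_right (Complex.re_le_norm _) (norm_nonneg _))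
  have hω' : ∀ x, ω' x = (ω 1)⁻¹ * ω x := fun x => rfl
  obtain ⟨χ, hχ, hχρ⟩ := h.isChar
  have hχ0 : χ ≠ 0 := fun hz => by
    have := hχρ ⟨1, h1⟩
    rw [hz] at this
    change ρ 1 = 0 at this
    rw [h.one] at this
    exact one_ne_zero this
  have hωχ : ∀ x : D, ω' x = χ x := fun x => by
    rw [hω', hD x x.2, inv_mul_cancel_left₀ hne, hχρ]
  have hs : ‖χ‖ = 1 := hχ.norm_eq_one hχ0
  have hs1 : IsState ω' := ⟨le_antisymm (LinearMap.mkContinuous_norm_le _ zero_le_one _)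
    (hs ▸ norm_le_of_extends hωχ), fun a => mul_nonneg (inv_nonneg.mpr hnn) (hω a)⟩
  have hs2 : IsState ρ := ⟨le_antisymm h.norm_le (hs ▸ norm_le_of_extends hχρ), h.pos⟩
  have heq := (hU χ (hχ.isPureState hχ0)).2 ω' ρ hs1 hs2 hωχ hχρ
  rw [← heq, hω', mul_inv_cancel_left₀ hne]

/-- If the partial homeomorphism induced by `n` fixes the character `ρ|_D`, the variance of `ρ`
at `n` vanishes: the perturbations `ρ ((1 + c n)⋆ · (1 + c n))` all restrict to multiples of `ρ|_D`,
so uniqueness of extensions makes them multiples of `ρ`. -/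
lemma CharExt.of_fixed (hU : UniquePureStateExtension D) (h : CharExt D P ρ) (h1 : (1 : B) ∈ D)
    {n : B}
    (hfix : ∀ d ∈ D, ρ (star n * d * n) = ρ d * ρ (star n * n)) :
    ρ (star n * n) = (starRingEnd ℂ) (ρ n) * ρ n := by
  have exp : ∀ (c : ℂ) (a : B), conjBy (ρ : B →ₗ[ℂ] ℂ) (1 + c • n) a
      = ρ a + c * ρ (a * n) + (starRingEnd ℂ) c * ρ (star n * a)
        + (starRingEnd ℂ) c * c * ρ (star n * a * n) := by
    intro c a
    rw [conjBy_apply]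
    have : star (1 + c • n) * a * (1 + c • n) = a + c • (a * n) + (starRingEnd ℂ) c • (star n * a)
        + ((starRingEnd ℂ) c * c) • (star n * a * n) := by
      rw [star_add, star_smul, star_one]
      simp only [add_mul, mul_add, one_mul, mul_one, smul_mul_assoc, mul_smul_comm, mul_assoc]
      change _ = _ + _ + star c • _ + (star c * c) • _
      module
    rw [this]
    simp
  have key : ∀ (c : ℂ) (a : B),
      c * (ρ (a * n) - ρ n * ρ a) + (starRingEnd ℂ) c * (ρ (star n * a) - ρ (star n) * ρ a)
        + (starRingEnd ℂ) c * c * (ρ (star n * a * n) - ρ (star n * n) * ρ a) = 0 := by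
    intro c a
    have h2 := h.eq_smul hU h1 (h.pos.conjBy (1 + c • n)) (fun d hd => by
      rw [exp, exp, h.mul_left n d hd, h.mul_right _ d hd, hfix d hd, one_mul, mul_one, h.one]
      ring) a
    rw [exp, exp, one_mul, mul_one, h.one] at h2
    linear_combination h2
  have k1 := key 1 (star n)
  have k2 := key (-1) (star n)
  have k3 := key Complex.I (star n)
  simp only [map_one, map_neg, Complex.conj_I] at k1 k2 k3
  rw [← h.map_star]
  have hz : ρ (star n * star n * n) - ρ (star n * n) * ρ (star n) = 0 := by
    linear_combination (1 / 2 : ℂ) * (k1 + k2)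
  have hI : Complex.I * (ρ (star n * n) - ρ n * ρ (star n))
      = Complex.I * (ρ (star n * star n) - ρ (star n) * ρ (star n)) := by
    linear_combination k3 + Complex.I * Complex.I * hz
  have hxy := mul_left_cancel₀ Complex.I_ne_zero hI
  linear_combination (1 / 2 : ℂ) * (k1 - hz + hxy)

end UnitalCase

/-! ### Normalizers in the kernel of the expectation -/

section UnitalKumjian

variable {B : Type*} [CStarAlgebra B] {D : NonUnitalStarSubalgebra ℂ B} [IsClosed (D : Set B)]
  {P : B →L[ℂ] B} {ρ : B →L[ℂ] ℂ}

lemma CharExt.nonneg (h : CharExt D P ρ) (a : B) :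
    0 ≤ (ρ (star a * a)).re ∧ ρ (star a * a) = ((ρ (star a * a)).re : ℂ) := by
  have := Complex.nonneg_iff.mp (h.pos a)
  exact ⟨this.1, Complex.ext rfl (by simpa using this.2.symm)⟩

variable (hab : ∀ x ∈ D, ∀ y ∈ D, x * y = y * x) (hP : IsCondExpectation D P) (h1 : (1 : B) ∈ D)
include hab

section Free

omit [IsClosed (D : Set B)] hab in
lemma isNormalizer_mul {n d : B} (hn : IsNormalizer D n) (hd : d ∈ D) :
    IsNormalizer D (n * d) := fun e he => by
  have e1 : n * d * e * star (n * d) = n * (d * e * star d) * star n := by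
    rw [star_mul]; noncomm_ring
  have e2 : star (n * d) * e * (n * d) = star d * (star n * e * n) * d := by
    rw [star_mul]; noncomm_ring
  rw [e1, e2]
  exact ⟨(hn _ (mul_mem (mul_mem hd he) (star_mem hd))).1,
    mul_mem (mul_mem (star_mem hd) (hn _ he).2) hd⟩

lemma isFreeNormalizer_mul {n d : B} (hn : IsFreeNormalizer D n) (hd : d ∈ D) :
    IsFreeNormalizer D (n * d) := by
  refine ⟨isNormalizer_mul hn.1 hd, ?_⟩
  have h0 : n * d * n = 0 := by
    apply eq_zero_of_star_mul_self
    have hc := mul_star_self_commute hab (IsNormalizer.star hn.1) (star_mem hd)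
    rw [star_star] at hc
    have e1 : star (n * d * n) * (n * d * n) = star n * (star d * (star n * n)) * d * n := by
      rw [star_mul, star_mul]; noncomm_ring
    have e2 : star n * (star n * n * star d) * d * n = star (n * n) * n * star d * d * n := by
      rw [star_mul]; noncomm_ring
    rw [e1, ← hc, e2, hn.2]; simp
  rw [← mul_assoc, h0, zero_mul]

/-- The closed span of the free normalizers is a right `D`-module. -/
lemma free_closure_mul {x d : B}
    (hx : x ∈ (Submodule.span ℂ {n : B | IsFreeNormalizer D n}).topologicalClosure) (hd : d ∈ D) :
    x * d ∈ (Submodule.span ℂ {n : B | IsFreeNormalizer D n}).topologicalClosure := by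
  refine map_mem_closure (f := fun z => z * d) (by fun_prop) hx fun z hz => ?_
  change z ∈ (Submodule.span ℂ {n : B | IsFreeNormalizer D n}).comap (LinearMap.mulRight ℂ d)
  refine Submodule.span_le.mpr (fun n hn => ?_) hz
  exact Submodule.subset_span (isFreeNormalizer_mul hab hn hd)

end Free

include hP h1

lemma eq_of_charExt {x y : B} (hx : x ∈ D) (hy : y ∈ D)
    (h : ∀ ρ : B →L[ℂ] ℂ, CharExt D P ρ → ρ x = ρ y) : x = y := by
  refine eq_of_isChar hab hx hy fun χ hχ => ?_
  by_cases h0 : χ = 0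
  · rw [h0]; rfl
  obtain ⟨ρ, hρ, hρχ⟩ := exists_charExt hP h1 hχ h0
  rw [← hρχ, ← hρχ]; exact h ρ hρ

variable (hm : IsMasa D) (hU : UniquePureStateExtension D)
include hm hU

/-- On the support of `P n`, the partial homeomorphism induced by `n` is the identity, so there
`n⋆ n = (P n)⋆ (P n)`. -/
lemma condExp_mul_variance {n : B} (hn : IsNormalizer D n) :
    P n * (star n * n - star (P n) * P n) = 0 := by
  have hh := star_mul_self_mem hab hm hn
  have hp := hP.1 n
  refine eq_of_charExt hab hP h1 (mul_mem hp (sub_mem hh (mul_mem (star_mem hp) hp)))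
    (zero_mem D) fun ρ hρ => ?_
  rw [hρ.mul_right _ _ (sub_mem hh (mul_mem (star_mem hp) hp)), map_sub, hρ.mul_right _ _ hp,
    hρ.map_star, hρ.comp, map_zero]
  by_cases h0 : ρ n = 0
  · rw [h0, zero_mul]
  have hfix : ∀ d ∈ D, ρ (star n * d * n) = ρ d * ρ (star n * n) := fun d hd => by
    have e1 : n * (star n * d * n) = d * (n * (star n * n)) := by
      have e2 : n * (star n * d * n) = n * star n * d * n := by noncomm_ring
      rw [e2, mul_star_self_commute hab hn hd]; noncomm_ring
    have e3 := congrArg ρ e1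
    rw [hρ.mul_right _ _ (hn d hd).2, hρ.mul_left _ _ hd, hρ.mul_right _ _ hh] at e3
    exact mul_left_cancel₀ h0 (by rw [e3]; ring)
  rw [hρ.of_fixed hU h1 hfix, sub_self, mul_zero]

variable (hf : IsFaithful P)
include hf

/-- With `m = n - P n`, `P (m⋆ m) = n⋆ n - (P n)⋆ (P n)` is orthogonal to `P n`, so faithfulness makes
`m` orthogonal to `P n` and its adjoint. -/
lemma sub_condExp_mul {n : B} (hn : IsNormalizer D n) :
    (n - P n) * P n = 0 ∧ (n - P n) * star (P n) = 0 := by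
  have hp := hP.1 n
  have hh := star_mul_self_mem hab hm hn
  have hv := condExp_mul_variance hab hP h1 hm hU hn
  have hvD : star n * n - star (P n) * P n ∈ D := sub_mem hh (mul_mem (star_mem hp) hp)
  have hmm : P (star (n - P n) * (n - P n)) = star n * n - star (P n) * P n := by
    have e1 : star (n - P n) * (n - P n)
        = star n * n - star n * P n - star (P n) * n + star (P n) * P n := by
      rw [star_sub]; noncomm_ring
    rw [e1, map_add, map_sub, map_sub, hP.2.1 _ hh, hP.2.1 _ (mul_mem (star_mem hp) hp),
      condExp_mul_right hab hP _ hp, condExp_mul_left hab hP _ (star_mem hp),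
      condExp_star hab hP]
    noncomm_ring
  have main : ∀ q ∈ D, P (star ((n - P n) * q) * ((n - P n) * q))
      = star q * ((star n * n - star (P n) * P n) * q) := fun q hq => by
    have e1 : star ((n - P n) * q) * ((n - P n) * q)
        = star q * (star (n - P n) * (n - P n) * q) := by
      rw [star_mul]; noncomm_ring
    rw [e1, condExp_mul_left hab hP _ (star_mem hq), condExp_mul_right hab hP _ hq, hmm]
  constructor
  · apply hf
    rw [main _ hp, hab _ hvD _ hp, hv, mul_zero]
  · apply hf
    rw [main _ (star_mem hp), star_star, ← mul_assoc, hv, zero_mul]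

/-- Subtracting the expectation from a normalizer leaves a normalizer. -/
lemma sub_condExp_isNormalizer {n : B} (hn : IsNormalizer D n) : IsNormalizer D (n - P n) := by
  have hp := hP.1 n
  obtain ⟨a1, a2⟩ := sub_condExp_mul hab hP h1 hm hU hf hn
  obtain ⟨b1, b2⟩ := sub_condExp_mul hab hP h1 hm hU hf (IsNormalizer.star hn)
  rw [condExp_star hab hP, ← star_sub] at b1 b2
  rw [star_star] at b2
  set m := n - P n with hmd
  set p := P n with hpd
  have hnm : n = m + p := by rw [hmd]; abel
  have c1 : p * star m = 0 := by rw [← star_star (p * star m), star_mul, star_star, a2, star_zero]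
  have c2 : star p * m = 0 := by rw [← star_star (star p * m), star_mul, star_star, b2, star_zero]
  intro d hd
  have e1 : m * d * star m = n * d * star n - p * d * star p := by
    have : n * d * star n - p * d * star p
        = m * d * star m + p * d * star m + m * (d * star p) := by
      rw [hnm, star_add]; noncomm_ring
    rw [this, hab p hp d hd, hab d hd _ (star_mem hp), mul_assoc d, c1, ← mul_assoc m, a2]
    simp
  have e2 : star m * d * m = star n * d * n - star p * d * p := by
    have : star n * d * n - star p * d * p
        = star m * d * m + star p * d * m + star m * (d * p) := by
      rw [hnm, star_add]; noncomm_ring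
    rw [this, hab _ (star_mem hp) d hd, hab d hd _ hp, mul_assoc d, c2, ← mul_assoc (star m), b2]
    simp
  rw [e1, e2]
  exact ⟨sub_mem (hn d hd).1 (mul_mem (mul_mem hp hd) (star_mem hp)),
    sub_mem (hn d hd).2 (mul_mem (mul_mem (star_mem hp) hd) hp)⟩

omit hf hP in
/-- If `P n = 0`, the partial homeomorphism of `n` moves every point of its domain, and
near each such point `n` can be cut down to a free normalizer. -/
lemma exists_free_cutdown {n : B} (hn : IsNormalizer D n) (hPn : P n = 0) {ρ : B →L[ℂ] ℂ}
    (hρ : CharExt D P ρ) (hρh : ρ (star n * n) ≠ 0) :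
    ∃ u ∈ D, ρ u ≠ 0 ∧ IsFreeNormalizer D (n * u) := by
  have hh := star_mul_self_mem hab hm hn
  have hρn : ρ n = 0 := by rw [← hρ.comp, hPn, map_zero]
  -- A selfadjoint element of `D` separating `ρ|_D` from its image under `n`.
  obtain ⟨d, hd, hds, hne⟩ : ∃ d ∈ D, star d = d ∧ ρ (star n * d * n) ≠ ρ d * ρ (star n * n) := by
    by_contra! hc
    refine hρh ?_
    rw [hρ.of_fixed hU h1 (fun d hd => ?_), hρn, mul_zero]
    have k1 := hc (d + star d) (add_mem hd (star_mem hd)) (by rw [star_add, star_star, add_comm])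
    have k2 := hc (Complex.I • (d - star d))
      (SMulMemClass.smul_mem _ (sub_mem hd (star_mem hd)))
      (by rw [star_smul, star_sub, star_star, Complex.star_def, Complex.conj_I, neg_smul,
            ← smul_neg, neg_sub])
    rw [mul_add, add_mul, map_add, map_add] at k1
    rw [mul_smul_comm, smul_mul_assoc, map_smul, map_smul, smul_eq_mul, smul_eq_mul, mul_sub,
      sub_mul, map_sub, map_sub, mul_assoc Complex.I] at k2
    have k3 := mul_left_cancel₀ Complex.I_ne_zero k2
    linear_combination (1 / 2 : ℂ) * (k1 + k3)
  have real_of : ∀ a : B, star a = a → ρ a = ((ρ a).re : ℂ) := fun a ha => by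
    have := hρ.map_star a
    rw [ha] at this
    exact (Complex.conj_eq_iff_re.mp this.symm).symm
  obtain ⟨hk0, hk⟩ := hρ.nonneg n
  have hr := real_of d hds
  have hq := real_of (star n * d * n) (by rw [star_mul, star_mul, star_star, hds, mul_assoc])
  set k := (ρ (star n * n)).re
  set r := (ρ d).re
  set q := (ρ (star n * d * n)).re
  have hkpos : 0 < k := lt_of_le_of_ne hk0 fun h => hρh (by rw [hk, ← h]; simp)
  have hα : r * k - q ≠ 0 := fun h => hne (by
    rw [hq, hr, hk, ← Complex.ofReal_mul]; congr 1; linarith)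
  set α := r * k - q with hαd
  -- An affine function of `d`, positive at `ρ` and negative at the image of `ρ` under `n`.
  let x : B := (α : ℂ) • ((2 * k : ℂ) • d - (r * k + q : ℂ) • (1 : B))
  have hxD : x ∈ D := SMulMemClass.smul_mem _
    (sub_mem (SMulMemClass.smul_mem _ hd) (SMulMemClass.smul_mem _ h1))
  have hxs : star x = x := by
    simp [x, star_smul, hds]
  have hx1 : ρ x = ((α ^ 2 : ℝ) : ℂ) := by
    simp only [x, map_smul, map_sub, smul_eq_mul, hρ.one, hr, hαd]
    push_cast; ring
  have hx2 : ρ (star n * x * n) = ((-(α ^ 2 * k) : ℝ) : ℂ) := by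
    simp only [x, mul_smul_comm, smul_mul_assoc, mul_sub, sub_mul, mul_one, map_smul, map_sub,
      smul_eq_mul, hq, hk, hαd]
    push_cast; ring
  obtain ⟨w, v, hw, hv, hwv, hwv0⟩ := exists_sq_sub_sq
    (fun x y : D => Subtype.ext (hab x x.2 y y.2)) (x := (⟨x, hxD⟩ : D)) (Subtype.ext hxs)
  have hws : star (w : B) = w := congrArg Subtype.val hw
  have hvs : star (v : B) = v := congrArg Subtype.val hv
  have hwvx : (w : B) * w - v * v = x := congrArg Subtype.val hwv
  have hwv0' : (w : B) * v = 0 := congrArg Subtype.val hwv0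
  have hα2 : 0 < α ^ 2 := by positivity
  have hρw : ρ (w : B) ≠ 0 := fun h0 => by
    have e := congrArg ρ hwvx
    have hv0 := hρ.nonneg (v : B)
    rw [hvs] at hv0
    rw [map_sub, hρ.mul_right _ _ w.2, h0, mul_zero, hx1, hv0.2, zero_sub,
      ← Complex.ofReal_neg, Complex.ofReal_inj] at e
    linarith [hv0.1]
  have hρv : ρ (star n * ((v : B) * v) * n) ≠ 0 := fun h0 => by
    have hw0 := hρ.nonneg ((w : B) * n)
    have e1 : star ((w : B) * n) * (w * n) = star n * ((w : B) * w) * n := by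
      rw [star_mul, hws]; noncomm_ring
    rw [e1] at hw0
    have e2 : star n * x * n = star n * ((w : B) * w) * n - star n * ((v : B) * v) * n := by
      rw [← hwvx]; noncomm_ring
    have e := congrArg ρ e2
    rw [map_sub, h0, sub_zero, hx2, hw0.2, Complex.ofReal_inj] at e
    have : 0 < α ^ 2 * k := by positivity
    linarith [hw0.1]
  have hvD : (v : B) * v ∈ D := mul_mem v.2 v.2
  have huD : star n * ((v : B) * v) * n * w ∈ D := mul_mem (hn _ hvD).2 w.2
  refine ⟨_, huD, ?_, isNormalizer_mul hn huD, ?_⟩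
  · rw [hρ.mul_right _ _ w.2]; exact mul_ne_zero hρv hρw
  · have e : n * (star n * ((v : B) * v) * n * w) = (v : B) * v * (n * star n) * n * w := by
      rw [← mul_star_self_commute hab hn hvD]; noncomm_ring
    rw [e]
    have e2 : (v : B) * v * (n * star n) * n * w * ((v : B) * v * (n * star n) * n * w)
        = (v : B) * v * (n * star n) * n * (w * v) * (v * (n * star n) * n * w) := by
      noncomm_ring
    rw [e2, hwv0']; simp

end UnitalKumjian

/-! ### Density of the free normalizers; descent from the unitization -/

section UnitalConclusion

variable {B : Type*} [CStarAlgebra B] {D : NonUnitalStarSubalgebra ℂ B} [IsClosed (D : Set B)]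
  {P : B →L[ℂ] B}

variable (hab : ∀ x ∈ D, ∀ y ∈ D, x * y = y * x) (hP : IsCondExpectation D P) (h1 : (1 : B) ∈ D)
  (hm : IsMasa D) (hU : UniquePureStateExtension D)
include hab hP h1 hm hU

/-- A normalizer `n` with `P n = 0` is a limit of the cut-downs `n y`, with `y` a bump function of
`n⋆ n` supported away from zero; by compactness each `n y` is a finite sum of elements of the form
(free normalizer) times (element of `D`). -/
lemma mem_free_closure {n : B} (hn : IsNormalizer D n) (hPn : P n = 0) :
    n ∈ (Submodule.span ℂ {n : B | IsFreeNormalizer D n}).topologicalClosure := by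
  set M := (Submodule.span ℂ {n : B | IsFreeNormalizer D n}).topologicalClosure with hM
  have hcomm : ∀ x y : D, x * y = y * x := fun x y => Subtype.ext (hab x x.2 y y.2)
  let h : D := ⟨star n * n, star_mul_self_mem hab hm hn⟩
  have hs : IsSelfAdjoint h := Subtype.ext (IsSelfAdjoint.star_mul_self n)
  have hχh : ∀ χ : D →L[ℂ] ℂ, IsChar χ → 0 ≤ (χ h).re ∧ χ h = ((χ h).re : ℂ) := fun χ hχ => by
    by_cases h0 : χ = 0
    · simp [h0]
    obtain ⟨ρ, hρ, hρχ⟩ := exists_charExt hP h1 hχ h0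
    rw [← hρχ]; exact hρ.nonneg n
  have hMcl : IsClosed (M : Set B) := Submodule.isClosed_topologicalClosure _
  have hcl : n ∈ closure (M : Set B) := by
    refine Metric.mem_closure_iff.mpr fun δ hδ => ?_
    set ε := δ ^ 2 / 4 with hε
    have hε0 : 0 < ε := by positivity
    let f : ℝ → ℝ := fun t => min 1 (max 0 (t / ε - 1))
    let g : ℝ → ℝ := fun t => min 1 (max 0 (t / ε))
    have hfc : Continuous f := by fun_prop
    have hgc : Continuous g := by fun_prop
    have hf0 : f 0 = 0 := by simp [f]
    have hg0 : g 0 = 0 := by simp [g]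
    let y : D := cfcₙ f h
    let z : D := cfcₙ g h
    have hy : ∀ χ : D →L[ℂ] ℂ, IsChar χ → χ y = (f (χ h).re : ℂ) := fun χ hχ =>
      hχ.map_cfcₙ hfc hf0 hs
    have hz : ∀ χ : D →L[ℂ] ℂ, IsChar χ → χ z = (g (χ h).re : ℂ) := fun χ hχ =>
      hχ.map_cfcₙ hgc hg0 hs
    have hys : star y = y := (cfcₙ_predicate f h : IsSelfAdjoint _)
    have hyz : y * z = y := by
      refine eq_of_forall_isChar hcomm fun χ hχ => ?_
      rw [hχ.mul, hy χ hχ, hz χ hχ, ← Complex.ofReal_mul]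
      congr 1
      simp only [f, g]
      rcases le_total ((χ h).re / ε) 1 with h2 | h2
      · rw [max_eq_left (by linarith), min_eq_right zero_le_one, zero_mul]
      · rw [max_eq_right (a := 0) (b := (χ h).re / ε) (by linarith), min_eq_left h2, mul_one]
    let J : Submodule ℂ D :=
      { carrier := {x | n * y * x ∈ M}
        add_mem' := fun {a b} ha hb => by
          change n * y * ((a : B) + b) ∈ M
          rw [mul_add]; exact add_mem ha hb
        zero_mem' := by
          change n * y * (0 : B) ∈ M
          rw [mul_zero]; exact zero_mem M
        smul_mem' := fun c a ha => by
          change n * y * (c • (a : B)) ∈ M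
          rw [mul_smul_comm]; exact M.smul_mem c ha }
    have hJ : ∀ x, x ∈ J ↔ n * y * (x : B) ∈ M := fun x => Iff.rfl
    have h1J : (⟨1, h1⟩ : D) ∈ J := by
      refine unit_mem_of_forall_isChar hcomm (fun x => Subtype.ext (one_mul _)) J
        (fun a ha b => ?_) fun χ hχ h0 => ?_
      · rw [hJ] at ha ⊢
        change n * y * ((a : B) * b) ∈ M
        rw [← mul_assoc]; exact free_closure_mul hab ha b.2
      obtain ⟨ρ, hρ, hρχ⟩ := exists_charExt hP h1 hχ h0
      by_cases hρh : χ h = 0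
      · refine ⟨⟨1, h1⟩ - z, ?_, ?_⟩
        · rw [hJ]
          have e : n * y * ((1 : B) - z) = n * (y - y * z) := by noncomm_ring
          have e2 : (y : B) * z = y := congrArg Subtype.val hyz
          change n * y * ((1 : B) - z) ∈ M
          rw [e, e2, sub_self, mul_zero]; exact zero_mem M
        · rw [map_sub, hz χ hχ, hρh, Complex.zero_re, hg0, ← hρχ]
          change ρ 1 - _ ≠ 0
          rw [hρ.one]; simp
      · rw [← hρχ] at hρh
        obtain ⟨u, hu, hu0, huf⟩ := exists_free_cutdown hab h1 hm hU hn hPn hρ hρh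
        refine ⟨⟨u, hu⟩, ?_, by rw [← hρχ]; exact hu0⟩
        rw [hJ]
        change n * y * u ∈ M
        rw [mul_assoc, hab _ y.2 u hu, ← mul_assoc]
        exact free_closure_mul hab (subset_closure (Submodule.subset_span huf)) y.2
    rw [hJ] at h1J
    change n * y * (1 : B) ∈ M at h1J
    rw [mul_one] at h1J
    refine ⟨n * y, h1J, ?_⟩
    have hnorm : ‖h - h * y - y * h + y * h * y‖ ≤ 2 * ε := by
      refine norm_le_of_forall_isChar hcomm (by positivity) fun χ hχ => ?_
      obtain ⟨ht0, ht⟩ := hχh χ hχ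
      have e : χ (h - h * y - y * h + y * h * y)
          = (((χ h).re * (1 - f (χ h).re) ^ 2 : ℝ) : ℂ) := by
        rw [map_add, map_sub, map_sub, hχ.mul, hχ.mul, hχ.mul, hχ.mul, hy χ hχ]
        rw [ht]
        simp only [Complex.ofReal_re]
        push_cast; ring
      rw [e, Complex.norm_real, Real.norm_eq_abs, abs_of_nonneg (by positivity)]
      set t := (χ h).re
      have f0 : 0 ≤ f t := le_min zero_le_one (le_max_left _ _)
      have f1 : f t ≤ 1 := min_le_left _ _
      rcases le_total t (2 * ε) with h2 | h2
      · nlinarith [mul_nonneg ht0 (mul_nonneg f0 (by linarith : 0 ≤ 2 - f t))]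
      · have : f t = 1 := min_eq_left (le_max_of_le_right (by
          rw [le_sub_iff_add_le, le_div_iff₀ hε0]; linarith))
        rw [this]; simp; positivity
    have e : star (n - n * y) * (n - n * (y : B))
        = ((h - h * y - y * h + y * h * y : D) : B) := by
      have hys' : star (y : B) = y := congrArg Subtype.val hys
      change _ = star n * n - star n * n * y - y * (star n * n) + y * (star n * n) * y
      rw [star_sub, star_mul, hys']; noncomm_ring
    have hsq : ‖n - n * (y : B)‖ * ‖n - n * (y : B)‖ ≤ 2 * ε := by
      rw [← CStarRing.norm_star_mul_self, e]; exact hnorm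
    rw [dist_eq_norm]
    refine lt_of_not_ge fun hge => ?_
    nlinarith
  rwa [hMcl.closure_eq] at hcl

omit hP hm hU in
/-- Cartan inclusions of unital algebras with unique extension of pure states satisfy Kumjian's
conditions. -/
lemma kumjianConditions_of_unital (hC : IsCartanInclusion D) (hU : UniquePureStateExtension D) :
    KumjianConditions D := by
  obtain ⟨hr, hm, P, hP, hf⟩ := hC
  refine ⟨P, hP, hf, Set.Subset.antisymm ?_ fun a ha => ?_⟩
  · refine closure_minimal (fun c hc => ?_) (isClosed_eq P.continuous continuous_const)
    change c ∈ LinearMap.ker (P : B →ₗ[ℂ] B)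
    refine Submodule.span_le.mpr (fun n hn => ?_) hc
    change P n = 0
    refine eq_of_isChar hab (hP.1 n) (zero_mem D) fun χ hχ => ?_
    obtain ⟨ρ, hρ, hρ1, hρP, hρD⟩ := exists_comp hP hχ
    rw [← hρP, apply_free_eq_zero hab hm hρ hρ1 hχ hρD hn]
    exact (map_zero χ).symm
  · have ha0 : P a = 0 := ha
    have h2 : a - P a ∈ closure
        (↑(Submodule.span ℂ {n : B | IsFreeNormalizer D n}).topologicalClosure : Set B) := by
      refine map_mem_closure (f := fun z => z - P z) (by fun_prop) (hr a) fun z hz => ?_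
      change z ∈ (Submodule.span ℂ {n : B | IsFreeNormalizer D n}).topologicalClosure.comap
        (LinearMap.id - (P : B →ₗ[ℂ] B))
      refine Submodule.span_le.mpr (fun n hn => ?_) hz
      change n - P n ∈ (Submodule.span ℂ {n : B | IsFreeNormalizer D n}).topologicalClosure
      refine mem_free_closure hab hP h1 hm hU (sub_condExp_isNormalizer hab hP h1 hm hU hf hn) ?_
      rw [map_sub, hP.2.1 _ (hP.1 n), sub_self]
    rw [(Submodule.isClosed_topologicalClosure _).closure_eq, ha0, sub_zero] at h2
    exact h2

end UnitalConclusion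

section Descend

variable {A : Type*} [NonUnitalCStarAlgebra A] {D : NonUnitalStarSubalgebra ℂ A}
  [IsClosed (D : Set A)]

/-- Free normalizers of `D̃` lie in `A`, so `ker P̃ ⊆ A` and the expectation `P̃` of `Ã` onto `D̃`
maps `A` onto `D`. -/
lemma kumjianConditions_of_Dtilde (hab : ∀ x ∈ D, ∀ y ∈ D, x * y = y * x)
    (hK : KumjianConditions (Dtilde D)) : KumjianConditions D := by
  have hm := IsMasa_of_Dtilde (KumjianConditions.isMasa (Dtilde_comm hab) hK)
  obtain ⟨Q, hQ, hf, hcl⟩ := hK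
  have hcf : Continuous fun z : Unitization ℂ A => z.fst :=
    continuous_fst.comp (Unitization.uniformEquivProd (𝕜 := ℂ) (A := A)).continuous
  have hcs : Continuous fun z : Unitization ℂ A => z.snd :=
    continuous_snd.comp (Unitization.uniformEquivProd (𝕜 := ℂ) (A := A)).continuous
  -- A free normalizer of the unitization has vanishing scalar part.
  have hfree : ∀ n : Unitization ℂ A, IsFreeNormalizer (Dtilde D) n →
      n.fst = 0 ∧ IsFreeNormalizer D n.snd := fun n hn => by
    have h0 : n.fst = 0 := by
      have := congrArg (fun z : Unitization ℂ A => z.fst) hn.2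
      simpa using this
    have hn' : n = (n.snd : Unitization ℂ A) := by
      ext <;> simp [h0]
    refine ⟨h0, isNormalizer_of_inr (by rw [← hn']; exact hn.1), ?_⟩
    have := congrArg (fun z : Unitization ℂ A => z.snd) hn.2
    simpa [h0] using this
  have hker : ∀ x, Q x = 0 → x.fst = 0 := fun x hx => by
    have hx' : x ∈ {a | Q a = 0} := hx
    rw [← hcl] at hx'
    refine closure_minimal (fun c hc => ?_) (isClosed_eq hcf continuous_const) hx'
    induction hc using Submodule.span_induction with
    | mem c hc => exact (hfree c hc).1
    | zero => simp
    | add x y _ _ hx hy =>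
      change x.fst = 0 at hx
      change y.fst = 0 at hy
      simp [hx, hy]
    | smul c x _ hx =>
      change x.fst = 0 at hx
      simp [hx]
  have hQf : ∀ a : A, (Q a).fst = 0 := fun a => by
    have := hker ((a : Unitization ℂ A) - Q a) (by
      rw [map_sub, hQ.2.1 _ (hQ.1 _), sub_self])
    rw [sub_eq_add_neg, Unitization.fst_add, Unitization.fst_neg, Unitization.fst_inr, zero_add,
      neg_eq_zero] at this
    exact this
  have hQi : ∀ a : A, Q a = ((Q a).snd : Unitization ℂ A) := fun a => by
    ext <;> simp [hQf]
  let P : A →L[ℂ] A := LinearMap.mkContinuous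
    { toFun := fun a => (Q a).snd
      map_add' := fun x y => by simp
      map_smul' := fun c x => by simp } 1 fun x => by
        change ‖(Q x).snd‖ ≤ 1 * ‖x‖
        rw [← Unitization.norm_inr (𝕜 := ℂ) (Q x).snd, ← hQi, ← Unitization.norm_inr (𝕜 := ℂ) x]
        exact Q.le_of_opNorm_le hQ.2.2 _
  have hPQ : ∀ a : A, ((P a : A) : Unitization ℂ A) = Q a := fun a => (hQi a).symm
  refine ⟨P, ⟨fun a => hQ.1 a, fun d hd => ?_, LinearMap.mkContinuous_norm_le _ zero_le_one _⟩,
    fun a ha => ?_, Set.Subset.antisymm ?_ fun a ha => ?_⟩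
  · change (Q d).snd = d
    rw [hQ.2.1 _ (inr_mem_Dtilde.mpr hd), Unitization.snd_inr]
  · have h2 := hPQ (star a * a)
    rw [ha, Unitization.inr_zero, Unitization.inr_mul, Unitization.inr_star] at h2
    have h3 := hf _ h2.symm
    exact Unitization.inr_injective (h3.trans (Unitization.inr_zero ℂ).symm)
  · refine closure_minimal (fun c hc => ?_) (isClosed_eq P.continuous continuous_const)
    change c ∈ LinearMap.ker (P : A →ₗ[ℂ] A)
    refine Submodule.span_le.mpr (fun n hn => ?_) hc
    have h2 : (n : Unitization ℂ A) ∈ {a | Q a = 0} := by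
      rw [← hcl]
      refine subset_closure (Submodule.subset_span ⟨inr_isNormalizer hab hm hn.1, ?_⟩)
      rw [← Unitization.inr_mul, hn.2, Unitization.inr_zero]
    have h3 : Q n = 0 := h2
    change (Q n).snd = 0
    rw [h3, Unitization.snd_zero]
  · have ha0 : P a = 0 := ha
    have h2 : (a : Unitization ℂ A) ∈ {a | Q a = 0} := by
      change Q a = 0
      rw [← hPQ, ha0, Unitization.inr_zero]
    rw [← hcl] at h2
    have h3 := map_mem_closure (t := ↑(Submodule.span ℂ {n : A | IsFreeNormalizer D n})) hcs h2
      fun z hz => ?_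
    · simpa using h3
    · induction hz using Submodule.span_induction with
      | mem c hc => exact Submodule.subset_span (hfree c hc).2
      | zero => simp
      | add x y _ _ hx hy =>
        simp only [SetLike.mem_coe, Unitization.snd_add] at hx hy ⊢
        exact add_mem hx hy
      | smul c x _ hx =>
        simp only [SetLike.mem_coe, Unitization.snd_smul] at hx ⊢
        exact Submodule.smul_mem _ c hx

end Descend

end CartanProof

/-- Let `(A, D)` be an inclusion of C*-algebras with `A` non-unital.  The
following are equivalent:
1. `(A, D)` satisfies Kumjian's conditions;
2. `(A, D)` is a Cartan inclusion such that every pure state of `D` has a unique extension to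
   a state on `A`;
3. `(A, D)` is a Cartan inclusion such that every pure state of `D` has a unique extension to
   a state on `A` and no pure state of `A` annihilates `D`;
4. `(Ã, D̃)` is a Cartan inclusion such that every pure state of `D̃` extends uniquely to a
   state on `Ã`;
5. `(Ã, D̃)` satisfies Kumjian's conditions. -/
theorem stmt_13 {A : Type*} [NonUnitalCStarAlgebra A]
    (D : NonUnitalStarSubalgebra ℂ A) [IsClosed (D : Set A)]
    (hDabelian : ∀ x ∈ D, ∀ y ∈ D, x * y = y * x)
    (hAnonunital : ¬∃ e : A, ∀ a : A, e * a = a ∧ a * e = a) :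
    List.TFAE
      [KumjianConditions D,
       IsCartanInclusion D ∧ UniquePureStateExtension D,
       IsCartanInclusion D ∧ UniquePureStateExtension D ∧
         ¬∃ ρ : A →L[ℂ] ℂ, IsPureState ρ ∧ ∀ d ∈ D, ρ d = 0,
       IsCartanInclusion (Dtilde D) ∧ UniquePureStateExtension (Dtilde D),
       KumjianConditions (Dtilde D)] := by
  have hab := hDabelian
  tfae_have 1 → 2 := fun h =>
    ⟨CartanProof.KumjianConditions.isCartanInclusion hab h,
      CartanProof.KumjianConditions.uniquePureStateExtension hab h⟩
  tfae_have 2 → 3 := fun h => ⟨h.1, h.2, CartanProof.not_exists_vanishing hab h.1⟩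
  tfae_have 3 → 2 := fun h => ⟨h.1, h.2.1⟩
  tfae_have 2 → 4 := fun h =>
    ⟨CartanProof.Dtilde_isCartan hab h.1, CartanProof.Dtilde_upse hab h.1 h.2⟩
  tfae_have 4 → 5 := fun h =>
    CartanProof.kumjianConditions_of_unital (CartanProof.Dtilde_comm hab)
      CartanProof.one_mem_Dtilde h.1 h.2
  tfae_have 5 → 1 := fun h => CartanProof.kumjianConditions_of_Dtilde hab h
  tfae_finish
end
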